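/- arXiv:1504.06735 — 2 statements merged into one kernel-verified Lean document; each statement's English description precedes it below -/
import Mathlib

section
/- Let X be a nonstationary standardized Gaussian random field whose covariance functions r_{i,j} satisfy the covariance assumption (2). Let the levels {u_{n,i} : i ≤ n} be such that n₁n₂(1 − Φ(λ_n)) is bounded, where λ_n = min_{i∈R_n} u_{n,i}, and suppose Σ_{i∈R_n}(1 − Φ(u_{n,i})) → τ ∈ [0,∞) as n → ∞. Then (log n₁ · log n₂)⁻¹ Σ_{k∈R_n} (k₁k₂)⁻¹ · 1{X_i ≤ u_{k,i} for all i ≤ k} → e^{−τ} almost surely as n → ∞. -/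
open MeasureTheory ProbabilityTheory Filter Set
open scoped ProbabilityTheory

noncomputable section

/-- The rectangle of indexes `R_n = {1,…,n₁} × {1,…,n₂}` in `(ℤ₊)²`. -/
def Rn (n : ℕ × ℕ) : Finset (ℕ × ℕ) := Finset.Icc (1, 1) n

variable {Ω : Type*} [MeasureSpace Ω]

/-- Probability of an event as a real number. -/
def pr (A : Set Ω) : ℝ := (ℙ A).toReal

/-- The event `{M(I) ≤ v} = ⋂_{i ∈ I} {X_i ≤ v_i}`. -/
def noExc (X : ℕ × ℕ → Ω → ℝ) (v : ℕ × ℕ → ℝ) (I : Finset (ℕ × ℕ)) : Set Ω :=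
  ⋂ i ∈ I, {ω | X i ω ≤ v i}

/-- Standard normal distribution function `Φ`. -/
def Phi (x : ℝ) : ℝ := ((gaussianReal 0 1) (Set.Iic x)).toReal

/-- Coordinatewise absolute difference `|i − j|` of indexes. -/
def adiff (i j : ℕ × ℕ) : ℕ × ℕ :=
  (max i.1 j.1 - min i.1 j.1, max i.2 j.2 - min i.2 j.2)

/-- `X` is a standardized Gaussian random field with covariance function `r`:
every finite linear combination is Gaussian, each `X_i` is standard, and
`r i j = E[X_i X_j]`. -/
def IsStdGaussianField (X : ℕ × ℕ → Ω → ℝ) (r : ℕ × ℕ → ℕ × ℕ → ℝ) : Prop :=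
  (∀ i, Measurable (X i)) ∧ (∀ i, r i i = 1) ∧ (∀ i j, r i j = r j i) ∧
  (∀ i j, r i j = ∫ ω, X i ω * X j ω) ∧
  ∀ (s : Finset (ℕ × ℕ)) (c : ℕ × ℕ → ℝ),
    Measure.map (fun ω => ∑ i ∈ s, c i * X i ω) ℙ =
      gaussianReal 0 (Real.toNNReal (∑ i ∈ s, ∑ j ∈ s, c i * c j * r i j))

/-- The covariance assumption (2): `|r_{i,j}| < ρ_{|i−j|}`, `sup |ρ_m| < 1`, and the
logarithmic decay rates with exponent `1 + ε`. -/
def CovAssump (r : ℕ × ℕ → ℕ × ℕ → ℝ) (ρ : ℕ × ℕ → ℝ) (ε : ℝ) : Prop :=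
  (∀ i j : ℕ × ℕ, i ≠ j → |r i j| < ρ (adiff i j)) ∧
  (∃ δ < (1 : ℝ), ∀ m : ℕ × ℕ, m ≠ (0, 0) → |ρ m| ≤ δ) ∧
  (∃ C : ℝ,
    (∀ m₁ : ℕ, 2 ≤ m₁ → ρ (m₁, 0) ≤ C * (Real.log m₁) ^ (-(1 + ε))) ∧
    (∀ m₂ : ℕ, 2 ≤ m₂ → ρ (0, m₂) ≤ C * (Real.log m₂) ^ (-(1 + ε))) ∧
    (∀ m₁ m₂ : ℕ, 1 ≤ m₁ → 1 ≤ m₂ → 2 ≤ m₁ * m₂ →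
      ρ (m₁, m₂) ≤ C * (Real.log (m₁ * m₂)) ^ (-(1 + ε))))

/-- Boundedness of `n₁n₂(1 − Φ(λ_n))` where `λ_n = min_{i ∈ R_n} u_{n,i}`
(equivalently, `n₁n₂ max_{i ∈ R_n} (1 − Φ(u_{n,i}))` is bounded). -/
def LambdaBounded (u : ℕ × ℕ → ℕ × ℕ → ℝ) : Prop :=
  ∃ B : ℝ, ∀ n : ℕ × ℕ, ∀ i ∈ Rn n, (n.1 * n.2 : ℝ) * (1 - Phi (u n i)) ≤ B

/-- The log-average `(log n₁ · log n₂)⁻¹ Σ_{k∈R_n} (k₁k₂)⁻¹ 1{X_i ≤ u_{k,i}, ∀ i ≤ k}`. -/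
def ascltAvg (X : ℕ × ℕ → Ω → ℝ) (u : ℕ × ℕ → ℕ × ℕ → ℝ) (n : ℕ × ℕ) (ω : Ω) : ℝ :=
  (Real.log n.1 * Real.log n.2)⁻¹ *
    ∑ k ∈ Rn n, (k.1 * k.2 : ℝ)⁻¹ * (noExc X (u k) (Rn k)).indicator (fun _ => (1 : ℝ)) ω

section

lemma aux_pdf_hasDerivAt (x : ℝ) :
    HasDerivAt (gaussianPDFReal 0 1) (-x * gaussianPDFReal 0 1 x) x := by
  have h : HasDerivAt (fun x : ℝ => (√(2 * Real.pi * ((1 : NNReal) : ℝ)))⁻¹ *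
      Real.exp (-(x - 0) ^ 2 / (2 * ((1 : NNReal) : ℝ))))
      ((√(2 * Real.pi * ((1 : NNReal) : ℝ)))⁻¹ *
      (Real.exp (-(x - 0) ^ 2 / (2 * ((1 : NNReal) : ℝ))) * (-(2 * x) / 2))) x := by
    apply HasDerivAt.const_mul
    apply HasDerivAt.exp
    simp only [sub_zero, NNReal.coe_one, mul_one]
    have := ((hasDerivAt_pow 2 x).neg.div_const 2)
    simpa using this
  rw [gaussianPDFReal_def]
  convert h using 1
  ring

lemma aux_integrable_id_pdf : Integrable (fun x : ℝ => x * gaussianPDFReal 0 1 x) := by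
  have h := (memLp_id_gaussianReal (μ := 0) (v := 1) 1).integrable (by norm_num)
  rw [gaussianReal_of_var_ne_zero _ one_ne_zero,
    integrable_withDensity_iff_integrable_smul' (measurable_gaussianPDF _ _)
      (ae_of_all _ fun _ ↦ gaussianPDF_lt_top)] at h
  refine h.congr (ae_of_all _ fun x => ?_)
  simp [toReal_gaussianPDF, mul_comm]

/-- One-dimensional Stein identity. -/
lemma stein_one (f f' : ℝ → ℝ) (K : ℝ) (hf : ∀ x, HasDerivAt f (f' x) x)
    (hm : Measurable f') (hb : ∀ x, |f x| ≤ K) (hb' : ∀ x, |f' x| ≤ K) :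
    ∫ x, x * f x ∂(gaussianReal 0 1) = ∫ x, f' x ∂(gaussianReal 0 1) := by
  rw [integral_gaussianReal_eq_integral_smul one_ne_zero,
    integral_gaussianReal_eq_integral_smul one_ne_zero]
  have hfc : Continuous f := continuous_iff_continuousAt.2 fun x => (hf x).continuousAt
  have hpdf := integrable_gaussianPDFReal 0 1
  have h1 : Integrable (fun x => f x * (-x * gaussianPDFReal 0 1 x)) := by
    have := (aux_integrable_id_pdf.neg).bdd_mul (f := f) (c := K) hfc.aestronglyMeasurable
      (ae_of_all _ fun x => by simpa using hb x)
    simpa using this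
  have h2 : Integrable (fun x => f' x * gaussianPDFReal 0 1 x) :=
    hpdf.bdd_mul (c := K) hm.aestronglyMeasurable (ae_of_all _ fun x => by simpa using hb' x)
  have h3 : Integrable (fun x => f x * gaussianPDFReal 0 1 x) :=
    hpdf.bdd_mul (c := K) hfc.aestronglyMeasurable (ae_of_all _ fun x => by simpa using hb x)
  have := integral_mul_deriv_eq_deriv_mul_of_integrable (u := f) (v := gaussianPDFReal 0 1)
    (u' := f') (v' := fun x => -x * gaussianPDFReal 0 1 x) (fun x _ => hf x)
    (fun x _ => aux_pdf_hasDerivAt x) h1 h2 h3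
  have e : ∀ x, gaussianPDFReal 0 1 x • (x * f x) = -(f x * (-x * gaussianPDFReal 0 1 x)) := by
    intro x; simp; ring
  simp_rw [e]
  rw [integral_neg, this, neg_neg]
  congr 1; ext x; simp [mul_comm]

/-- Stein identity with an independent parameter. -/
lemma stein_indep {Ω E : Type*} [MeasurableSpace Ω] [MeasurableSpace E] (P : Measure Ω)
    [IsProbabilityMeasure P] (T : Ω → ℝ) (W : Ω → E) (hT : Measurable T) (hW : Measurable W)
    (hlaw : P.map T = gaussianReal 0 1) (hind : IndepFun T W P)
    (F F' : E → ℝ → ℝ) (K : ℝ) (hF : ∀ w x, HasDerivAt (F w) (F' w x) x)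
    (hFm : Measurable (Function.uncurry F))
    (hm : Measurable (Function.uncurry F')) (hb : ∀ w x, |F w x| ≤ K) (hb' : ∀ w x, |F' w x| ≤ K) :
    ∫ ω, T ω * F (W ω) (T ω) ∂P = ∫ ω, F' (W ω) (T ω) ∂P := by
  have hmap := (indepFun_iff_map_prod_eq_prod_map_map hW.aemeasurable hT.aemeasurable).1 hind.symm
  rw [hlaw] at hmap
  have : IsProbabilityMeasure (P.map W) := Measure.isProbabilityMeasure_map hW.aemeasurable
  have e1 : ∫ ω, T ω * F (W ω) (T ω) ∂P =
      ∫ z, z.2 * F z.1 z.2 ∂(P.map fun ω => (W ω, T ω)) := by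
    rw [integral_map (by fun_prop)]
    exact (measurable_snd.mul hFm).aestronglyMeasurable
  have e2 : ∫ ω, F' (W ω) (T ω) ∂P =
      ∫ z, F' z.1 z.2 ∂(P.map fun ω => (W ω, T ω)) := by
    rw [integral_map (by fun_prop)]
    exact hm.aestronglyMeasurable
  rw [e1, e2, hmap, integral_prod, integral_prod]
  · congr 1; ext w
    refine stein_one (F w) (F' w) K (hF w) ?_ (hb w) (hb' w)
    exact hm.comp measurable_prodMk_left
  · refine Integrable.of_bound hm.aestronglyMeasurable K (ae_of_all _ fun z => ?_)
    simpa using hb' z.1 z.2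
  · have hid : Integrable (fun z : E × ℝ => z.2) ((P.map W).prod (gaussianReal 0 1)) :=
      ((memLp_id_gaussianReal (μ := 0) (v := 1) 1).integrable (by norm_num)).comp_snd _
    exact hid.mul_bdd (c := K) hFm.aestronglyMeasurable (ae_of_all _ fun z => by simpa using hb z.1 z.2)

/-- Exponent inequality. -/
lemma exponent_ineq (x y ρ q : ℝ) (h1 : |ρ| ≤ q) (h2 : q < 1) :
    (x ^ 2 + y ^ 2) / (2 * (1 + q)) ≤ x ^ 2 / 2 + (y - ρ * x) ^ 2 / (2 * (1 - ρ ^ 2)) := by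
  have hq : 0 ≤ q := (abs_nonneg _).trans h1
  obtain ⟨ha, hb⟩ := abs_le.1 h1
  have h3 : 0 < 1 - ρ ^ 2 := by nlinarith
  have h3' : 0 < 1 - q ^ 2 := by nlinarith
  have e : x ^ 2 / 2 + (y - ρ * x) ^ 2 / (2 * (1 - ρ ^ 2)) =
      (x ^ 2 - 2 * ρ * x * y + y ^ 2) / (2 * (1 - ρ ^ 2)) := by
    field_simp; ring
  rw [e, div_le_div_iff₀ (by positivity) (by positivity)]
  have hxy : 2 * (x * y) ≤ x ^ 2 + y ^ 2 := by nlinarith [sq_nonneg (x - y)]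
  have hxy' : -(2 * (x * y)) ≤ x ^ 2 + y ^ 2 := by nlinarith [sq_nonneg (x + y)]
  rcases abs_cases ρ with ⟨h, _⟩ | ⟨h, _⟩
  · have : (x ^ 2 + y ^ 2) * (1 - ρ) ≤ x ^ 2 - 2 * ρ * x * y + y ^ 2 := by nlinarith
    have h5 : 0 ≤ (x ^ 2 + y ^ 2) * (1-ρ) := by
      apply mul_nonneg (by positivity); linarith
    nlinarith [mul_le_mul_of_nonneg_right this (by linarith : 0 ≤ 1 + q),
      mul_nonneg h5 (by linarith : 0 ≤ q - ρ)]
  · have : (x ^ 2 + y ^ 2) * (1 + ρ) ≤ x ^ 2 - 2 * ρ * x * y + y ^ 2 := by nlinarith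
    have h5 : 0 ≤ (x ^ 2 + y ^ 2) * (1+ρ) := by
      apply mul_nonneg (by positivity); linarith
    nlinarith [mul_le_mul_of_nonneg_right this (by linarith : 0 ≤ 1 + q),
      mul_nonneg h5 (by linarith : 0 ≤ q + ρ)]

end

section

lemma bivar_density_bound (x y u v ρ q δ : ℝ) (h1 : |ρ| ≤ q) (hq : q ≤ δ) (h2 : δ < 1)
    (hu : 0 ≤ u) (hv : 0 ≤ v) (hx : u ≤ x) (hy : v ≤ y) :
    gaussianPDFReal 0 1 x * gaussianPDFReal (ρ * x) (Real.toNNReal (1 - ρ ^ 2)) y ≤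
      (√(1 - δ ^ 2))⁻¹ * Real.exp (-((u ^ 2 + v ^ 2) / (2 * (1 + q)))) := by
  have hq0 : 0 ≤ q := (abs_nonneg _).trans h1
  obtain ⟨ha, hb⟩ := abs_le.1 h1
  have h3 : 0 < 1 - ρ ^ 2 := by nlinarith
  have h3' : 0 < 1 - δ ^ 2 := by nlinarith
  simp only [gaussianPDFReal, Real.coe_toNNReal _ h3.le, NNReal.coe_one, sub_zero, mul_one]
  have e1 : (√(2 * Real.pi))⁻¹ * Real.exp (-x ^ 2 / 2) *
      ((√(2 * Real.pi * (1 - ρ ^ 2)))⁻¹ * Real.exp (-(y - ρ * x) ^ 2 / (2 * (1 - ρ ^ 2)))) =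
      ((√(2 * Real.pi))⁻¹ * (√(2 * Real.pi * (1 - ρ ^ 2)))⁻¹) *
      Real.exp (-(x ^ 2 / 2 + (y - ρ * x) ^ 2 / (2 * (1 - ρ ^ 2)))) := by
    have : -(x ^ 2 / 2 + (y - ρ * x) ^ 2 / (2 * (1 - ρ ^ 2))) =
      -x ^ 2 / 2 + -(y - ρ * x) ^ 2 / (2 * (1 - ρ ^ 2)) := by ring
    rw [this, Real.exp_add]; ring
  rw [e1]
  have hpi : 1 ≤ 2 * Real.pi := by have := Real.pi_gt_three; linarith
  apply mul_le_mul
  · have : (√(2 * Real.pi))⁻¹ ≤ 1 := by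
      apply inv_le_one_of_one_le₀
      rw [Real.one_le_sqrt]; exact hpi
    have h5 : (√(2 * Real.pi * (1 - ρ ^ 2)))⁻¹ ≤ (√(1 - δ ^ 2))⁻¹ := by
      apply inv_anti₀ (Real.sqrt_pos.2 h3')
      apply Real.sqrt_le_sqrt
      nlinarith
    calc _ ≤ 1 * (√(1 - δ ^ 2))⁻¹ := mul_le_mul this h5 (by positivity) (by norm_num)
      _ = _ := one_mul _
  · apply Real.exp_le_exp.2
    apply neg_le_neg
    refine le_trans ?_ (exponent_ineq x y ρ q h1 (by linarith))
    have : u ^ 2 ≤ x ^ 2 := by gcongr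
    have : v ^ 2 ≤ y ^ 2 := by gcongr
    gcongr
  · positivity
  · positivity

lemma bivar_bound {Ω : Type*} [MeasurableSpace Ω] (P : Measure Ω)
    [IsProbabilityMeasure P] (X Y : Ω → ℝ) (hX : Measurable X) (hY : Measurable Y)
    (hXY : HasGaussianLaw (fun ω => (X ω, Y ω)) P)
    (hX0 : ∫ ω, X ω ∂P = 0) (hY0 : ∫ ω, Y ω ∂P = 0)
    (hX1 : cov[X, X; P] = 1) (hY1 : cov[Y, Y; P] = 1) (ρ q δ : ℝ) (hρ : cov[X, Y; P] = ρ)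
    (h1 : |ρ| ≤ q) (hq : q ≤ δ) (h2 : δ < 1) (u v : ℝ) (hu : 0 ≤ u) (hv : 0 ≤ v)
    (a b : ℝ → ℝ) (ha : Measurable a) (hb : Measurable b) (ha0 : ∀ x, 0 ≤ a x)
    (hb0 : ∀ x, 0 ≤ b x) (K : ℝ) (haK : ∀ x, a x ≤ K) (hbK : ∀ x, b x ≤ K)
    (hau : ∀ x, x < u → a x = 0) (hbv : ∀ x, x < v → b x = 0)
    (hai : Integrable a) (hbi : Integrable b) :
    ∫ ω, a (X ω) * b (Y ω) ∂P ≤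
      (√(1 - δ ^ 2))⁻¹ * Real.exp (-((u ^ 2 + v ^ 2) / (2 * (1 + q)))) *
        ((∫ x, a x) * ∫ x, b x) := by
  have hq0 : 0 ≤ q := (abs_nonneg _).trans h1
  obtain ⟨hρ1, hρ2⟩ := abs_le.1 h1
  have h3 : 0 < 1 - ρ ^ 2 := by nlinarith
  have h3' : 0 < 1 - δ ^ 2 := by nlinarith
  have mX : MemLp X 2 P := hXY.fst.memLp_two
  have mY : MemLp Y 2 P := hXY.snd.memLp_two
  set Z : Ω → ℝ := fun ω => Y ω - ρ * X ω with hZ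
  have mρX : MemLp (fun ω => ρ * X ω) 2 P := mX.const_mul ρ
  have hZm : Measurable Z := by fun_prop
  have hXZ : HasGaussianLaw (fun ω => (X ω, Z ω)) P := by
    have := hXY.map_fun ((ContinuousLinearMap.fst ℝ ℝ ℝ).prod
      (ContinuousLinearMap.snd ℝ ℝ ℝ - ρ • ContinuousLinearMap.fst ℝ ℝ ℝ))
    simpa using this
  have hZeq : Z = Y - (fun ω => ρ * X ω) := rfl
  have hcovXZ : cov[X, Z; P] = 0 := by
    rw [hZeq, covariance_sub_right mX mY mρX, covariance_const_mul_right, hρ, hX1]; ring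
  have hind : IndepFun X Z P := hXZ.indepFun_of_covariance_eq_zero hcovXZ
  have hcovZ : cov[Z, Z; P] = 1 - ρ ^ 2 := by
    have : cov[Z, Z; P] = cov[Y, Z; P] - ρ * cov[X, Z; P] := by
      have h := covariance_sub_left mY mρX (hXZ.snd.memLp_two)
      rw [covariance_const_mul_left] at h
      exact h
    rw [this, hcovXZ, hZeq, covariance_sub_right mY mY mρX, covariance_const_mul_right, hY1,
      covariance_comm, hρ]; ring
  have lawX : P.map X = gaussianReal 0 1 := by
    rw [hXY.fst.map_eq_gaussianReal, hX0, ← covariance_self hX.aemeasurable, hX1]; simp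
  have lawZ : P.map Z = gaussianReal 0 (Real.toNNReal (1 - ρ ^ 2)) := by
    have hZ0 : ∫ ω, Z ω ∂P = 0 := by
      simp only [hZ]
      rw [integral_sub (mY.integrable (by norm_num)) (mρX.integrable (by norm_num)),
        integral_const_mul, hX0, hY0]; simp
    rw [hXZ.snd.map_eq_gaussianReal, hZ0, ← covariance_self hZm.aemeasurable, hcovZ]
  have hmap := (indepFun_iff_map_prod_eq_prod_map_map hX.aemeasurable hZm.aemeasurable).1 hind
  rw [lawX, lawZ] at hmap
  have hv0 : Real.toNNReal (1 - ρ ^ 2) ≠ 0 := by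
    simpa [Real.toNNReal_eq_zero] using h3
  have e1 : ∫ ω, a (X ω) * b (Y ω) ∂P =
      ∫ z, a z.1 * b (ρ * z.1 + z.2) ∂(P.map fun ω => (X ω, Z ω)) := by
    rw [integral_map (by fun_prop) (by fun_prop)]
    simp [hZ]
  have haK' : ∀ x, |a x| ≤ K := fun x => by rw [abs_of_nonneg (ha0 x)]; exact haK x
  have hbK' : ∀ x, |b x| ≤ K := fun x => by rw [abs_of_nonneg (hb0 x)]; exact hbK x
  have hK0 : 0 ≤ K := (ha0 0).trans (haK 0)
  rw [e1, hmap, integral_prod]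
  swap
  · refine Integrable.of_bound (by fun_prop) (K * K) (ae_of_all _ fun z => ?_)
    rw [norm_mul]
    exact mul_le_mul (haK' _) (hbK' _) (by positivity) hK0
  have e2 : ∀ x, ∫ z, a x * b (ρ * x + z) ∂(gaussianReal 0 (Real.toNNReal (1 - ρ ^ 2))) =
      a x * ∫ y, gaussianPDFReal (ρ * x) (Real.toNNReal (1 - ρ ^ 2)) y * b y := by
    intro x
    rw [integral_const_mul]
    congr 1
    have := gaussianReal_map_const_add (μ := 0) (v := Real.toNNReal (1 - ρ ^ 2)) (ρ * x)
    rw [zero_add] at this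
    have h := integral_gaussianReal_eq_integral_smul (μ := ρ * x) (f := b) hv0
    rw [← this, integral_map (by fun_prop) (by fun_prop)] at h
    simpa using h
  simp only [e2]
  rw [integral_gaussianReal_eq_integral_smul one_ne_zero]
  set M := (√(1 - δ ^ 2))⁻¹ * Real.exp (-((u ^ 2 + v ^ 2) / (2 * (1 + q)))) with hM
  have hM0 : 0 ≤ M := by positivity
  have key : ∀ x, gaussianPDFReal 0 1 x • (a x *
      ∫ y, gaussianPDFReal (ρ * x) (Real.toNNReal (1 - ρ ^ 2)) y * b y) ≤
      a x * (M * ∫ y, b y) := by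
    intro x
    rcases lt_or_ge x u with hx | hx
    · simp [hau x hx]
    · have : gaussianPDFReal 0 1 x * ∫ y, gaussianPDFReal (ρ * x) (Real.toNNReal (1 - ρ ^ 2)) y * b y
          ≤ M * ∫ y, b y := by
        rw [← integral_const_mul, ← integral_const_mul]
        apply integral_mono_of_nonneg
        · refine ae_of_all _ fun y => ?_
          have := gaussianPDFReal_nonneg 0 1 x
          have := gaussianPDFReal_nonneg (ρ * x) (Real.toNNReal (1 - ρ ^ 2)) y
          have := hb0 y
          simp only [Pi.zero_apply]; positivity
        · exact hbi.const_mul M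
        · refine ae_of_all _ fun y => ?_
          simp only
          rcases lt_or_ge y v with hy | hy
          · simp [hbv y hy]
          · rw [← mul_assoc]
            exact mul_le_mul_of_nonneg_right
              (bivar_density_bound x y u v ρ q δ h1 hq h2 hu hv hx hy) (hb0 y)
      calc _ = a x * (gaussianPDFReal 0 1 x *
            ∫ y, gaussianPDFReal (ρ * x) (Real.toNNReal (1 - ρ ^ 2)) y * b y) := by
            simp only [smul_eq_mul]; ring
        _ ≤ _ := mul_le_mul_of_nonneg_left this (ha0 x)
  calc _ ≤ ∫ x, a x * (M * ∫ y, b y) := by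
        apply integral_mono_of_nonneg
        · refine ae_of_all _ fun x => ?_
          have := gaussianPDFReal_nonneg 0 1 x
          have := ha0 x
          have : 0 ≤ ∫ y, gaussianPDFReal (ρ * x) (Real.toNNReal (1 - ρ ^ 2)) y * b y :=
            integral_nonneg fun y => mul_nonneg (gaussianPDFReal_nonneg _ _ _) (hb0 y)
          simp only [Pi.zero_apply, smul_eq_mul]; positivity
        · exact hai.mul_const _
        · exact ae_of_all _ key
    _ = _ := by rw [integral_mul_const]; ring

end

section

lemma gp_lincomb {Ω S T : Type*} [MeasurableSpace Ω] {P : Measure Ω} {X : T → Ω → ℝ}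
    (hX : IsGaussianProcess X P) (Y : S → Ω → ℝ)
    (h : ∀ s, ∃ (n : ℕ) (k : Fin n → T) (c : Fin n → ℝ), ∀ ω, Y s ω = ∑ m, c m * X (k m) ω) :
    IsGaussianProcess Y P := by
  classical
  refine hX.of_isGaussianProcess fun s => ?_
  obtain ⟨n, k, c, hY⟩ := h s
  refine ⟨Finset.univ.image k,
    ∑ m, c m • ContinuousLinearMap.proj (R := ℝ) (φ := fun _ => ℝ)
      (⟨k m, Finset.mem_image_of_mem _ (Finset.mem_univ m)⟩ : (Finset.univ.image k : Finset T)),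
    fun ω => ?_⟩
  rw [hY]
  simp

/-- The pair process: two independent copies of `X`. -/
def pairProc {Ω ι : Type*} (X : ι → Ω → ℝ) : ι ⊕ ι → Ω × Ω → ℝ :=
  Sum.elim (fun i p => X i p.1) (fun i p => X i p.2)

lemma pairProc_gaussian {Ω ι : Type*} [MeasurableSpace Ω] {μ : Measure Ω} [IsProbabilityMeasure μ]
    {X : ι → Ω → ℝ} (hXm : ∀ i, Measurable (X i)) (hX : IsGaussianProcess X μ) :
    IsGaussianProcess (pairProc X) (μ.prod μ) := by
  constructor
  intro s
  have m1 : ∀ t : Finset ι, Measurable (fun ω => t.restrict (X · ω)) := fun t =>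
    measurable_pi_lambda _ fun i => hXm i
  have h1 : HasGaussianLaw (fun p : Ω × Ω => s.toLeft.restrict (X · p.1)) (μ.prod μ) := by
    have h := (hX.hasGaussianLaw s.toLeft).isGaussian_map
    constructor
    have e : (μ.prod μ).map (fun p : Ω × Ω => s.toLeft.restrict (X · p.1)) =
        μ.map (fun ω => s.toLeft.restrict (X · ω)) := by
      have : (μ.prod μ).map Prod.fst = μ := by simp
      conv_rhs => rw [← this]
      rw [Measure.map_map (m1 _) measurable_fst]; rfl
    rw [e]; exact h
  have h2 : HasGaussianLaw (fun p : Ω × Ω => s.toRight.restrict (X · p.2)) (μ.prod μ) := by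
    have h := (hX.hasGaussianLaw s.toRight).isGaussian_map
    constructor
    have e : (μ.prod μ).map (fun p : Ω × Ω => s.toRight.restrict (X · p.2)) =
        μ.map (fun ω => s.toRight.restrict (X · ω)) := by
      have : (μ.prod μ).map Prod.snd = μ := by simp
      conv_rhs => rw [← this]
      rw [Measure.map_map (m1 _) measurable_snd]; rfl
    rw [e]; exact h
  have hind := indepFun_prod (μ := μ) (ν := μ) (m1 s.toLeft) (m1 s.toRight)
  have h12 := hind.hasGaussianLaw h1 h2
  let L : ((s.toLeft → ℝ) × (s.toRight → ℝ)) →L[ℝ] (s → ℝ) :=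
    ContinuousLinearMap.pi fun x => match x with
      | ⟨Sum.inl i, h⟩ => (ContinuousLinearMap.proj (R := ℝ) (φ := fun _ => ℝ)
          (⟨i, by simpa using h⟩ : s.toLeft)).comp (ContinuousLinearMap.fst ℝ _ _)
      | ⟨Sum.inr i, h⟩ => (ContinuousLinearMap.proj (R := ℝ) (φ := fun _ => ℝ)
          (⟨i, by simpa using h⟩ : s.toRight)).comp (ContinuousLinearMap.snd ℝ _ _)
  have := h12.map_fun L
  have e : (fun p => s.restrict (pairProc X · p)) =
      fun p : Ω × Ω => L (s.toLeft.restrict (X · p.1), s.toRight.restrict (X · p.2)) := by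
    funext p x
    rcases x with ⟨i | i, h⟩ <;> rfl
  rw [e]; exact this

section
variable {Ω ι : Type*} [MeasurableSpace Ω] {μ : Measure Ω} [IsProbabilityMeasure μ]
    {X : ι → Ω → ℝ}

lemma pairProc_measurable (hXm : ∀ i, Measurable (X i)) (k : ι ⊕ ι) : Measurable (pairProc X k) := by
  rcases k with i | i
  · exact (hXm i).comp measurable_fst
  · exact (hXm i).comp measurable_snd

lemma pairProc_mean (h0 : ∀ i, ∫ ω, X i ω ∂μ = 0) (k : ι ⊕ ι) :
    ∫ p, pairProc X k p ∂(μ.prod μ) = 0 := by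
  rcases k with i | i
  · simp only [pairProc, Sum.elim_inl]
    rw [integral_fun_fst, h0]; simp
  · simp only [pairProc, Sum.elim_inr]
    rw [integral_fun_snd, h0]; simp

/-- Covariance of the pair process. -/
def pairCov (r : ι → ι → ℝ) : ι ⊕ ι → ι ⊕ ι → ℝ
  | Sum.inl i, Sum.inl j => r i j
  | Sum.inr i, Sum.inr j => r i j
  | _, _ => 0

lemma pairProc_cov (hXm : ∀ i, Measurable (X i)) (hX : IsGaussianProcess X μ)
    (r : ι → ι → ℝ) (hr : ∀ i j, cov[X i, X j; μ] = r i j) (k l : ι ⊕ ι) :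
    cov[pairProc X k, pairProc X l; μ.prod μ] = pairCov r k l := by
  have hG := pairProc_gaussian hXm hX
  have hL := fun k => (hG.hasGaussianLaw_eval k).memLp_two
  have ho : ∀ i j, cov[pairProc X (Sum.inl i), pairProc X (Sum.inr j); μ.prod μ] = 0 := fun i j =>
    (indepFun_prod (μ := μ) (ν := μ) (hXm i) (hXm j)).covariance_eq_zero (hL (Sum.inl i)) (hL (Sum.inr j))
  rcases k with i | i <;> rcases l with j | j
  · simp only [pairCov]
    rw [← hr]
    have : (μ.prod μ).map Prod.fst = μ := by simp
    conv_rhs => rw [← this]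
    rw [covariance_map_fun]
    · rfl
    · exact (hXm i).aestronglyMeasurable
    · exact (hXm j).aestronglyMeasurable
    · fun_prop
  · exact ho i j
  · rw [covariance_comm]; exact ho j i
  · simp only [pairCov]
    rw [← hr]
    have : (μ.prod μ).map Prod.snd = μ := by simp
    conv_rhs => rw [← this]
    rw [covariance_map_fun]
    · rfl
    · exact (hXm i).aestronglyMeasurable
    · exact (hXm j).aestronglyMeasurable
    · fun_prop

/-- covariance of linear combinations -/
lemma cov_lincomb {Ω' κ : Type*} [MeasurableSpace Ω'] {P : Measure Ω'} [IsProbabilityMeasure P]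
    {Z : κ → Ω' → ℝ} (hL : ∀ k, MemLp (Z k) 2 P) (R : κ → κ → ℝ)
    (hR : ∀ k l, cov[Z k, Z l; P] = R k l) {n m : ℕ} (k : Fin n → κ) (c : Fin n → ℝ)
    (l : Fin m → κ) (d : Fin m → ℝ) :
    cov[fun ω => ∑ a, c a * Z (k a) ω, fun ω => ∑ b, d b * Z (l b) ω; P] =
      ∑ a, ∑ b, c a * d b * R (k a) (l b) := by
  rw [covariance_fun_sum_fun_sum (fun a => (hL _).const_mul _) (fun a => (hL _).const_mul _)]
  simp_rw [covariance_const_mul_left, covariance_const_mul_right, hR]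
  congr 1; ext a; congr 1; ext b; ring
end

end

section

/-- A centred Gaussian process with unit variances and covariance `r`. -/
structure GField {Ω ι : Type*} [MeasurableSpace Ω] (μ : Measure Ω) (X : ι → Ω → ℝ)
    (r : ι → ι → ℝ) : Prop where
  meas : ∀ i, Measurable (X i)
  gauss : IsGaussianProcess X μ
  mean : ∀ i, ∫ ω, X i ω ∂μ = 0
  cov : ∀ i j, cov[X i, X j; μ] = r i j
  one : ∀ i, r i i = 1

/-- rotated variable. -/
def rotV {Ω ι : Type*} (X : ι → Ω → ℝ) (s c : ℝ) (j : ι) (p : Ω × Ω) : ℝ :=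
  s * X j p.1 + c * X j p.2

section
variable {Ω ι : Type*} [MeasurableSpace Ω] {μ : Measure Ω} [IsProbabilityMeasure μ]
    {X : ι → Ω → ℝ} {r : ι → ι → ℝ}

lemma rotV_meas (h : GField μ X r) (s c : ℝ) (j : ι) : Measurable (rotV X s c j) := by
  have h1 : Measurable fun p : Ω × Ω => X j p.1 := (h.meas j).comp measurable_fst
  have h2 : Measurable fun p : Ω × Ω => X j p.2 := (h.meas j).comp measurable_snd
  exact (h1.const_mul s).add (h2.const_mul c)

lemma rotV_eq (s c : ℝ) (j : ι) (p : Ω × Ω) : rotV X s c j p =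
    ∑ m, ![s, c] m * pairProc X (![Sum.inl j, Sum.inr j] m) p := by
  simp [Fin.sum_univ_succ, pairProc, rotV]

lemma rot_cov (h : GField μ X r) {n m : ℕ} (k : Fin n → ι ⊕ ι) (c : Fin n → ℝ)
    (l : Fin m → ι ⊕ ι) (d : Fin m → ℝ) :
    cov[fun ω => ∑ a, c a * pairProc X (k a) ω, fun ω => ∑ b, d b * pairProc X (l b) ω; μ.prod μ] =
      ∑ a, ∑ b, c a * d b * pairCov r (k a) (l b) := by
  have hG := pairProc_gaussian h.meas h.gauss
  exact cov_lincomb (fun k => (hG.hasGaussianLaw_eval k).memLp_two) _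
    (pairProc_cov h.meas h.gauss r h.cov) k c l d

lemma rot_stein [DecidableEq ι] (h : GField μ X r) (s c : ℝ) (hsc : s ^ 2 + c ^ 2 = 1) (j : ι)
    (I : Finset ι) (f f' : ι → ℝ → ℝ) (K : ℝ) (hf : ∀ i x, HasDerivAt (f i) (f' i x) x)
    (hfm : ∀ i, Measurable (f' i)) (hb : ∀ i x, |f i x| ≤ 1) (hb' : ∀ i x, |f' i x| ≤ K)
    (H : (ι → ℝ) → ℝ) (hH : Measurable H) (hHb : ∀ w, |H w| ≤ K) :
    ∫ p, rotV X c (-s) j p * ((∏ i ∈ I, f i (X i p.1)) * H (fun j' => rotV X s c j' p)) ∂(μ.prod μ)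
      = ∫ p, (∑ i ∈ I, (∏ i' ∈ I.erase i, f i' (X i' p.1)) * (f' i (X i p.1) * (c * r i j))) *
          H (fun j' => rotV X s c j' p) ∂(μ.prod μ) := by
  have hK : 0 ≤ K := (abs_nonneg _).trans (hHb 0)
  have hG := pairProc_gaussian h.meas h.gauss
  set T : Ω × Ω → ℝ := rotV X c (-s) j with hT
  have hTm : Measurable T := rotV_meas h _ _ _
  set W : ι ⊕ ι → Ω × Ω → ℝ := Sum.elim (fun i p => X i p.1 - c * r i j * T p) (rotV X s c) with hW
  have hWeq : ∀ i p, W (Sum.inl i) p = ∑ m, ![1, -(c * r i j * c), c * r i j * s] m *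
      pairProc X (![Sum.inl i, Sum.inl j, Sum.inr j] m) p := by
    intro i p
    simp [Fin.sum_univ_succ, pairProc, hW, hT, rotV]
    ring
  have hWm : ∀ k, Measurable (W k) := by
    rintro (i | i)
    · exact ((h.meas i).comp measurable_fst).sub (hTm.const_mul _)
    · exact rotV_meas h _ _ _
  have hjoint : IsGaussianProcess (Sum.elim (fun _ : Unit => T) W) (μ.prod μ) := by
    refine gp_lincomb hG _ ?_
    rintro (_ | i | i)
    · exact ⟨2, _, _, rotV_eq _ _ _⟩
    · exact ⟨3, _, _, hWeq i⟩
    · exact ⟨2, _, _, rotV_eq _ _ _⟩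
  have hTfun : T = fun p => ∑ m, ![c, -s] m * pairProc X (![Sum.inl j, Sum.inr j] m) p :=
    funext fun p => rotV_eq _ _ _ _
  have hsymm : ∀ i j, r i j = r j i := fun i j => by rw [← h.cov, covariance_comm, h.cov]
  have hind0 := hjoint.indepFun_of_covariance_eq_zero (fun _ => hTm.aemeasurable)
    (fun k => (hWm k).aemeasurable) (by
      rintro _ (i | i)
      · rw [hTfun, show W (Sum.inl i) = _ from funext (hWeq i), rot_cov h]
        simp [Fin.sum_univ_succ, pairCov, h.one, hsymm j i]
        linear_combination (-c * r i j) * hsc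
      · rw [hTfun, show W (Sum.inr i) = _ from funext fun p => rotV_eq s c i p, rot_cov h]
        simp [Fin.sum_univ_succ, pairCov]
        ring)
  have hind : IndepFun T (fun p k => W k p) (μ.prod μ) :=
    hind0.comp (φ := fun z : Unit → ℝ => z ()) (ψ := id) (measurable_pi_apply _) measurable_id
  have hTmean : ∫ p, T p ∂(μ.prod μ) = 0 := by
    rw [hTfun, integral_finsetSum]
    · simp_rw [integral_const_mul, pairProc_mean h.mean]; simp
    · intro m _
      exact ((hG.hasGaussianLaw_eval _).integrable).const_mul _
  have hTvar : Var[T; μ.prod μ] = 1 := by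
    rw [← covariance_self hTm.aemeasurable, hTfun, rot_cov h]
    simp [Fin.sum_univ_succ, pairCov, h.one]
    linear_combination hsc
  have hlaw : (μ.prod μ).map T = gaussianReal 0 1 := by
    have : HasGaussianLaw T (μ.prod μ) := hjoint.hasGaussianLaw_eval (Sum.inl ())
    rw [this.map_eq_gaussianReal, hTmean, hTvar]; simp
  have hfc : ∀ i, Continuous (f i) := fun i =>
    continuous_iff_continuousAt.2 fun x => (hf i x).continuousAt
  have hprod : ∀ (I : Finset ι) (y : ι → ℝ), |∏ i ∈ I, f i (y i)| ≤ 1 := by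
    intro I y
    rw [Finset.abs_prod]
    exact Finset.prod_le_one (fun _ _ => abs_nonneg _) fun i _ => hb i _
  have main := stein_indep (μ.prod μ) T (fun p k => W k p) hTm (measurable_pi_lambda _ hWm) hlaw hind
    (fun w x => (∏ i ∈ I, f i (w (Sum.inl i) + c * r i j * x)) * H (fun j' => w (Sum.inr j')))
    (fun w x => (∑ i ∈ I, (∏ i' ∈ I.erase i, f i' (w (Sum.inl i') + c * r i' j * x)) *
        (f' i (w (Sum.inl i) + c * r i j * x) * (c * r i j))) * H (fun j' => w (Sum.inr j')))
    (max K ((∑ i ∈ I, K * |c * r i j|) * K)) ?_ ?_ ?_ ?_ ?_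
  · simp only [hW, Sum.elim_inl, Sum.elim_inr, sub_add_cancel] at main
    exact main
  · intro w x
    refine HasDerivAt.mul_const ?_ _
    have := HasDerivAt.fun_finsetProd (u := I)
      (f := fun i x => f i (w (Sum.inl i) + c * r i j * x))
      (f' := fun i => f' i (w (Sum.inl i) + c * r i j * x) * (c * r i j)) (x := x) (fun i _ => by
        have h2 : HasDerivAt (fun x => w (Sum.inl i) + c * r i j * x) (c * r i j) x := by
          simpa using ((hasDerivAt_id x).const_mul (c * r i j)).const_add (w (Sum.inl i))
        exact (hf i _).comp x h2)
    simpa [smul_eq_mul] using this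
  · refine Measurable.mul ?_ ?_
    · exact Finset.measurable_fun_prod _ fun i _ => (hfc i).measurable.comp (by fun_prop)
    · exact hH.comp (by fun_prop)
  · refine Measurable.mul ?_ ?_
    · refine Finset.measurable_fun_sum _ fun i _ => Measurable.mul ?_ ?_
      · exact Finset.measurable_fun_prod _ fun i _ => (hfc i).measurable.comp (by fun_prop)
      · exact Measurable.mul_const ((hfm i).comp (by fun_prop)) _
    · exact hH.comp (by fun_prop)
  · intro w x
    refine le_max_of_le_left ?_
    rw [abs_mul]
    calc _ ≤ 1 * K := mul_le_mul (hprod I fun i => w (Sum.inl i) + c * r i j * x) (hHb _) (abs_nonneg _) zero_le_one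
      _ = K := one_mul _
  · intro w x
    refine le_max_of_le_right ?_
    rw [abs_mul]
    refine mul_le_mul ?_ (hHb _) (abs_nonneg _) (Finset.sum_nonneg fun i _ => by positivity)
    refine (Finset.abs_sum_le_sum_abs _ _).trans (Finset.sum_le_sum fun i _ => ?_)
    rw [abs_mul, abs_mul]
    calc _ ≤ 1 * (K * |c * r i j|) := by
          refine mul_le_mul (hprod (I.erase i) fun i => w (Sum.inl i) + c * r i j * x) ?_ (by positivity) zero_le_one
          gcongr; exact hb' _ _
      _ = _ := one_mul _
end

end

section

section
variable {Ω ι : Type*} [MeasurableSpace Ω] {μ : Measure Ω} [IsProbabilityMeasure μ]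
    {X : ι → Ω → ℝ} {r : ι → ι → ℝ}

lemma prod_abs_le_one (f : ι → ℝ → ℝ) (hb : ∀ i x, |f i x| ≤ 1) (I : Finset ι) (y : ι → ℝ) :
    |∏ i ∈ I, f i (y i)| ≤ 1 := by
  rw [Finset.abs_prod]
  exact Finset.prod_le_one (fun _ _ => abs_nonneg _) fun i _ => hb i _

lemma X_integrable (h : GField μ X r) (i : ι) : Integrable (X i) μ :=
  (h.gauss.hasGaussianLaw_eval i).integrable

lemma interp_deriv [DecidableEq ι] (h : GField μ X r)
    (I J : Finset ι) (f g g' : ι → ℝ → ℝ) (K : ℝ)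
    (hf : ∀ i, Continuous (f i)) (hb : ∀ i x, |f i x| ≤ 1)
    (hg : ∀ i x, HasDerivAt (g i) (g' i x) x)
    (hgm : ∀ i, Measurable (g' i)) (hgb : ∀ i x, |g i x| ≤ 1) (hgb' : ∀ i x, |g' i x| ≤ K) (θ : ℝ) :
    (∀ j ∈ J, Integrable (fun p => rotV X (Real.cos θ) (-Real.sin θ) j p *
        ((∏ i ∈ I, f i (X i p.1)) * ((∏ j' ∈ J.erase j, g j' (rotV X (Real.sin θ) (Real.cos θ) j' p)) *
          g' j (rotV X (Real.sin θ) (Real.cos θ) j p)))) (μ.prod μ)) ∧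
    HasDerivAt (fun θ => ∫ p, (∏ i ∈ I, f i (X i p.1)) *
        ∏ j ∈ J, g j (rotV X (Real.sin θ) (Real.cos θ) j p) ∂(μ.prod μ))
      (∑ j ∈ J, ∫ p, rotV X (Real.cos θ) (-Real.sin θ) j p *
        ((∏ i ∈ I, f i (X i p.1)) * ((∏ j' ∈ J.erase j, g j' (rotV X (Real.sin θ) (Real.cos θ) j' p)) *
          g' j (rotV X (Real.sin θ) (Real.cos θ) j p))) ∂(μ.prod μ)) θ := by
  have hgc : ∀ i, Continuous (g i) := fun i =>
    continuous_iff_continuousAt.2 fun x => (hg i x).continuousAt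
  have mX1 : ∀ i, Measurable fun p : Ω × Ω => X i p.1 := fun i => (h.meas i).comp measurable_fst
  have mX2 : ∀ i, Measurable fun p : Ω × Ω => X i p.2 := fun i => (h.meas i).comp measurable_snd
  have mf : Measurable fun p : Ω × Ω => ∏ i ∈ I, f i (X i p.1) :=
    Finset.measurable_fun_prod _ fun i _ => (hf i).measurable.comp (mX1 i)
  have mg : ∀ (J : Finset ι) s c, Measurable fun p : Ω × Ω => ∏ i ∈ J, g i (rotV X s c i p) :=
    fun J s c => Finset.measurable_fun_prod _ fun i _ => (hgc i).measurable.comp (rotV_meas h s c i)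
  have hXint : ∀ j, Integrable (fun p : Ω × Ω => |X j p.1| + |X j p.2|) (μ.prod μ) := fun j =>
    ((X_integrable h j).comp_fst μ).abs.add ((X_integrable h j).comp_snd μ).abs
  have key : ∀ j θ p, |rotV X (Real.cos θ) (-Real.sin θ) j p *
        ((∏ i ∈ I, f i (X i p.1)) * ((∏ j' ∈ J.erase j, g j' (rotV X (Real.sin θ) (Real.cos θ) j' p)) *
          g' j (rotV X (Real.sin θ) (Real.cos θ) j p)))| ≤ K * (|X j p.1| + |X j p.2|) := by
    intro j θ p
    have h1 : |rotV X (Real.cos θ) (-Real.sin θ) j p| ≤ |X j p.1| + |X j p.2| := by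
      unfold rotV
      refine (abs_add_le _ _).trans ?_
      rw [abs_mul, abs_mul, abs_neg]
      have := Real.abs_cos_le_one θ
      have := Real.abs_sin_le_one θ
      nlinarith [abs_nonneg (X j p.1), abs_nonneg (X j p.2)]
    have h2 := prod_abs_le_one f hb I (fun i => X i p.1)
    have h3 := prod_abs_le_one g hgb (J.erase j) (fun j' => rotV X (Real.sin θ) (Real.cos θ) j' p)
    have h4 := hgb' j (rotV X (Real.sin θ) (Real.cos θ) j p)
    have hK : 0 ≤ K := (abs_nonneg _).trans h4
    rw [abs_mul, abs_mul, abs_mul]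
    calc _ ≤ (|X j p.1| + |X j p.2|) * (1 * (1 * K)) := by gcongr
      _ = _ := by ring
  have hm : ∀ j, Measurable (fun p => rotV X (Real.cos θ) (-Real.sin θ) j p *
        ((∏ i ∈ I, f i (X i p.1)) * ((∏ j' ∈ J.erase j, g j' (rotV X (Real.sin θ) (Real.cos θ) j' p)) *
          g' j (rotV X (Real.sin θ) (Real.cos θ) j p)))) := fun j =>
    (rotV_meas h _ _ j).mul (mf.mul ((mg _ _ _).mul ((hgm j).comp (rotV_meas h _ _ j))))
  have hIntg : ∀ j, Integrable (fun p => rotV X (Real.cos θ) (-Real.sin θ) j p *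
        ((∏ i ∈ I, f i (X i p.1)) * ((∏ j' ∈ J.erase j, g j' (rotV X (Real.sin θ) (Real.cos θ) j' p)) *
          g' j (rotV X (Real.sin θ) (Real.cos θ) j p)))) (μ.prod μ) := fun j =>
    ((hXint j).const_mul K).mono' (hm j).aestronglyMeasurable (ae_of_all _ fun p => key j θ p)
  refine ⟨fun j _ => hIntg j, ?_⟩
  rw [← integral_finsetSum _ fun j _ => hIntg j]
  refine (hasDerivAt_integral_of_dominated_loc_of_deriv_le (s := univ) (x₀ := θ)
    (F := fun θ p => (∏ i ∈ I, f i (X i p.1)) *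
        ∏ j ∈ J, g j (rotV X (Real.sin θ) (Real.cos θ) j p))
    (F' := fun θ p => ∑ j ∈ J, rotV X (Real.cos θ) (-Real.sin θ) j p *
        ((∏ i ∈ I, f i (X i p.1)) * ((∏ j' ∈ J.erase j, g j' (rotV X (Real.sin θ) (Real.cos θ) j' p)) *
          g' j (rotV X (Real.sin θ) (Real.cos θ) j p))))
    (bound := fun p => ∑ j ∈ J, K * (|X j p.1| + |X j p.2|)) univ_mem ?_ ?_ ?_ ?_ ?_ ?_).2
  · exact Eventually.of_forall fun θ => (mf.mul (mg _ _ _)).aestronglyMeasurable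
  · refine Integrable.of_bound (mf.mul (mg _ _ _)).aestronglyMeasurable 1 (ae_of_all _ fun p => ?_)
    rw [Real.norm_eq_abs, abs_mul]
    exact mul_le_one₀ (prod_abs_le_one f hb I (fun i => X i p.1)) (abs_nonneg _)
      (prod_abs_le_one g hgb J (fun j' => rotV X (Real.sin θ) (Real.cos θ) j' p))
  · exact (Finset.measurable_fun_sum _ fun j _ => hm j).aestronglyMeasurable
  · refine ae_of_all _ fun p θ _ => ?_
    refine (norm_sum_le _ _).trans (Finset.sum_le_sum fun j _ => key j θ p)
  · exact integrable_finsetSum _ fun j _ => (hXint j).const_mul K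
  · refine ae_of_all _ fun p θ _ => ?_
    have := HasDerivAt.fun_finsetProd (u := J)
      (f := fun j θ => g j (rotV X (Real.sin θ) (Real.cos θ) j p))
      (f' := fun j => g' j (rotV X (Real.sin θ) (Real.cos θ) j p) *
        rotV X (Real.cos θ) (-Real.sin θ) j p) (x := θ) (fun j _ => by
        have h2 : HasDerivAt (fun θ => rotV X (Real.sin θ) (Real.cos θ) j p)
            (rotV X (Real.cos θ) (-Real.sin θ) j p) θ := by
          unfold rotV
          exact ((Real.hasDerivAt_sin θ).mul_const _).add ((Real.hasDerivAt_cos θ).mul_const _)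
        exact (hg j _).comp θ h2)
    have := this.const_mul (∏ i ∈ I, f i (X i p.1))
    refine this.congr_deriv ?_
    rw [Finset.mul_sum]
    refine Finset.sum_congr rfl fun j _ => ?_
    rw [smul_eq_mul]; ring

lemma rot_pair (h : GField μ X r) (s c : ℝ) (hsc : s ^ 2 + c ^ 2 = 1) (i j : ι) (q δ : ℝ)
    (h1 : |r i j| ≤ q) (hq : q ≤ δ) (h2 : δ < 1) (u v : ℝ) (hu : 0 ≤ u) (hv : 0 ≤ v)
    (a b : ℝ → ℝ) (ha : Measurable a) (hb : Measurable b) (ha0 : ∀ x, 0 ≤ a x) (hb0 : ∀ x, 0 ≤ b x)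
    (K : ℝ) (haK : ∀ x, a x ≤ K) (hbK : ∀ x, b x ≤ K) (hau : ∀ x < u, a x = 0)
    (hbv : ∀ x < v, b x = 0) (hai : Integrable a) (hbi : Integrable b) :
    ∫ p, a (X i p.1) * b (rotV X s c j p) ∂(μ.prod μ) ≤
      (√(1 - δ ^ 2))⁻¹ * Real.exp (-((u ^ 2 + v ^ 2) / (2 * (1 + q)))) * ((∫ x, a x) * ∫ x, b x) := by
  have hG := pairProc_gaussian h.meas h.gauss
  have mX1 : ∀ i, Measurable fun p : Ω × Ω => X i p.1 := fun i => (h.meas i).comp measurable_fst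
  have eX : (fun p : Ω × Ω => X i p.1) = fun p => ∑ m, ![1] m * pairProc X (![Sum.inl i] m) p := by
    funext p; simp [pairProc]
  have eV : rotV X s c j = fun p => ∑ m, ![s, c] m * pairProc X (![Sum.inl j, Sum.inr j] m) p :=
    funext fun p => rotV_eq _ _ _ _
  have hjoint : IsGaussianProcess (fun b : Bool => if b then (fun p : Ω × Ω => X i p.1) else rotV X s c j)
      (μ.prod μ) := by
    refine gp_lincomb hG _ ?_
    rintro (_ | _)
    · exact ⟨2, _, _, rotV_eq _ _ _⟩
    · exact ⟨1, _, _, fun p => congrFun eX p⟩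
  have hp : HasGaussianLaw (fun p : Ω × Ω => (X i p.1, rotV X s c j p)) (μ.prod μ) := by
    have := hjoint.hasGaussianLaw_prodMk (s := true) (t := false)
    exact this
  have m0 : ∀ {n : ℕ} (k : Fin n → ι ⊕ ι) (d : Fin n → ℝ),
      ∫ p, ∑ m, d m * pairProc X (k m) p ∂(μ.prod μ) = 0 := by
    intro n k d
    rw [integral_finsetSum]
    · simp_rw [integral_const_mul, pairProc_mean h.mean]; simp
    · intro m _
      exact ((hG.hasGaussianLaw_eval _).integrable).const_mul _
  have hs : |s| ≤ 1 := by rw [abs_le_one_iff_mul_self_le_one]; nlinarith [sq_nonneg c]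
  refine bivar_bound (μ.prod μ) (fun p => X i p.1) (rotV X s c j) (mX1 i) (rotV_meas h s c j) hp ?_ ?_ ?_ ?_
    (s * r i j) q δ ?_ ?_ hq h2 u v hu hv a b ha hb ha0 hb0 K haK hbK hau hbv hai hbi
  · rw [eX, m0]
  · rw [eV, m0]
  · rw [eX, rot_cov h]; simp [pairCov, h.one]
  · rw [eV, rot_cov h]; simp [Fin.sum_univ_succ, pairCov, h.one]; linear_combination hsc
  · rw [eX, eV, rot_cov h]; simp [Fin.sum_univ_succ, pairCov]
  · rw [abs_mul]; nlinarith [abs_nonneg (r i j)]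
end

end

section

section
variable {Ω ι : Type*} [MeasurableSpace Ω] {μ : Measure Ω} [IsProbabilityMeasure μ]
    {X : ι → Ω → ℝ} {r : ι → ι → ℝ}

lemma smooth_compare [DecidableEq ι] (h : GField μ X r) (I J : Finset ι) (f f' g g' : ι → ℝ → ℝ)
    (K : ℝ) (hf : ∀ i x, HasDerivAt (f i) (f' i x) x) (hfm : ∀ i, Measurable (f' i))
    (hb : ∀ i x, |f i x| ≤ 1) (hb' : ∀ i x, |f' i x| ≤ K)
    (hg : ∀ i x, HasDerivAt (g i) (g' i x) x) (hgm : ∀ i, Measurable (g' i))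
    (hgb : ∀ i x, |g i x| ≤ 1) (hgb' : ∀ i x, |g' i x| ≤ K)
    (a b : ι → ℝ) (ha : ∀ i ∈ I, 0 ≤ a i) (hbn : ∀ j ∈ J, 0 ≤ b j)
    (δ : ℝ) (hδ : δ < 1) (hr : ∀ i ∈ I, ∀ j ∈ J, |r i j| ≤ δ)
    (hfa : ∀ i, ∀ x < a i, f' i x = 0) (hgb0 : ∀ i, ∀ x < b i, g' i x = 0)
    (hfi : ∀ i, Integrable (f' i)) (hgi : ∀ i, Integrable (g' i)) :
    |(∫ ω, (∏ i ∈ I, f i (X i ω)) * ∏ j ∈ J, g j (X j ω) ∂μ) -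
      (∫ ω, (∏ i ∈ I, f i (X i ω)) ∂μ) * ∫ ω, ∏ j ∈ J, g j (X j ω) ∂μ| ≤
    (Real.pi / 2) * ∑ j ∈ J, ∑ i ∈ I, |r i j| * ((√(1 - δ ^ 2))⁻¹ *
      Real.exp (-((a i ^ 2 + b j ^ 2) / (2 * (1 + |r i j|)))) * ((∫ x, |f' i x|) * ∫ x, |g' j x|)) := by
  have hgc : ∀ i, Continuous (g i) := fun i =>
    continuous_iff_continuousAt.2 fun x => (hg i x).continuousAt
  have hfc : ∀ i, Continuous (f i) := fun i =>
    continuous_iff_continuousAt.2 fun x => (hf i x).continuousAt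
  have mX1 : ∀ i, Measurable fun p : Ω × Ω => X i p.1 := fun i => (h.meas i).comp measurable_fst
  set G : ℝ → ℝ := fun θ => ∫ p, (∏ i ∈ I, f i (X i p.1)) *
        ∏ j ∈ J, g j (rotV X (Real.sin θ) (Real.cos θ) j p) ∂(μ.prod μ) with hG
  set M := ∑ j ∈ J, ∑ i ∈ I, |r i j| * ((√(1 - δ ^ 2))⁻¹ *
      Real.exp (-((a i ^ 2 + b j ^ 2) / (2 * (1 + |r i j|)))) * ((∫ x, |f' i x|) * ∫ x, |g' j x|)) with hM
  have hder : ∀ θ, ∃ d, HasDerivAt G d θ ∧ |d| ≤ M := by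
    intro θ
    obtain ⟨hIntg, hD⟩ := interp_deriv h I J f g g' K hfc hb hg hgm hgb hgb' θ
    refine ⟨_, hD, ?_⟩
    set s := Real.sin θ with hs
    set c := Real.cos θ with hc
    have hsc : s ^ 2 + c ^ 2 = 1 := Real.sin_sq_add_cos_sq θ
    have hc1 : |c| ≤ 1 := Real.abs_cos_le_one θ
    refine (Finset.abs_sum_le_sum_abs _ _).trans (Finset.sum_le_sum fun j hj => ?_)
    have st := rot_stein h s c hsc j I f f' K hf hfm hb hb'
      (fun w => (∏ j' ∈ J.erase j, g j' (w j')) * g' j (w j))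
      ((Finset.measurable_fun_prod _ fun i _ => (hgc i).measurable.comp (measurable_pi_apply i)).mul
        ((hgm j).comp (measurable_pi_apply j))) (fun w => by
          rw [abs_mul]
          have h1 := prod_abs_le_one g hgb (J.erase j) w
          have h2 := hgb' j (w j)
          nlinarith [abs_nonneg (g' j (w j)), abs_nonneg (∏ j' ∈ J.erase j, g j' (w j'))])
    simp only at st
    rw [st]
    have mU : ∀ i, Measurable fun p : Ω × Ω => |f' i (X i p.1)| * |g' j (rotV X s c j p)| := fun i =>
      (measurable_norm.comp ((hfm i).comp (mX1 i))).mul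
        (measurable_norm.comp ((hgm j).comp (rotV_meas h s c j)))
    have iU : ∀ i, Integrable (fun p : Ω × Ω => |f' i (X i p.1)| * |g' j (rotV X s c j p)|) (μ.prod μ) := by
      intro i
      refine Integrable.of_bound (mU i).aestronglyMeasurable (K * K) (ae_of_all _ fun p => ?_)
      rw [Real.norm_eq_abs, abs_mul, abs_abs, abs_abs]
      exact mul_le_mul (hb' _ _) (hgb' _ _) (abs_nonneg _) ((abs_nonneg _).trans (hb' i 0))
    have pt : ∀ p : Ω × Ω, |(∑ i ∈ I, (∏ i' ∈ I.erase i, f i' (X i' p.1)) * (f' i (X i p.1) * (c * r i j))) *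
          ((∏ j' ∈ J.erase j, g j' (rotV X s c j' p)) * g' j (rotV X s c j p))| ≤
        ∑ i ∈ I, |r i j| * (|f' i (X i p.1)| * |g' j (rotV X s c j p)|) := by
      intro p
      rw [Finset.sum_mul]
      refine (Finset.abs_sum_le_sum_abs _ _).trans (Finset.sum_le_sum fun i _ => ?_)
      have h1 := prod_abs_le_one f hb (I.erase i) (fun i => X i p.1)
      have h2 := prod_abs_le_one g hgb (J.erase j) (fun i => rotV X s c i p)
      simp only [abs_mul] at *
      calc _ ≤ 1 * (|f' i (X i p.1)| * (1 * |r i j|)) * (1 * |g' j (rotV X s c j p)|) := by gcongr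
        _ = _ := by ring
    calc _ ≤ ∫ p, ∑ i ∈ I, |r i j| * (|f' i (X i p.1)| * |g' j (rotV X s c j p)|) ∂(μ.prod μ) := by
          rw [← Real.norm_eq_abs]
          exact norm_integral_le_of_norm_le (integrable_finsetSum _ fun i _ => (iU i).const_mul _)
            (ae_of_all _ pt)
      _ = ∑ i ∈ I, |r i j| * ∫ p, (|f' i (X i p.1)| * |g' j (rotV X s c j p)|) ∂(μ.prod μ) := by
          rw [integral_finsetSum _ fun i _ => (iU i).const_mul _]
          simp_rw [integral_const_mul]
      _ ≤ _ := by
          refine Finset.sum_le_sum fun i hi => mul_le_mul_of_nonneg_left ?_ (abs_nonneg _)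
          exact rot_pair h s c hsc i j _ δ le_rfl (hr i hi j hj) hδ (a i) (b j) (ha i hi) (hbn j hj)
            (fun x => |f' i x|) (fun x => |g' j x|) (measurable_norm.comp (hfm i))
            (measurable_norm.comp (hgm j)) (fun _ => abs_nonneg _) (fun _ => abs_nonneg _) K
            (hb' i) (hgb' j) (fun x hx => by simp [hfa i x hx]) (fun x hx => by simp [hgb0 j x hx])
            (hfi i).abs (hgi j).abs
  choose d hd hdM using hder
  have hmv := Convex.norm_image_sub_le_of_norm_hasDerivWithin_le (f := G) (f' := d) (C := M)
    (s := univ) (x := 0) (y := Real.pi / 2) (fun x _ => (hd x).hasDerivWithinAt)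
    (fun x _ => hdM x) convex_univ (mem_univ _) (mem_univ _)
  have e0 : G 0 = (∫ ω, (∏ i ∈ I, f i (X i ω)) ∂μ) * ∫ ω, ∏ j ∈ J, g j (X j ω) ∂μ := by
    simp only [hG, Real.sin_zero, Real.cos_zero, rotV, zero_mul, one_mul, zero_add]
    exact integral_prod_mul (μ := μ) (ν := μ) (fun ω => ∏ i ∈ I, f i (X i ω)) (fun ω => ∏ j ∈ J, g j (X j ω))
  have e1 : G (Real.pi / 2) = ∫ ω, (∏ i ∈ I, f i (X i ω)) * ∏ j ∈ J, g j (X j ω) ∂μ := by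
    simp only [hG, Real.sin_pi_div_two, Real.cos_pi_div_two, rotV, zero_mul, one_mul, add_zero]
    rw [integral_fun_fst (μ := μ) (ν := μ) (fun ω => (∏ i ∈ I, f i (X i ω)) * ∏ j ∈ J, g j (X j ω))]
    simp
  rw [e0, e1, sub_zero, Real.norm_eq_abs, Real.norm_eq_abs, abs_of_pos (by positivity : 0 < Real.pi / 2)] at hmv
  linarith
end

end

section

/-- derivative of the smooth transition. -/
def stD : ℝ → ℝ := deriv Real.smoothTransition

lemma stD_cont : Continuous stD :=
  (Real.smoothTransition.contDiff (n := 1)).continuous_deriv le_rfl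

lemma st_hasDeriv (x : ℝ) : HasDerivAt Real.smoothTransition (stD x) x :=
  ((Real.smoothTransition.contDiff (n := 1)).differentiable one_ne_zero x).hasDerivAt

lemma stD_gt (x : ℝ) (hx : 1 < x) : stD x = 0 := by
  have : Real.smoothTransition =ᶠ[nhds x] fun _ => 1 := by
    filter_upwards [lt_mem_nhds hx] with y hy
    exact Real.smoothTransition.one_of_one_le hy.le
  rw [stD, this.deriv_eq]; simp

lemma stD_lt (x : ℝ) (hx : x < 0) : stD x = 0 := by
  have : Real.smoothTransition =ᶠ[nhds x] fun _ => 0 := by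
    filter_upwards [gt_mem_nhds hx] with y hy
    exact Real.smoothTransition.zero_of_nonpos hy.le
  rw [stD, this.deriv_eq]; simp

lemma stD_supp : HasCompactSupport stD := by
  refine HasCompactSupport.intro (K := Icc 0 1) isCompact_Icc fun x hx => ?_
  rw [mem_Icc, not_and_or, not_le, not_le] at hx
  exact hx.elim (stD_lt x) (stD_gt x)

lemma stD_int : Integrable stD := stD_cont.integrable_of_hasCompactSupport stD_supp

/-- total variation constant -/
def stK : ℝ := ∫ x, |stD x|

/-- smooth approximation of the indicator of `(-∞, a]`. -/
def apx (N a x : ℝ) : ℝ := Real.smoothTransition (1 + N * (a - x))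
/-- its derivative. -/
def apxD (N a x : ℝ) : ℝ := -N * stD (1 + N * (a - x))

lemma apx_deriv (N a x : ℝ) : HasDerivAt (apx N a) (apxD N a x) x := by
  have h2 : HasDerivAt (fun x => 1 + N * (a - x)) (-N) x := by
    simpa using (((hasDerivAt_id x).const_sub a).const_mul N).const_add 1
  have := (st_hasDeriv (1 + N * (a - x))).comp x h2
  refine this.congr_deriv ?_
  simp [apxD]; ring

lemma apxD_cont (N a : ℝ) : Continuous (apxD N a) := by
  unfold apxD; have := stD_cont; fun_prop

lemma apx_abs (N a x : ℝ) : |apx N a x| ≤ 1 := by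
  unfold apx
  rw [abs_of_nonneg (Real.smoothTransition.nonneg _)]
  exact Real.smoothTransition.le_one _

lemma apxD_zero (N a x : ℝ) (hN : 0 < N) (hx : x < a) : apxD N a x = 0 := by
  unfold apxD
  rw [stD_gt, mul_zero]
  nlinarith [mul_pos hN (sub_pos.2 hx)]

lemma apxD_bdd (N : ℝ) : ∃ K, ∀ a x, |apxD N a x| ≤ K := by
  obtain ⟨C, hC⟩ := stD_supp.exists_bound_of_continuous stD_cont
  refine ⟨|N| * C, fun a x => ?_⟩
  unfold apxD
  rw [abs_mul, abs_neg]
  exact mul_le_mul_of_nonneg_left (hC _) (abs_nonneg _)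

lemma apxD_int (N a : ℝ) (hN : 0 < N) : Integrable (apxD N a) := by
  unfold apxD
  have h1 : Integrable (fun x => stD (1 + N * a - N * x)) := by
    have h2 : Integrable (fun x => stD (1 + N * a - x)) := stD_int.comp_sub_left _
    exact h2.comp_mul_left' hN.ne'
  refine (h1.const_mul (-N)).congr (ae_of_all _ fun x => ?_)
  simp only
  congr 2; ring

lemma apxD_integral (N a : ℝ) (hN : 0 < N) : ∫ x, |apxD N a x| = stK := by
  unfold apxD stK
  have e : ∀ x, |-N * stD (1 + N * (a - x))| = N * (fun y => |stD (1 + N * a - y)|) (N * x) := by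
    intro x
    rw [abs_mul, abs_neg, abs_of_pos hN]
    simp only
    congr 3; ring
  simp_rw [e]
  rw [integral_const_mul, Measure.integral_comp_mul_left (fun y => |stD (1 + N * a - y)|) N,
    integral_sub_left_eq_self (fun y => |stD y|), smul_eq_mul, abs_of_pos (inv_pos.2 hN)]
  field_simp

lemma apx_tendsto (a x : ℝ) : Tendsto (fun n : ℕ => apx (n + 1) a x) atTop
    (nhds ((Iic a).indicator (fun _ => 1) x)) := by
  rcases le_or_gt x a with hx | hx
  · rw [indicator_of_mem (by exact hx)]
    refine tendsto_const_nhds.congr fun n => ?_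
    unfold apx
    rw [Real.smoothTransition.one_of_one_le]
    have : 0 ≤ ((n : ℝ) + 1) * (a - x) := mul_nonneg (by positivity) (by linarith)
    linarith
  · rw [indicator_of_notMem (by simpa using hx)]
    refine tendsto_const_nhds.congr' ?_
    obtain ⟨m, hm⟩ := exists_nat_gt (1 / (x - a))
    filter_upwards [eventually_ge_atTop m] with n hn
    unfold apx
    rw [Real.smoothTransition.zero_of_nonpos]
    rw [div_lt_iff₀ (by linarith)] at hm
    have : (m : ℝ) ≤ n := by exact_mod_cast hn
    nlinarith

/-- constant in the comparison lemma. -/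
def cK (δ : ℝ) : ℝ := Real.pi / 2 * ((√(1 - δ ^ 2))⁻¹ * (stK * stK))

lemma cK_nonneg (δ : ℝ) : 0 ≤ cK δ := by
  unfold cK
  have : 0 ≤ stK := integral_nonneg fun _ => abs_nonneg _
  positivity

section
variable {Ω ι : Type*} [MeasurableSpace Ω] {μ : Measure Ω} [IsProbabilityMeasure μ]
    {X : ι → Ω → ℝ} {r : ι → ι → ℝ}

lemma prod_ind (a : ι → ℝ) (I : Finset ι) (ω : Ω) :
    ∏ i ∈ I, (Iic (a i)).indicator (fun _ => (1 : ℝ)) (X i ω) =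
      (⋂ i ∈ I, {ω | X i ω ≤ a i}).indicator (fun _ => 1) ω := by
  classical
  by_cases h : ω ∈ ⋂ i ∈ I, {ω | X i ω ≤ a i}
  · rw [indicator_of_mem h]
    refine Finset.prod_eq_one fun i hi => ?_
    rw [indicator_of_mem]
    simp only [mem_iInter] at h
    exact h i hi
  · rw [indicator_of_notMem h]
    simp only [mem_iInter, not_forall] at h
    obtain ⟨i, hi, hx⟩ := h
    refine Finset.prod_eq_zero hi ?_
    rw [indicator_of_notMem]
    exact hx

lemma meas_ev (h : GField μ X r) (a : ι → ℝ) (I : Finset ι) :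
    MeasurableSet (⋂ i ∈ I, {ω | X i ω ≤ a i}) :=
  Finset.measurableSet_biInter _ fun i _ => measurableSet_le (h.meas i) measurable_const

lemma cov_compare [DecidableEq ι] (h : GField μ X r) (I J : Finset ι)
    (a b : ι → ℝ) (ha : ∀ i ∈ I, 0 ≤ a i) (hbn : ∀ j ∈ J, 0 ≤ b j)
    (δ : ℝ) (hδ : δ < 1) (hr : ∀ i ∈ I, ∀ j ∈ J, |r i j| ≤ δ) :
    |μ.real ((⋂ i ∈ I, {ω | X i ω ≤ a i}) ∩ ⋂ j ∈ J, {ω | X j ω ≤ b j}) -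
      μ.real (⋂ i ∈ I, {ω | X i ω ≤ a i}) * μ.real (⋂ j ∈ J, {ω | X j ω ≤ b j})| ≤
    cK δ * ∑ j ∈ J, ∑ i ∈ I, |r i j| * Real.exp (-((a i ^ 2 + b j ^ 2) / (2 * (1 + |r i j|)))) := by
  have hac : ∀ N a, Continuous (apx N a) := fun N a =>
    continuous_iff_continuousAt.2 fun x => (apx_deriv N a x).continuousAt
  have step : ∀ n : ℕ, |(∫ ω, (∏ i ∈ I, apx (n + 1) (a i) (X i ω)) * ∏ j ∈ J, apx (n + 1) (b j) (X j ω) ∂μ) -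
      (∫ ω, (∏ i ∈ I, apx (n + 1) (a i) (X i ω)) ∂μ) * ∫ ω, ∏ j ∈ J, apx (n + 1) (b j) (X j ω) ∂μ| ≤
      cK δ * ∑ j ∈ J, ∑ i ∈ I, |r i j| * Real.exp (-((a i ^ 2 + b j ^ 2) / (2 * (1 + |r i j|)))) := by
    intro n
    have hN : (0 : ℝ) < n + 1 := by positivity
    obtain ⟨K, hK⟩ := apxD_bdd (n + 1)
    refine (smooth_compare h I J (fun i => apx (n + 1) (a i)) (fun i => apxD (n + 1) (a i))
      (fun i => apx (n + 1) (b i)) (fun i => apxD (n + 1) (b i)) K (fun i => apx_deriv _ _)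
      (fun i => (apxD_cont _ _).measurable) (fun i => apx_abs _ _) (fun i => hK _)
      (fun i => apx_deriv _ _)
      (fun i => (apxD_cont _ _).measurable) (fun i => apx_abs _ _) (fun i => hK _) a b ha hbn δ hδ hr
      (fun i x hx => apxD_zero _ _ _ hN hx) (fun i x hx => apxD_zero _ _ _ hN hx)
      (fun i => apxD_int _ _ hN) (fun i => apxD_int _ _ hN)).trans (le_of_eq ?_)
    simp_rw [apxD_integral _ _ hN]
    rw [cK, Finset.mul_sum, Finset.mul_sum]
    refine Finset.sum_congr rfl fun j _ => ?_
    rw [Finset.mul_sum, Finset.mul_sum]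
    refine Finset.sum_congr rfl fun i _ => ?_
    ring
  have lim : ∀ (I : Finset ι) (a : ι → ℝ) ω, Tendsto (fun n : ℕ => ∏ i ∈ I, apx (n + 1) (a i) (X i ω)) atTop
      (nhds ((⋂ i ∈ I, {ω | X i ω ≤ a i}).indicator (fun _ => 1) ω)) := by
    intro I a ω
    rw [← prod_ind]
    exact tendsto_finsetProd _ fun i _ => apx_tendsto _ _
  have mf : ∀ (I : Finset ι) (a : ι → ℝ) (N : ℝ), Measurable fun ω => ∏ i ∈ I, apx N (a i) (X i ω) :=
    fun I a N => Finset.measurable_fun_prod _ fun i _ => (hac _ _).measurable.comp (h.meas i)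
  have bf : ∀ (I : Finset ι) (a : ι → ℝ) (N : ℝ) ω, |∏ i ∈ I, apx N (a i) (X i ω)| ≤ 1 :=
    fun I a N ω => prod_abs_le_one (fun i => apx N (a i)) (fun i => apx_abs _ _) I (fun i => X i ω)
  have t1 : ∀ (I : Finset ι) (a : ι → ℝ), Tendsto (fun n : ℕ => ∫ ω, ∏ i ∈ I, apx (n + 1) (a i) (X i ω) ∂μ) atTop
      (nhds (μ.real (⋂ i ∈ I, {ω | X i ω ≤ a i}))) := by
    intro I a
    have : μ.real (⋂ i ∈ I, {ω | X i ω ≤ a i}) =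
        ∫ ω, (⋂ i ∈ I, {ω | X i ω ≤ a i}).indicator (fun _ => (1 : ℝ)) ω ∂μ := by
      rw [integral_indicator (meas_ev h a I)]; simp
    rw [this]
    refine tendsto_integral_of_dominated_convergence (fun _ => 1)
      (fun n => (mf I a _).aestronglyMeasurable) (integrable_const _)
      (fun n => ae_of_all _ fun ω => bf I a _ ω) (ae_of_all _ fun ω => lim I a ω)
  have t2 : Tendsto (fun n : ℕ => ∫ ω, (∏ i ∈ I, apx (n + 1) (a i) (X i ω)) *
      ∏ j ∈ J, apx (n + 1) (b j) (X j ω) ∂μ) atTop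
      (nhds (μ.real ((⋂ i ∈ I, {ω | X i ω ≤ a i}) ∩ ⋂ j ∈ J, {ω | X j ω ≤ b j}))) := by
    have : μ.real ((⋂ i ∈ I, {ω | X i ω ≤ a i}) ∩ ⋂ j ∈ J, {ω | X j ω ≤ b j}) =
        ∫ ω, (⋂ i ∈ I, {ω | X i ω ≤ a i}).indicator (fun _ => (1 : ℝ)) ω *
          (⋂ j ∈ J, {ω | X j ω ≤ b j}).indicator (fun _ => (1 : ℝ)) ω ∂μ := by
      have e : ∀ ω, (⋂ i ∈ I, {ω | X i ω ≤ a i}).indicator (fun _ => (1 : ℝ)) ω *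
          (⋂ j ∈ J, {ω | X j ω ≤ b j}).indicator (fun _ => (1 : ℝ)) ω =
          ((⋂ i ∈ I, {ω | X i ω ≤ a i}) ∩ ⋂ j ∈ J, {ω | X j ω ≤ b j}).indicator (fun _ => (1 : ℝ)) ω := by
        intro ω
        exact (congrFun (inter_indicator_one (M₀ := ℝ) (s := ⋂ i ∈ I, {ω | X i ω ≤ a i}) (t := ⋂ j ∈ J, {ω | X j ω ≤ b j})) ω).symm
      simp_rw [e]
      rw [integral_indicator ((meas_ev h a I).inter (meas_ev h b J))]; simp
    rw [this]
    refine tendsto_integral_of_dominated_convergence (fun _ => 1)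
      (fun n => ((mf I a _).mul (mf J b _)).aestronglyMeasurable) (integrable_const _)
      (fun n => ae_of_all _ fun ω => ?_) (ae_of_all _ fun ω => (lim I a ω).mul (lim J b ω))
    rw [Real.norm_eq_abs, abs_mul]
    exact mul_le_one₀ (bf I a _ ω) (abs_nonneg _) (bf J b _ ω)
  exact le_of_tendsto ((t2.sub ((t1 I a).mul (t1 J b))).abs) (Eventually.of_forall step)
end

end

section

section
variable {Ω : Type*} [MeasureSpace Ω] [IsProbabilityMeasure (ℙ : Measure Ω)]
    {X : ℕ × ℕ → Ω → ℝ} {r : ℕ × ℕ → ℕ × ℕ → ℝ}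

lemma field_law (h : IsStdGaussianField X r) (i : ℕ × ℕ) :
    Measure.map (X i) ℙ = gaussianReal 0 1 := by
  obtain ⟨hm, h1, hs, hc, hl⟩ := h
  have := hl {i} (fun _ => 1)
  simpa [h1] using this

lemma field_GField (h : IsStdGaussianField X r) : GField ℙ X r := by
  have hlaw := field_law h
  obtain ⟨hm, h1, hs, hc, hl⟩ := h
  have hmean : ∀ i, ∫ ω, X i ω = 0 := by
    intro i
    have := integral_map (μ := (ℙ : Measure Ω)) (φ := X i) (hm i).aemeasurable (f := fun x : ℝ => x) (by fun_prop)
    rw [hlaw] at this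
    rw [← this]; simp
  have hg : IsGaussianProcess X ℙ := by
    constructor
    intro s
    constructor
    refine isGaussian_of_map_eq_gaussianReal fun L => ?_
    classical
    refine ⟨0, _, Eq.trans ?_ (hl s (fun i => if h : i ∈ s then L (Pi.single ⟨i, h⟩ 1) else 0))⟩
    have mr : Measurable (fun ω => s.restrict (X · ω)) := measurable_pi_lambda _ fun i => hm i
    rw [Measure.map_map (by fun_prop) mr]
    congr 1
    funext ω
    simp only [Function.comp]
    have := LinearMap.pi_apply_eq_sum_univ (L : (s → ℝ) →ₗ[ℝ] ℝ) (s.restrict (X · ω))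
    simp only [ContinuousLinearMap.coe_coe] at this
    rw [this, ← Finset.sum_coe_sort s]
    refine Finset.sum_congr rfl fun i _ => ?_
    simp only [Finset.coe_mem, dif_pos, smul_eq_mul, Finset.restrict]
    rw [mul_comm]
    congr 2
    ext j
    simp [Pi.single_apply, eq_comm]
  refine ⟨hm, hg, hmean, fun i j => ?_, h1⟩
  have hL := fun k => (hg.hasGaussianLaw_eval k).memLp_two
  rw [covariance_eq_sub (hL i) (hL j), hmean, hmean, hc]
  simp

lemma field_Phi (h : IsStdGaussianField X r) (i : ℕ × ℕ) (x : ℝ) :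
    (ℙ : Measure Ω).real {ω | X i ω ≤ x} = Phi x := by
  have hlaw := field_law h i
  unfold Phi
  rw [← hlaw, Measure.map_apply (h.1 i) measurableSet_Iic]
  rfl
end

lemma Phi_compl (x : ℝ) : 1 - Phi x = (gaussianReal 0 1).real (Ioi x) := by
  unfold Phi
  have := probReal_compl_eq_one_sub (μ := gaussianReal 0 1) (measurableSet_Iic (a := x))
  rw [compl_Iic] at this
  rw [this]; rfl

lemma Phi_le_one (x : ℝ) : Phi x ≤ 1 := by
  have : 0 ≤ 1 - Phi x := by rw [Phi_compl]; exact measureReal_nonneg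
  linarith

lemma Phi_nonneg (x : ℝ) : 0 ≤ Phi x := ENNReal.toReal_nonneg

lemma Phi_tail_anti {x y : ℝ} (h : x ≤ y) : 1 - Phi y ≤ 1 - Phi x := by
  rw [Phi_compl, Phi_compl]
  exact measureReal_mono (Ioi_subset_Ioi h)

/-- constant in the Mills bound -/
def millsC : ℝ := (√(2 * Real.pi))⁻¹ * Real.exp (-(3 / 2))

lemma millsC_pos : 0 < millsC := by unfold millsC; positivity

lemma mills (u : ℝ) (hu : 0 ≤ u) :
    millsC * Real.exp (-(u ^ 2 / 2)) ≤ (1 + u) * (1 - Phi u) := by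
  set t := (1 + u)⁻¹ with ht
  have ht0 : 0 < t := by positivity
  have hut : (1 + u) * t = 1 := by rw [ht]; field_simp
  have h1 : 1 - Phi u = ∫ x in Ioi u, gaussianPDFReal 0 1 x := by
    rw [Phi_compl, measureReal_def, gaussianReal_apply_eq_integral _ one_ne_zero,
      ENNReal.toReal_ofReal (integral_nonneg fun x => gaussianPDFReal_nonneg _ _ _)]
  have h2 : ∫ x in Ioc u (u + t), gaussianPDFReal 0 1 x ≤ ∫ x in Ioi u, gaussianPDFReal 0 1 x :=
    setIntegral_mono_set (integrable_gaussianPDFReal 0 1).integrableOn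
      (ae_of_all _ fun x => gaussianPDFReal_nonneg _ _ _) (Ioc_subset_Ioi_self.eventuallyLE)
  have h3 : t * (millsC * Real.exp (-(u ^ 2 / 2))) ≤ ∫ x in Ioc u (u + t), gaussianPDFReal 0 1 x := by
    have : ∫ x in Ioc u (u + t), (millsC * Real.exp (-(u ^ 2 / 2))) =
        t * (millsC * Real.exp (-(u ^ 2 / 2))) := by
      rw [setIntegral_const]
      simp [measureReal_def, ht0.le]
    rw [← this]
    refine setIntegral_mono_on (integrableOn_const (by simp)) (integrable_gaussianPDFReal 0 1).integrableOn
      measurableSet_Ioc fun x hx => ?_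
    simp only [gaussianPDFReal, NNReal.coe_one, sub_zero, mul_one, millsC]
    rw [mul_assoc, ← Real.exp_add]
    gcongr
    obtain ⟨hx1, hx2⟩ := hx
    have ht1 : t ≤ 1 := by nlinarith
    nlinarith
  have h4 : (1 + u) * (t * (millsC * Real.exp (-(u ^ 2 / 2)))) ≤ (1 + u) * (1 - Phi u) := by
    rw [h1]; gcongr; exact h3.trans h2
  rw [← mul_assoc, hut, one_mul] at h4
  exact h4

end

section

lemma levels (u : ℕ × ℕ → ℕ × ℕ → ℝ) (hbdd : LambdaBounded u) :
    ∃ B K N0 : ℝ, 1 ≤ B ∧ 1 ≤ K ∧ 3 ≤ N0 ∧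
      (∀ n : ℕ × ℕ, ∀ i ∈ Rn n, (n.1 * n.2 : ℝ) * (1 - Phi (u n i)) ≤ B) ∧
      ∀ n : ℕ × ℕ, N0 ≤ (n.1 * n.2 : ℝ) → ∀ i ∈ Rn n, 0 ≤ u n i ∧
        Real.exp (-(u n i ^ 2 / 2)) ≤ K * √(Real.log (n.1 * n.2 : ℝ)) / (n.1 * n.2 : ℝ) := by
  obtain ⟨B0, hB0⟩ := hbdd
  set B := max B0 1 with hB
  have hB1 : 1 ≤ B := le_max_right _ _
  have hBB : ∀ n : ℕ × ℕ, ∀ i ∈ Rn n, (n.1 * n.2 : ℝ) * (1 - Phi (u n i)) ≤ B :=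
    fun n i hi => (hB0 n i hi).trans (le_max_left _ _)
  have hc := millsC_pos
  refine ⟨B, max 1 (3 * B / millsC), max 3 (B / millsC + 1), hB1, le_max_left _ _, le_max_left _ _,
    hBB, fun n hn i hi => ?_⟩
  set N : ℝ := (n.1 * n.2 : ℝ) with hN
  have hN3 : 3 ≤ N := (le_max_left _ _).trans hn
  have hNB : B / millsC + 1 ≤ N := (le_max_right _ _).trans hn
  have hb := hBB n i hi
  have hlog : 1 ≤ Real.log N := by
    rw [Real.le_log_iff_exp_le (by linarith)]
    have := Real.exp_one_lt_d9; linarith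
  have hs : 1 ≤ √(Real.log N) := by rwa [Real.one_le_sqrt]
  have hu : 0 ≤ u n i := by
    by_contra hneg
    push Not at hneg
    have h1 := mills 0 le_rfl
    have h2 := Phi_tail_anti hneg.le
    simp at h1
    have h3 : N * millsC ≤ B := by nlinarith
    rw [← le_div_iff₀ hc] at h3
    linarith
  refine ⟨hu, ?_⟩
  rw [le_div_iff₀ (by linarith)]
  rcases le_or_gt (2 * Real.log N) (u n i ^ 2) with h | h
  · have : Real.exp (-(u n i ^ 2 / 2)) ≤ N⁻¹ := by
      rw [← Real.exp_log (by linarith : 0 < N), ← Real.exp_neg]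
      apply Real.exp_le_exp.2
      linarith
    calc _ ≤ N⁻¹ * N := by gcongr
      _ = 1 * 1 := by field_simp
      _ ≤ _ := by gcongr; exact le_max_left _ _
  · have h1 := mills (u n i) hu
    have h2 : u n i ≤ 2 * √(Real.log N) := by
      have e := Real.sq_sqrt (by linarith : 0 ≤ Real.log N)
      nlinarith
    have h3 : (1 + u n i) ≤ 3 * √(Real.log N) := by linarith
    have h0 : 0 ≤ 1 - Phi (u n i) := by have := Phi_le_one (u n i); linarith
    have h4 : millsC * Real.exp (-(u n i ^ 2 / 2)) * N ≤ 3 * √(Real.log N) * B := by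
      calc _ ≤ (1 + u n i) * (1 - Phi (u n i)) * N := by gcongr
        _ = (1 + u n i) * (N * (1 - Phi (u n i))) := by ring
        _ ≤ _ := by gcongr
    calc _ ≤ 3 * B / millsC * √(Real.log N) := by
          rw [div_mul_eq_mul_div, le_div_iff₀ hc]; linarith
      _ ≤ _ := by gcongr; exact le_max_right _ _

lemma term_bound (K M N ρ a b : ℝ) (hK : 1 ≤ K) (hM : 1 ≤ M) (hMN : M ≤ N)
    (hN : 1 ≤ Real.log N) (hρ : 0 ≤ ρ)
    (ha : Real.exp (-(a ^ 2 / 2)) ≤ K * √(Real.log M) / M)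
    (hb : Real.exp (-(b ^ 2 / 2)) ≤ K * √(Real.log N) / N) :
    Real.exp (-((a ^ 2 + b ^ 2) / (2 * (1 + ρ)))) ≤
      K ^ 2 * Real.log N * (M * N) ^ (-(1 / (1 + ρ))) := by
  have hM0 : 0 < M := by linarith
  have hN0 : 0 < N := by linarith
  have hlog : √(Real.log M) ≤ √(Real.log N) := Real.sqrt_le_sqrt (Real.log_le_log hM0 hMN)
  have e1 : Real.exp (-((a ^ 2 + b ^ 2) / (2 * (1 + ρ)))) =
      (Real.exp (-(a ^ 2 / 2)) * Real.exp (-(b ^ 2 / 2))) ^ (1 / (1 + ρ)) := by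
    rw [← Real.exp_add, ← Real.exp_mul]
    congr 1
    field_simp; ring
  have e2 : Real.exp (-(a ^ 2 / 2)) * Real.exp (-(b ^ 2 / 2)) ≤ K ^ 2 * Real.log N / (M * N) := by
    calc _ ≤ (K * √(Real.log M) / M) * (K * √(Real.log N) / N) := by gcongr
      _ ≤ (K * √(Real.log N) / M) * (K * √(Real.log N) / N) := by gcongr
      _ = K ^ 2 * (√(Real.log N) * √(Real.log N)) / (M * N) := by field_simp
      _ = _ := by rw [Real.mul_self_sqrt (by linarith)]
  have hK2 : 1 ≤ K ^ 2 * Real.log N := by nlinarith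
  rw [e1]
  calc _ ≤ (K ^ 2 * Real.log N / (M * N)) ^ (1 / (1 + ρ)) := by
        apply Real.rpow_le_rpow (by positivity) e2 (by positivity)
    _ = (K ^ 2 * Real.log N) ^ (1 / (1 + ρ)) * (M * N) ^ (-(1 / (1 + ρ))) := by
        rw [Real.div_rpow (by positivity) (by positivity), Real.rpow_neg (by positivity)]; rfl
    _ ≤ _ := by
        gcongr
        calc _ ≤ (K ^ 2 * Real.log N) ^ (1 : ℝ) := by
              apply Real.rpow_le_rpow_of_exponent_le hK2
              rw [div_le_one (by positivity)]; linarith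
          _ = _ := Real.rpow_one _

lemma far_term (M N ρ C : ℝ) (hM : 1 ≤ M) (hMN : M ≤ N) (hρ : 0 ≤ ρ)
    (hC : ρ * Real.log N ≤ C) :
    (M * N) ^ (-(1 / (1 + ρ))) ≤ Real.exp (2 * C) / (M * N) := by
  have hM0 : 0 < M := by linarith
  have hN0 : 0 < N := by linarith
  have hMN1 : 1 ≤ M * N := by nlinarith
  calc (M * N) ^ (-(1 / (1 + ρ))) ≤ (M * N) ^ (-1 + ρ) := by
        apply Real.rpow_le_rpow_of_exponent_le hMN1
        have : 1 - ρ ≤ 1 / (1 + ρ) := by rw [le_div_iff₀ (by positivity)]; nlinarith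
        linarith
    _ = (M * N) ^ ρ / (M * N) := by
        rw [Real.rpow_add (by positivity), Real.rpow_neg_one]; field_simp
    _ ≤ _ := by
        gcongr
        calc (M * N) ^ ρ ≤ (N * N) ^ ρ := by gcongr
          _ = Real.exp (2 * (ρ * Real.log N)) := by
              rw [Real.rpow_def_of_pos (by positivity), Real.log_mul hN0.ne' hN0.ne']; congr 1; ring
          _ ≤ _ := by gcongr

lemma near_term (M N δ α : ℝ) (hM : 1 ≤ M) (hMN : M ≤ N) (hδ : 0 ≤ δ)
    (hα : α = (1 - δ) / (4 * (1 + δ))) :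
    M * (M * N) ^ (-(1 / (1 + δ))) ≤ N ^ (-(4 * α)) := by
  have hM0 : 0 < M := by linarith
  have hN0 : 0 < N := by linarith
  have hN1 : 1 ≤ N := by linarith
  have e : M * (M * N) ^ (-(1 / (1 + δ))) = M ^ (1 - 1 / (1 + δ)) * N ^ (-(1 / (1 + δ))) := by
    rw [Real.mul_rpow hM0.le hN0.le, sub_eq_add_neg, Real.rpow_add hM0, Real.rpow_one]; ring
  rw [e]
  calc _ ≤ N ^ (1 - 1 / (1 + δ)) * N ^ (-(1 / (1 + δ))) := by
        gcongr
        rw [sub_nonneg, div_le_one (by positivity)]; linarith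
    _ = N ^ (-(4 * α)) := by
        rw [← Real.rpow_add hN0]; congr 1; rw [hα]; field_simp; ring

end

section

lemma far_cov (r : ℕ × ℕ → ℕ × ℕ → ℝ) (ρ : ℕ × ℕ → ℝ) (ε : ℝ) (hε : 0 < ε)
    (hcov : CovAssump r ρ ε) (α : ℝ) (hα : 0 < α) :
    ∃ C : ℝ, 0 ≤ C ∧ ∀ N : ℝ, 1 < N → 2 ≤ N ^ α → ∀ i j : ℕ × ℕ, i ≠ j →
      (N ^ α < (adiff i j).1 ∨ N ^ α < (adiff i j).2) →
      |r i j| ≤ C * (Real.log N) ^ (-(1 + ε)) := by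
  obtain ⟨h1, _, C, c1, c2, c3⟩ := hcov
  refine ⟨|C| * α ^ (-(1 + ε)), by positivity, fun N hN hT i j hij hm => ?_⟩
  refine (h1 i j hij).le.trans ?_
  have hlogN : 0 < Real.log N := Real.log_pos hN
  have hlT : Real.log (N ^ α) = α * Real.log N := Real.log_rpow (by linarith) α
  have key : ∀ x : ℝ, N ^ α ≤ x → C * (Real.log x) ^ (-(1 + ε)) ≤
      |C| * α ^ (-(1 + ε)) * (Real.log N) ^ (-(1 + ε)) := by
    intro x hx
    have h2 : α * Real.log N ≤ Real.log x := by
      rw [← hlT]; exact Real.log_le_log (by linarith) hx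
    have h3 : (Real.log x) ^ (-(1 + ε)) ≤ (α * Real.log N) ^ (-(1 + ε)) :=
      Real.rpow_le_rpow_of_nonpos (by positivity) h2 (by linarith)
    rw [mul_assoc, ← Real.mul_rpow hα.le hlogN.le]
    have h4 : 0 ≤ (Real.log x) ^ (-(1 + ε)) := Real.rpow_nonneg (by nlinarith [mul_pos hα hlogN]) _
    calc _ ≤ |C| * (Real.log x) ^ (-(1 + ε)) := by gcongr; exact le_abs_self _
      _ ≤ _ := by gcongr
  generalize adiff i j = m at *
  obtain ⟨m1, m2⟩ := m
  simp only at hm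
  rcases Nat.eq_zero_or_pos m1 with h0 | h0
  · subst h0
    have hm2 : N ^ α < m2 := by
      rcases hm with h | h
      · simp at h; linarith
      · exact h
    have : (2 : ℝ) ≤ m2 := by linarith
    exact (c2 m2 (by exact_mod_cast this)).trans (key _ hm2.le)
  rcases Nat.eq_zero_or_pos m2 with h0' | h0'
  · subst h0'
    have hm2 : N ^ α < m1 := by
      rcases hm with h | h
      · exact h
      · simp at h; linarith
    have : (2 : ℝ) ≤ m1 := by linarith
    exact (c1 m1 (by exact_mod_cast this)).trans (key _ hm2.le)
  have a1 : (1 : ℝ) ≤ m1 := by exact_mod_cast h0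
  have a2 : (1 : ℝ) ≤ m2 := by exact_mod_cast h0'
  have hm2 : N ^ α ≤ (m1 : ℝ) * m2 := by
    rcases hm with h | h <;> nlinarith
  have : (2 : ℝ) ≤ (m1 : ℝ) * m2 := by linarith
  exact (c3 m1 m2 h0 h0' (by exact_mod_cast this)).trans (key _ hm2)

lemma near_count (T : ℝ) (hT : 1 ≤ T) (J : Finset (ℕ × ℕ)) (i : ℕ × ℕ) :
    ((J.filter fun j => ((adiff i j).1 : ℝ) ≤ T ∧ ((adiff i j).2 : ℝ) ≤ T).card : ℝ) ≤ 9 * T ^ 2 := by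
  set t := ⌊T⌋₊ with ht
  have htT : (t : ℝ) ≤ T := Nat.floor_le (by linarith)
  have hsub : (J.filter fun j => ((adiff i j).1 : ℝ) ≤ T ∧ ((adiff i j).2 : ℝ) ≤ T) ⊆
      Finset.Icc (i.1 - t) (i.1 + t) ×ˢ Finset.Icc (i.2 - t) (i.2 + t) := by
    intro j hj
    obtain ⟨_, h1, h2⟩ := Finset.mem_filter.1 hj
    have h1' := Nat.le_floor h1
    have h2' := Nat.le_floor h2
    simp only [adiff] at h1' h2'
    rw [Finset.mem_product, Finset.mem_Icc, Finset.mem_Icc]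
    omega
  have hc := Finset.card_le_card hsub
  rw [Finset.card_product, Nat.card_Icc, Nat.card_Icc] at hc
  have h3 : (i.1 + t + 1 - (i.1 - t)) * (i.2 + t + 1 - (i.2 - t)) ≤ (2 * t + 1) * (2 * t + 1) :=
    Nat.mul_le_mul (by omega) (by omega)
  have h4 : ((J.filter fun j => ((adiff i j).1 : ℝ) ≤ T ∧ ((adiff i j).2 : ℝ) ≤ T).card : ℝ) ≤
      (2 * t + 1) * (2 * t + 1) := by exact_mod_cast hc.trans h3
  nlinarith [Nat.cast_nonneg (α := ℝ) t]

lemma card_Rn (n : ℕ × ℕ) : ((Rn n).card : ℝ) = n.1 * n.2 := by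
  obtain ⟨a, b⟩ := n
  simp [Rn, ← Finset.Icc_product_Icc]

/-- the summand in the comparison inequality, off the diagonal -/
def tm (r : ℕ × ℕ → ℕ × ℕ → ℝ) (a b : ℕ × ℕ → ℝ) (i j : ℕ × ℕ) : ℝ :=
  if i = j then 0 else |r i j| * Real.exp (-((a i ^ 2 + b j ^ 2) / (2 * (1 + |r i j|))))

lemma tm_nonneg (r : ℕ × ℕ → ℕ × ℕ → ℝ) (a b : ℕ × ℕ → ℝ) (i j : ℕ × ℕ) : 0 ≤ tm r a b i j := by
  unfold tm; split_ifs <;> positivity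

lemma near_far (r : ℕ × ℕ → ℕ × ℕ → ℝ) (ρ : ℕ × ℕ → ℝ) (ε : ℝ) (hε : 0 < ε)
    (hcov : CovAssump r ρ ε) (δ : ℝ) (hδ0 : 0 ≤ δ) (hδ1 : δ < 1)
    (hδ : ∀ i j : ℕ × ℕ, i ≠ j → |r i j| ≤ δ)
    (u : ℕ × ℕ → ℕ × ℕ → ℝ) (K N0 : ℝ) (hK : 1 ≤ K) (hN0 : 3 ≤ N0)
    (hu : ∀ n : ℕ × ℕ, N0 ≤ (n.1 * n.2 : ℝ) → ∀ i ∈ Rn n, 0 ≤ u n i ∧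
        Real.exp (-(u n i ^ 2 / 2)) ≤ K * √(Real.log (n.1 * n.2 : ℝ)) / (n.1 * n.2 : ℝ)) :
    ∃ D N1 : ℝ, 0 ≤ D ∧ N0 ≤ N1 ∧ ∀ k l : ℕ × ℕ, N1 ≤ (k.1 * k.2 : ℝ) →
      (k.1 * k.2 : ℝ) ≤ (l.1 * l.2 : ℝ) → ∀ I ⊆ Rn k, ∀ J ⊆ Rn l,
      ∑ j ∈ J, ∑ i ∈ I, tm r (u k) (u l) i j ≤
        D * (Real.log (l.1 * l.2 : ℝ)) ^ (-ε) := by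
  obtain ⟨α, hα⟩ : ∃ α : ℝ, α = (1 - δ) / (4 * (1 + δ)) := ⟨_, rfl⟩
  have hα0 : 0 < α := by rw [hα]; apply div_pos <;> linarith
  obtain ⟨C, hC0, hC⟩ := far_cov r ρ ε hε hcov α hα0
  have ev1 : ∀ᶠ N : ℝ in atTop, 2 ≤ N ^ α := (tendsto_rpow_atTop hα0).eventually_ge_atTop 2
  have ev2 : ∀ᶠ N : ℝ in atTop, (Real.log N) ^ (1 + ε) ≤ N ^ (2 * α) := by
    have := (isLittleO_log_rpow_rpow_atTop (1 + ε) (by linarith : 0 < 2 * α)).bound one_pos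
    filter_upwards [this, eventually_ge_atTop 1] with N h hN
    rw [one_mul, Real.norm_eq_abs, Real.norm_eq_abs] at h
    exact (le_abs_self _).trans (h.trans (le_of_eq (abs_of_nonneg (by positivity))))
  obtain ⟨N2, hN2⟩ := eventually_atTop.1 (ev1.and ev2)
  refine ⟨K ^ 2 * C * Real.exp (2 * C) + 9 * K ^ 2, max N0 N2, by positivity, le_max_left _ _, ?_⟩
  intro k l hk hkl I hI J hJ
  set M : ℝ := (k.1 * k.2 : ℝ) with hM
  set N : ℝ := (l.1 * l.2 : ℝ) with hN
  have hM0 : N0 ≤ M := (le_max_left _ _).trans hk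
  have hMN0 : N0 ≤ N := hM0.trans hkl
  have hM1 : 1 ≤ M := by linarith
  have hN1 : 1 < N := by linarith
  obtain ⟨hT, hL⟩ := hN2 N ((le_max_right _ _).trans (hk.trans hkl))
  have hlog : 1 ≤ Real.log N := by
    rw [Real.le_log_iff_exp_le (by linarith)]
    have := Real.exp_one_lt_d9; linarith
  have hlog0 : 0 < Real.log N := by linarith
  have hMNp : 0 < M * N := by positivity
  -- pointwise bound
  set A : ℝ := K ^ 2 * Real.log N * (M * N) ^ (-(1 / (1 + δ))) with hA
  have hA0 : 0 ≤ A := by positivity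
  set Bf : ℝ := K ^ 2 * C * Real.exp (2 * C) * (Real.log N) ^ (-ε) / (M * N) with hBf
  have hBf0 : 0 ≤ Bf := by positivity
  have pt : ∀ j ∈ J, ∀ i ∈ I, tm r (u k) (u l) i j ≤
      (if ((adiff i j).1 : ℝ) ≤ N ^ α ∧ ((adiff i j).2 : ℝ) ≤ N ^ α then A else 0) + Bf := by
    intro j hj i hi
    unfold tm
    by_cases hij : i = j
    · rw [if_pos hij]; positivity
    rw [if_neg hij]
    have tb := term_bound K M N (|r i j|) (u k i) (u l j) hK hM1 hkl hlog (abs_nonneg _)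
      (hu k hM0 i (hI hi)).2 (hu l hMN0 j (hJ hj)).2
    split_ifs with hnear
    · have : |r i j| * Real.exp (-((u k i ^ 2 + u l j ^ 2) / (2 * (1 + |r i j|)))) ≤ 1 * A := by
        refine mul_le_mul ((hδ i j hij).trans hδ1.le) (tb.trans ?_) (Real.exp_nonneg _) zero_le_one
        rw [hA]
        refine mul_le_mul_of_nonneg_left ?_ (by positivity)
        apply Real.rpow_le_rpow_of_exponent_le (by nlinarith)
        apply neg_le_neg
        apply one_div_le_one_div_of_le (by positivity)
        linarith [hδ i j hij]
      linarith
    · have hfar : N ^ α < (adiff i j).1 ∨ N ^ α < (adiff i j).2 := by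
        rw [not_and_or, not_le, not_le] at hnear; exact hnear
      have hr := hC N hN1 hT i j hij hfar
      have e1 : (Real.log N) ^ (-(1 + ε)) * Real.log N = (Real.log N) ^ (-ε) := by
        rw [← Real.rpow_add_one hlog0.ne']; congr 1; ring
      have hrl : |r i j| * Real.log N ≤ C := by
        calc _ ≤ C * (Real.log N) ^ (-(1 + ε)) * Real.log N := by gcongr
          _ = C * (Real.log N) ^ (-ε) := by rw [mul_assoc, e1]
          _ ≤ C * 1 := by
            gcongr
            exact Real.rpow_le_one_of_one_le_of_nonpos hlog (by linarith)
          _ = C := mul_one C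
      have ft := far_term M N (|r i j|) C hM1 hkl (abs_nonneg _) hrl
      rw [zero_add]
      calc _ ≤ (C * (Real.log N) ^ (-(1 + ε))) * (K ^ 2 * Real.log N * (Real.exp (2 * C) / (M * N))) := by
            gcongr
            exact tb.trans (by gcongr)
        _ = K ^ 2 * C * Real.exp (2 * C) * ((Real.log N) ^ (-(1 + ε)) * Real.log N) / (M * N) := by ring
        _ = Bf := by rw [e1]
  have hIc : (I.card : ℝ) ≤ M := by
    rw [hM, ← card_Rn]; exact_mod_cast Finset.card_le_card hI
  have hJc : (J.card : ℝ) ≤ N := by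
    rw [hN, ← card_Rn]; exact_mod_cast Finset.card_le_card hJ
  have hnearsum : ∑ j ∈ J, ∑ i ∈ I,
      (if ((adiff i j).1 : ℝ) ≤ N ^ α ∧ ((adiff i j).2 : ℝ) ≤ N ^ α then A else 0) ≤
      M * (9 * (N ^ α) ^ 2 * A) := by
    rw [Finset.sum_comm]
    have : ∀ i ∈ I, ∑ j ∈ J, (if ((adiff i j).1 : ℝ) ≤ N ^ α ∧ ((adiff i j).2 : ℝ) ≤ N ^ α then A else 0)
        ≤ 9 * (N ^ α) ^ 2 * A := by
      intro i _
      rw [← Finset.sum_filter, Finset.sum_const, nsmul_eq_mul]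
      exact mul_le_mul_of_nonneg_right (near_count _ (by linarith) J i) hA0
    refine (Finset.sum_le_sum this).trans ?_
    rw [Finset.sum_const, nsmul_eq_mul]
    gcongr
  have hnear2 : M * (9 * (N ^ α) ^ 2 * A) ≤ 9 * K ^ 2 * (Real.log N) ^ (-ε) := by
    have nt := near_term M N δ α hM1 hkl hδ0 hα
    have e1 : (N ^ α) ^ 2 = N ^ (2 * α) := by
      rw [← Real.rpow_natCast, ← Real.rpow_mul (by linarith)]; congr 1; push_cast; ring
    have e2 : N ^ (2 * α) * N ^ (-(4 * α)) = (N ^ (2 * α))⁻¹ := by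
      rw [← Real.rpow_add (by linarith), ← Real.rpow_neg (by linarith)]; congr 1; ring
    have e3 : (Real.log N) ^ (-ε) * (Real.log N) ^ (1 + ε) = Real.log N := by
      rw [← Real.rpow_add hlog0]; simp
    have hNp : 0 < N ^ (2 * α) := by positivity
    calc M * (9 * (N ^ α) ^ 2 * A) = 9 * K ^ 2 * Real.log N * (N ^ (2 * α) *
          (M * (M * N) ^ (-(1 / (1 + δ))))) := by rw [hA, e1]; ring
      _ ≤ 9 * K ^ 2 * Real.log N * (N ^ (2 * α) * N ^ (-(4 * α))) := by gcongr
      _ = 9 * K ^ 2 * (Real.log N / N ^ (2 * α)) := by rw [e2]; ring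
      _ ≤ 9 * K ^ 2 * (Real.log N) ^ (-ε) := by
          gcongr
          rw [div_le_iff₀ hNp]
          calc Real.log N = (Real.log N) ^ (-ε) * (Real.log N) ^ (1 + ε) := e3.symm
            _ ≤ _ := by gcongr
  have hfarsum : ∑ j ∈ J, ∑ _i ∈ I, Bf ≤ K ^ 2 * C * Real.exp (2 * C) * (Real.log N) ^ (-ε) := by
    simp only [Finset.sum_const, nsmul_eq_mul]
    calc (J.card : ℝ) * (I.card * Bf) ≤ N * (M * Bf) := by gcongr
      _ = _ := by rw [hBf]; field_simp
  calc _ ≤ ∑ j ∈ J, ∑ i ∈ I,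
      ((if ((adiff i j).1 : ℝ) ≤ N ^ α ∧ ((adiff i j).2 : ℝ) ≤ N ^ α then A else 0) + Bf) :=
        Finset.sum_le_sum fun j hj => Finset.sum_le_sum fun i hi => pt j hj i hi
    _ ≤ _ := by
        simp_rw [Finset.sum_add_distrib]
        nlinarith

end

section

/-- shifted logarithm -/
def Lg (n : ℕ) : ℝ := 1 + Real.log n

lemma Lg_ge (n : ℕ) : 1 ≤ Lg n := by
  unfold Lg
  have := Real.log_natCast_nonneg n
  linarith

/-- ratio of min and max -/
def rat (a b : ℕ) : ℝ := (min a b : ℕ) / (max a b : ℕ)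

lemma rat_comm (a b : ℕ) : rat a b = rat b a := by unfold rat; rw [min_comm, max_comm]

lemma rat_nonneg (a b : ℕ) : 0 ≤ rat a b := by unfold rat; positivity

lemma card_inter_Rn (k l : ℕ × ℕ) :
    ((Rn k ∩ Rn l).card : ℝ) = (min k.1 l.1 : ℕ) * (min k.2 l.2 : ℕ) := by
  have : Rn k ∩ Rn l = Rn (min k.1 l.1, min k.2 l.2) := by
    ext ⟨a, b⟩
    simp only [Rn, Finset.mem_inter, Finset.mem_Icc, Prod.le_def, le_min_iff]
    tauto
  rw [this, card_Rn]

lemma ov_le (k l : ℕ × ℕ) (h1 : 1 ≤ k.1) (h2 : 1 ≤ k.2) (h3 : 1 ≤ l.1) (h4 : 1 ≤ l.2)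
    (hkl : (k.1 * k.2 : ℝ) ≤ (l.1 * l.2 : ℝ)) :
    ((Rn k ∩ Rn l).card : ℝ) / (l.1 * l.2 : ℝ) ≤ √(rat k.1 l.1) * √(rat k.2 l.2) := by
  rw [card_inter_Rn, ← Real.sqrt_mul (rat_nonneg _ _)]
  apply Real.le_sqrt_of_sq_le
  unfold rat
  obtain ⟨a, b⟩ := k
  obtain ⟨c, d⟩ := l
  simp only at *
  have e1 : ((min a c : ℕ) : ℝ) * (max a c : ℕ) = a * c := by exact_mod_cast min_mul_max a c
  have e2 : ((min b d : ℕ) : ℝ) * (max b d : ℕ) = b * d := by exact_mod_cast min_mul_max b d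
  have p1 : (0 : ℝ) < (min a c : ℕ) := by exact_mod_cast (lt_min h1 h3)
  have p2 : (0 : ℝ) < (min b d : ℕ) := by exact_mod_cast (lt_min h2 h4)
  have p3 : (0 : ℝ) < (max a c : ℕ) := by exact_mod_cast (lt_max_of_lt_left h1)
  have p4 : (0 : ℝ) < (max b d : ℕ) := by exact_mod_cast (lt_max_of_lt_left h2)
  have q3 : (0 : ℝ) < c := by exact_mod_cast h3
  have q4 : (0 : ℝ) < d := by exact_mod_cast h4
  have q1 : (0 : ℝ) < a := by exact_mod_cast h1
  have q2 : (0 : ℝ) < b := by exact_mod_cast h2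
  generalize ((min a c : ℕ) : ℝ) = x at *
  generalize ((min b d : ℕ) : ℝ) = y at *
  generalize ((max a c : ℕ) : ℝ) = z at *
  generalize ((max b d : ℕ) : ℝ) = w at *
  rw [div_mul_div_comm, div_pow, div_le_div_iff₀ (by positivity) (by positivity)]
  have h5 : (x * y) * (z * w) ≤ (c * d) ^ 2 := by
    calc (x * y) * (z * w) = (x * z) * (y * w) := by ring
      _ = (a * b) * (c * d) := by rw [e1, e2]; ring
      _ ≤ (c * d) * (c * d) := by gcongr
      _ = _ := by ring
  calc (x * y) ^ 2 * (z * w) = (x * y) * ((x * y) * (z * w)) := by ring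
    _ ≤ (x * y) * (c * d) ^ 2 := by gcongr

lemma eta_bound (ε γ : ℝ) (hε : 0 < ε) (hγ0 : 0 < γ) (hγ : γ ≤ ε / 2) (l : ℕ × ℕ)
    (hN : 3 ≤ (l.1 * l.2 : ℝ)) :
    (Real.log (l.1 * l.2 : ℝ)) ^ (-ε) ≤ (9 / 4 : ℝ) ^ (ε / 2) * (Lg l.1 * Lg l.2) ^ (-γ) := by
  obtain ⟨a, b⟩ := l
  simp only at *
  have ha : (a : ℝ) ≠ 0 := by rintro h; rw [h] at hN; norm_num at hN
  have hb : (b : ℝ) ≠ 0 := by rintro h; rw [h] at hN; norm_num at hN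
  have hlog : 1 ≤ Real.log (a * b : ℝ) := by
    rw [Real.le_log_iff_exp_le (by linarith)]
    have := Real.exp_one_lt_d9; linarith
  have e : Real.log (a * b : ℝ) = Real.log a + Real.log b := Real.log_mul ha hb
  have h1 := Lg_ge a
  have h2 := Lg_ge b
  have h3 : 1 ≤ Lg a * Lg b := by nlinarith
  have h4 : Lg a * Lg b ≤ 9 / 4 * (Real.log (a * b : ℝ)) ^ 2 := by
    have : Lg a + Lg b ≤ 3 * Real.log (a * b : ℝ) := by unfold Lg; linarith
    nlinarith [sq_nonneg (Lg a - Lg b)]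
  have h5 : 0 < Real.log (a * b : ℝ) := by linarith
  calc (Real.log (a * b : ℝ)) ^ (-ε) = ((Real.log (a * b : ℝ)) ^ 2) ^ (-(ε / 2)) := by
        rw [← Real.rpow_natCast, ← Real.rpow_mul h5.le]; congr 1; push_cast; ring
    _ ≤ ((Lg a * Lg b) / (9 / 4)) ^ (-(ε / 2)) := by
        apply Real.rpow_le_rpow_of_nonpos (by positivity) (by linarith) (by linarith)
    _ = (9 / 4 : ℝ) ^ (ε / 2) * (Lg a * Lg b) ^ (-(ε / 2)) := by
        rw [Real.div_rpow (by positivity) (by positivity), Real.rpow_neg (by norm_num : (0:ℝ) ≤ 9 / 4)]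
        field_simp
    _ ≤ _ := by
        gcongr

section
variable {Ω : Type*} [MeasureSpace Ω] [IsProbabilityMeasure (ℙ : Measure Ω)]
    {X : ℕ × ℕ → Ω → ℝ} {r : ℕ × ℕ → ℕ × ℕ → ℝ}

lemma meas_noExc (h : IsStdGaussianField X r) (v : ℕ × ℕ → ℝ) (I : Finset (ℕ × ℕ)) :
    MeasurableSet (noExc X v I) :=
  Finset.measurableSet_biInter _ fun i _ => measurableSet_le (h.1 i) measurable_const

lemma cmp_tm (h : IsStdGaussianField X r) (δ : ℝ) (hδ1 : δ < 1)
    (hδ : ∀ i j : ℕ × ℕ, i ≠ j → |r i j| ≤ δ) (a b : ℕ × ℕ → ℝ) (I J : Finset (ℕ × ℕ))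
    (ha : ∀ i ∈ I, 0 ≤ a i) (hb : ∀ j ∈ J, 0 ≤ b j) (hIJ : ∀ i ∈ I, ∀ j ∈ J, i ≠ j) :
    |(ℙ : Measure Ω).real (noExc X a I ∩ noExc X b J) -
        (ℙ : Measure Ω).real (noExc X a I) * (ℙ : Measure Ω).real (noExc X b J)| ≤
      cK δ * ∑ j ∈ J, ∑ i ∈ I, tm r a b i j := by
  refine (cov_compare (field_GField h) I J a b ha hb δ hδ1
    (fun i hi j hj => hδ i j (hIJ i hi j hj))).trans (le_of_eq ?_)
  congr 1
  refine Finset.sum_congr rfl fun j hj => Finset.sum_congr rfl fun i hi => ?_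
  rw [tm, if_neg (hIJ i hi j hj)]

lemma noExc_insert (v : ℕ × ℕ → ℝ) (i : ℕ × ℕ) (s : Finset (ℕ × ℕ)) :
    noExc X v (insert i s) = noExc X v {i} ∩ noExc X v s := by
  unfold noExc
  rw [Finset.set_biInter_insert]; simp

lemma noExc_single (h : IsStdGaussianField X r) (v : ℕ × ℕ → ℝ) (i : ℕ × ℕ) :
    (ℙ : Measure Ω).real (noExc X v {i}) = Phi (v i) := by
  rw [← field_Phi h i]; unfold noExc; simp

lemma mean_tm (h : IsStdGaussianField X r) (δ : ℝ) (hδ1 : δ < 1)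
    (hδ : ∀ i j : ℕ × ℕ, i ≠ j → |r i j| ≤ δ) (a : ℕ × ℕ → ℝ) (s : Finset (ℕ × ℕ))
    (ha : ∀ i ∈ s, 0 ≤ a i) :
    |(ℙ : Measure Ω).real (noExc X a s) - ∏ i ∈ s, Phi (a i)| ≤
      cK δ * ∑ j ∈ s, ∑ i ∈ s, tm r a a i j := by
  induction s using Finset.induction_on with
  | empty => simp [noExc]
  | insert i s hi ih =>
    have h1 := cmp_tm h δ hδ1 hδ a a {i} s (fun k hk => ha k (by simp at hk; simp [hk]))
      (fun k hk => ha k (by simp [hk])) (fun k hk j hj => by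
        simp at hk; subst hk; rintro rfl; exact hi hj)
    have h2 := ih fun k hk => ha k (by simp [hk])
    rw [noExc_insert, Finset.prod_insert hi]
    rw [noExc_single h] at h1
    have hP1 := Phi_le_one (a i)
    have hP0 := Phi_nonneg (a i)
    have e : (ℙ : Measure Ω).real (noExc X a {i} ∩ noExc X a s) - Phi (a i) * ∏ j ∈ s, Phi (a j) =
        ((ℙ : Measure Ω).real (noExc X a {i} ∩ noExc X a s) - Phi (a i) * (ℙ : Measure Ω).real (noExc X a s))
        + Phi (a i) * ((ℙ : Measure Ω).real (noExc X a s) - ∏ j ∈ s, Phi (a j)) := by ring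
    rw [e]
    refine (abs_add_le _ _).trans ?_
    rw [abs_mul, abs_of_nonneg hP0]
    have h3 : Phi (a i) * |(ℙ : Measure Ω).real (noExc X a s) - ∏ j ∈ s, Phi (a j)| ≤
        cK δ * ∑ j ∈ s, ∑ i ∈ s, tm r a a i j :=
      (mul_le_of_le_one_left (abs_nonneg _) hP1).trans h2
    have h4 : ∑ j ∈ s, ∑ i ∈ {i}, tm r a a i j + ∑ j ∈ s, ∑ i ∈ s, tm r a a i j ≤
        ∑ j ∈ insert i s, ∑ i ∈ insert i s, tm r a a i j := by
      rw [Finset.sum_insert hi]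
      have : ∀ j, ∑ k ∈ insert i s, tm r a a k j = tm r a a i j + ∑ k ∈ s, tm r a a k j :=
        fun j => Finset.sum_insert hi
      simp_rw [this, Finset.sum_add_distrib, Finset.sum_singleton]
      have : 0 ≤ ∑ k ∈ s, tm r a a k i := Finset.sum_nonneg fun _ _ => tm_nonneg _ _ _ _ _
      have := tm_nonneg r a a i i
      linarith
    have := mul_le_mul_of_nonneg_left h4 (cK_nonneg δ)
    linarith [mul_add (cK δ) (∑ j ∈ s, ∑ i ∈ {i}, tm r a a i j) (∑ j ∈ s, ∑ i ∈ s, tm r a a i j)]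

/-- Consolidated estimates. -/
lemma estimates (h : IsStdGaussianField X r) (ρ : ℕ × ℕ → ℝ) (ε : ℝ) (hε : 0 < ε)
    (hcov : CovAssump r ρ ε) (u : ℕ × ℕ → ℕ × ℕ → ℝ) (hbdd : LambdaBounded u) :
    ∃ B D N1 : ℝ, 1 ≤ B ∧ 0 ≤ D ∧ 3 ≤ N1 ∧
      (∀ n : ℕ × ℕ, ∀ i ∈ Rn n, (n.1 * n.2 : ℝ) * (1 - Phi (u n i)) ≤ B) ∧
      (∀ k l : ℕ × ℕ, N1 ≤ (k.1 * k.2 : ℝ) → (k.1 * k.2 : ℝ) ≤ (l.1 * l.2 : ℝ) →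
        ∀ I ⊆ Rn k, ∀ J ⊆ Rn l, (∀ i ∈ I, ∀ j ∈ J, i ≠ j) →
        |(ℙ : Measure Ω).real (noExc X (u k) I ∩ noExc X (u l) J) -
          (ℙ : Measure Ω).real (noExc X (u k) I) * (ℙ : Measure Ω).real (noExc X (u l) J)| ≤
          D * (Real.log (l.1 * l.2 : ℝ)) ^ (-ε)) ∧
      (∀ n : ℕ × ℕ, N1 ≤ (n.1 * n.2 : ℝ) →
        |(ℙ : Measure Ω).real (noExc X (u n) (Rn n)) - ∏ i ∈ Rn n, Phi (u n i)| ≤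
          D * (Real.log (n.1 * n.2 : ℝ)) ^ (-ε)) := by
  obtain ⟨B, K, N0, hB, hK, hN0, hBB, hu⟩ := levels u hbdd
  obtain ⟨δ, hδ0, hδ1, hδ⟩ : ∃ δ : ℝ, 0 ≤ δ ∧ δ < 1 ∧ ∀ i j : ℕ × ℕ, i ≠ j → |r i j| ≤ δ := by
    obtain ⟨h1, ⟨δ, hδ1, hδ⟩, _⟩ := hcov
    refine ⟨max δ 0, le_max_right _ _, max_lt hδ1 one_pos, fun i j hij => ?_⟩
    have hne : adiff i j ≠ (0, 0) := by
      intro h0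
      apply hij
      simp only [adiff, Prod.mk.injEq] at h0
      ext <;> omega
    exact (h1 i j hij).le.trans ((le_abs_self _).trans ((hδ _ hne).trans (le_max_left _ _)))
  obtain ⟨D, N1, hD, hN1, hnf⟩ := near_far r ρ ε hε hcov δ hδ0 hδ1 hδ u K N0 hK hN0 hu
  have hc := cK_nonneg δ
  refine ⟨B, cK δ * D, N1, hB, by positivity, hN0.trans hN1, hBB, ?_, ?_⟩
  · intro k l hk hkl I hI J hJ hIJ
    refine (cmp_tm h δ hδ1 hδ (u k) (u l) I J (fun i hi => (hu k (hN1.trans hk) i (hI hi)).1)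
      (fun j hj => (hu l (hN1.trans (hk.trans hkl)) j (hJ hj)).1) hIJ).trans ?_
    rw [mul_assoc]
    exact mul_le_mul_of_nonneg_left (hnf k l hk hkl I hI J hJ) hc
  · intro n hn
    refine (mean_tm h δ hδ1 hδ (u n) (Rn n) (fun i hi => (hu n (hN1.trans hn) i hi).1)).trans ?_
    rw [mul_assoc]
    exact mul_le_mul_of_nonneg_left (hnf n n hn le_rfl _ subset_rfl _ subset_rfl) hc
end

end

section

variable {Ω : Type*} [MeasureSpace Ω] [IsProbabilityMeasure (ℙ : Measure Ω)]
  {X : ℕ × ℕ → Ω → ℝ} {r : ℕ × ℕ → ℕ × ℕ → ℝ}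

lemma noExc_drop (h : IsStdGaussianField X r) (v : ℕ × ℕ → ℝ) (J K : Finset (ℕ × ℕ)) :
    (ℙ : Measure Ω).real (noExc X v J) ≤
      (ℙ : Measure Ω).real (noExc X v (J ∪ K)) + ∑ j ∈ K, (1 - Phi (v j)) := by
  have hs : noExc X v J ⊆ noExc X v (J ∪ K) ∪ ⋃ j ∈ K, {ω | X j ω ≤ v j}ᶜ := by
    intro ω hω
    by_cases hK : ∀ j ∈ K, X j ω ≤ v j
    · left
      simp only [noExc, mem_iInter, mem_setOf_eq, Finset.mem_union] at hω ⊢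
      rintro i (hi | hi)
      · exact hω i hi
      · exact hK i hi
    · right
      push Not at hK
      obtain ⟨j, hj, hj2⟩ := hK
      simp only [mem_iUnion, mem_compl_iff, mem_setOf_eq, not_le]
      exact ⟨j, hj, hj2⟩
  refine (measureReal_mono hs).trans ((measureReal_union_le _ _).trans ?_)
  gcongr
  refine (measureReal_biUnion_finset_le _ _).trans (Finset.sum_le_sum fun j _ => ?_)
  rw [probReal_compl_eq_one_sub (measurableSet_le (h.1 j) measurable_const), field_Phi h j]

lemma cov_swap (A L L' : Set Ω) (hA : MeasurableSet A) (hL : MeasurableSet L) (hLL : L ⊆ L') (e d : ℝ)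
    (he : (ℙ : Measure Ω).real L' ≤ (ℙ : Measure Ω).real L + e)
    (hd : |(ℙ : Measure Ω).real (A ∩ L') - (ℙ : Measure Ω).real A * (ℙ : Measure Ω).real L'| ≤ d) :
    |(ℙ : Measure Ω).real (A ∩ L) - (ℙ : Measure Ω).real A * (ℙ : Measure Ω).real L| ≤ e + d := by
  have h1 : (ℙ : Measure Ω).real (A ∩ L) ≤ (ℙ : Measure Ω).real (A ∩ L') :=
    measureReal_mono (inter_subset_inter_right _ hLL)
  have h3 : (ℙ : Measure Ω).real L ≤ (ℙ : Measure Ω).real L' := measureReal_mono hLL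
  have h2 : (ℙ : Measure Ω).real (A ∩ L') ≤ (ℙ : Measure Ω).real (A ∩ L) + (ℙ : Measure Ω).real (L' \ L) := by
    refine (measureReal_mono (?_ : A ∩ L' ⊆ (A ∩ L) ∪ (L' \ L))).trans (measureReal_union_le _ _)
    rintro x ⟨hx, hx'⟩
    by_cases hxl : x ∈ L
    · left; exact ⟨hx, hxl⟩
    · right; exact ⟨hx', hxl⟩
  have h4 : (ℙ : Measure Ω).real (L' \ L) = (ℙ : Measure Ω).real L' - (ℙ : Measure Ω).real L :=
    measureReal_diff hLL hL
  have h5 : (ℙ : Measure Ω).real A ≤ 1 := measureReal_le_one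
  have h6 : 0 ≤ (ℙ : Measure Ω).real A := measureReal_nonneg
  rw [abs_le] at hd ⊢
  constructor <;> nlinarith

lemma cov_le_one (A L : Set Ω) :
    |(ℙ : Measure Ω).real (A ∩ L) - (ℙ : Measure Ω).real A * (ℙ : Measure Ω).real L| ≤ 1 := by
  have h1 : (ℙ : Measure Ω).real A ≤ 1 := measureReal_le_one
  have h2 : 0 ≤ (ℙ : Measure Ω).real A := measureReal_nonneg
  have h3 : (ℙ : Measure Ω).real L ≤ 1 := measureReal_le_one
  have h4 : 0 ≤ (ℙ : Measure Ω).real L := measureReal_nonneg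
  have h5 : (ℙ : Measure Ω).real (A ∩ L) ≤ 1 := measureReal_le_one
  have h6 : 0 ≤ (ℙ : Measure Ω).real (A ∩ L) := measureReal_nonneg
  rw [abs_le]
  constructor <;> nlinarith

lemma cov_bound (h : IsStdGaussianField X r) (ρ : ℕ × ℕ → ℝ) (ε : ℝ) (hε : 0 < ε)
    (hcov : CovAssump r ρ ε) (u : ℕ × ℕ → ℕ × ℕ → ℝ) (hbdd : LambdaBounded u) :
    ∃ D γ : ℝ, 0 ≤ D ∧ 0 < γ ∧ γ ≤ 1 / 2 ∧ ∀ k l : ℕ × ℕ, 1 ≤ k.1 → 1 ≤ k.2 → 1 ≤ l.1 → 1 ≤ l.2 →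
      |(ℙ : Measure Ω).real (noExc X (u k) (Rn k) ∩ noExc X (u l) (Rn l)) -
          (ℙ : Measure Ω).real (noExc X (u k) (Rn k)) * (ℙ : Measure Ω).real (noExc X (u l) (Rn l))| ≤
        D * (√(rat k.1 l.1) * √(rat k.2 l.2) + (Lg k.1 * Lg k.2) ^ (-γ) + (Lg l.1 * Lg l.2) ^ (-γ)) := by
  obtain ⟨B, D, N1, hB, hD, hN1, hBB, hc, -⟩ := estimates h ρ ε hε hcov u hbdd
  set γ := min ε 1 / 2 with hγdef
  have hγ0 : 0 < γ := by positivity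
  have hγ1 : γ ≤ 1 / 2 := by have := min_le_right ε 1; linarith
  have hγε : γ ≤ ε / 2 := by have := min_le_left ε 1; linarith
  set E := (9 / 4 : ℝ) ^ (ε / 2) with hE
  have hE0 : 0 ≤ E := by positivity
  set F := ((1 + Real.log N1) ^ 2) ^ γ with hF
  have hF0 : 0 ≤ F := by positivity
  refine ⟨B + D * E + F, γ, by positivity, hγ0, hγ1, ?_⟩
  have key : ∀ k l : ℕ × ℕ, 1 ≤ k.1 → 1 ≤ k.2 → 1 ≤ l.1 → 1 ≤ l.2 → (k.1 * k.2 : ℝ) ≤ (l.1 * l.2 : ℝ) →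
      |(ℙ : Measure Ω).real (noExc X (u k) (Rn k) ∩ noExc X (u l) (Rn l)) -
          (ℙ : Measure Ω).real (noExc X (u k) (Rn k)) * (ℙ : Measure Ω).real (noExc X (u l) (Rn l))| ≤
        (B + D * E + F) * (√(rat k.1 l.1) * √(rat k.2 l.2) + (Lg k.1 * Lg k.2) ^ (-γ) + (Lg l.1 * Lg l.2) ^ (-γ)) := by
    intro k l h1 h2 h3 h4 hkl
    have g1 := Lg_ge k.1
    have g2 := Lg_ge k.2
    have g3 := Lg_ge l.1
    have g4 := Lg_ge l.2
    have q1 : 0 ≤ √(rat k.1 l.1) * √(rat k.2 l.2) := by positivity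
    have q2 : 0 ≤ (Lg k.1 * Lg k.2) ^ (-γ) := by positivity
    have q3 : 0 ≤ (Lg l.1 * Lg l.2) ^ (-γ) := by positivity
    have hl0 : (0 : ℝ) < l.1 * l.2 := by
      have : (1:ℝ) ≤ l.1 := by exact_mod_cast h3
      have : (1:ℝ) ≤ l.2 := by exact_mod_cast h4
      positivity
    by_cases hN : N1 ≤ (k.1 * k.2 : ℝ)
    · have hd := hc k l hN hkl (Rn k) subset_rfl (Rn l \ Rn k) Finset.sdiff_subset
        (fun i hi j hj hij => (Finset.mem_sdiff.1 hj).2 (hij ▸ hi))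
      have hdrop := noExc_drop h (u l) (Rn l \ Rn k) (Rn k ∩ Rn l)
      have hun : (Rn l \ Rn k) ∪ (Rn k ∩ Rn l) = Rn l := by
        ext x; simp only [Finset.mem_union, Finset.mem_sdiff, Finset.mem_inter]; tauto
      rw [hun] at hdrop
      have hsub : noExc X (u l) (Rn l) ⊆ noExc X (u l) (Rn l \ Rn k) := by
        intro ω hω
        simp only [noExc, mem_iInter, mem_setOf_eq] at hω ⊢
        exact fun i hi => hω i (Finset.sdiff_subset hi)
      refine (cov_swap _ _ _ (meas_noExc h _ _) (meas_noExc h _ _) hsub _ _ hdrop hd).trans ?_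
      have e1 : ∑ j ∈ Rn k ∩ Rn l, (1 - Phi (u l j)) ≤ B * (√(rat k.1 l.1) * √(rat k.2 l.2)) := by
        calc ∑ j ∈ Rn k ∩ Rn l, (1 - Phi (u l j)) ≤ ∑ j ∈ Rn k ∩ Rn l, B / (l.1 * l.2 : ℝ) := by
              apply Finset.sum_le_sum
              intro j hj
              rw [le_div_iff₀ hl0, mul_comm]
              exact hBB l j (Finset.mem_inter.1 hj).2
          _ = B * (((Rn k ∩ Rn l).card : ℝ) / (l.1 * l.2 : ℝ)) := by
              rw [Finset.sum_const, nsmul_eq_mul]; ring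
          _ ≤ _ := by gcongr; exact ov_le k l h1 h2 h3 h4 hkl
      have e2 : D * (Real.log (l.1 * l.2 : ℝ)) ^ (-ε) ≤ D * (E * (Lg l.1 * Lg l.2) ^ (-γ)) := by
        gcongr
        exact eta_bound ε γ hε hγ0 hγε l (by linarith)
      calc _ ≤ B * (√(rat k.1 l.1) * √(rat k.2 l.2)) + D * (E * (Lg l.1 * Lg l.2) ^ (-γ)) := add_le_add e1 e2
        _ ≤ _ := by
          have hDE : 0 ≤ D * E := by positivity
          nlinarith [mul_nonneg hDE q1, mul_nonneg hDE q2, mul_nonneg hF0 q1, mul_nonneg hF0 q2, mul_nonneg hF0 q3,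
            mul_nonneg (zero_le_one.trans hB) q2, mul_nonneg (zero_le_one.trans hB) q3]
    · push Not at hN
      refine (cov_le_one _ _).trans ?_
      have hlk : Lg k.1 * Lg k.2 ≤ (1 + Real.log N1) ^ 2 := by
        have a1 : (1:ℝ) ≤ k.1 := by exact_mod_cast h1
        have a2 : (1:ℝ) ≤ k.2 := by exact_mod_cast h2
        have b1 : (k.1 : ℝ) ≤ N1 := by nlinarith
        have b2 : (k.2 : ℝ) ≤ N1 := by nlinarith
        have c1 : Lg k.1 ≤ 1 + Real.log N1 := by
          unfold Lg; have := Real.log_le_log (by linarith) b1; linarith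
        have c2 : Lg k.2 ≤ 1 + Real.log N1 := by
          unfold Lg; have := Real.log_le_log (by linarith) b2; linarith
        nlinarith
      have hpos : 0 < Lg k.1 * Lg k.2 := by positivity
      have e3 : 1 ≤ F * (Lg k.1 * Lg k.2) ^ (-γ) := by
        rw [Real.rpow_neg hpos.le, ← div_eq_mul_inv, one_le_div (by positivity)]
        exact Real.rpow_le_rpow hpos.le hlk hγ0.le
      have hDE : 0 ≤ B + D * E := by positivity
      nlinarith [mul_nonneg hDE q1, mul_nonneg hDE q2, mul_nonneg hDE q3, mul_nonneg hF0 q1, mul_nonneg hF0 q3]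
  intro k l h1 h2 h3 h4
  rcases le_total (k.1 * k.2 : ℝ) (l.1 * l.2 : ℝ) with hkl | hkl
  · exact key k l h1 h2 h3 h4 hkl
  · have := key l k h3 h4 h1 h2 hkl
    rw [inter_comm, mul_comm ((ℙ : Measure Ω).real (noExc X (u l) (Rn l))), rat_comm l.1, rat_comm l.2] at this
    refine this.trans (le_of_eq ?_)
    ring

end

section

lemma tendsto_c1 : Tendsto (fun n : ℕ × ℕ => n.1) atTop atTop := by
  rw [← prod_atTop_atTop_eq]; exact tendsto_fst

lemma tendsto_c2 : Tendsto (fun n : ℕ × ℕ => n.2) atTop atTop := by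
  rw [← prod_atTop_atTop_eq]; exact tendsto_snd

lemma tendsto_area : Tendsto (fun n : ℕ × ℕ => (n.1 * n.2 : ℝ)) atTop atTop :=
  (tendsto_natCast_atTop_atTop.comp tendsto_c1).atTop_mul_atTop₀
    (tendsto_natCast_atTop_atTop.comp tendsto_c2)

lemma prod_bounds (s : Finset (ℕ × ℕ)) (p : ℕ × ℕ → ℝ) (d : ℝ) (hd : d < 1)
    (h0 : ∀ i ∈ s, p i ≤ 1) (h : ∀ i ∈ s, 1 - p i ≤ d) :
    ∏ i ∈ s, p i ≤ Real.exp (-∑ i ∈ s, (1 - p i)) ∧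
    Real.exp (-((1 - d)⁻¹ * ∑ i ∈ s, (1 - p i))) ≤ ∏ i ∈ s, p i := by
  constructor
  · rw [← Finset.sum_neg_distrib, Real.exp_sum]
    apply Finset.prod_le_prod
    · intro i hi; have := h i hi; linarith
    · intro i hi
      have := Real.add_one_le_exp (-(1 - p i))
      linarith
  · rw [Finset.mul_sum, ← Finset.sum_neg_distrib, Real.exp_sum]
    apply Finset.prod_le_prod
    · intro i hi; positivity
    · intro i hi
      have h1 := h i hi
      have h2 := h0 i hi
      have hp : 0 < p i := by linarith
      have h3 := Real.one_sub_inv_le_log_of_pos hp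
      rw [← Real.le_log_iff_exp_le hp]
      refine le_trans ?_ h3
      have h4 : (p i)⁻¹ ≤ (1 - d)⁻¹ := by
        apply inv_anti₀ <;> linarith
      have h5 : 1 - (p i)⁻¹ = -((p i)⁻¹ * (1 - p i)) := by field_simp; ring
      rw [h5]
      nlinarith

variable {Ω : Type*} [MeasureSpace Ω] [IsProbabilityMeasure (ℙ : Measure Ω)]
  {X : ℕ × ℕ → Ω → ℝ} {r : ℕ × ℕ → ℕ × ℕ → ℝ}

lemma mean_tendsto (h : IsStdGaussianField X r) (ρ : ℕ × ℕ → ℝ) (ε : ℝ) (hε : 0 < ε)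
    (hcov : CovAssump r ρ ε) (u : ℕ × ℕ → ℕ × ℕ → ℝ) (hbdd : LambdaBounded u) (τ : ℝ)
    (hsum : Tendsto (fun n : ℕ × ℕ => ∑ i ∈ Rn n, (1 - Phi (u n i))) atTop (nhds τ)) :
    Tendsto (fun n : ℕ × ℕ => (ℙ : Measure Ω).real (noExc X (u n) (Rn n))) atTop
      (nhds (Real.exp (-τ))) := by
  obtain ⟨B, D, N1, hB, hD, hN1, hBB, -, hm⟩ := estimates h ρ ε hε hcov u hbdd
  have hprod : Tendsto (fun n : ℕ × ℕ => ∏ i ∈ Rn n, Phi (u n i)) atTop (nhds (Real.exp (-τ))) := by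
    have hd : Tendsto (fun n : ℕ × ℕ => B / (n.1 * n.2 : ℝ)) atTop (nhds 0) :=
      tendsto_const_nhds.div_atTop tendsto_area
    have lo : Tendsto (fun n : ℕ × ℕ => Real.exp (-((1 - B / (n.1 * n.2 : ℝ))⁻¹ * ∑ i ∈ Rn n, (1 - Phi (u n i)))))
        atTop (nhds (Real.exp (-τ))) := by
      have h1 : Tendsto (fun n : ℕ × ℕ => (1 - B / (n.1 * n.2 : ℝ))⁻¹) atTop (nhds (1 - 0)⁻¹) :=
        (tendsto_const_nhds.sub hd).inv₀ (by norm_num)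
      have h2 := (Real.continuous_exp.tendsto _).comp (h1.mul hsum).neg
      rw [show -((1 - (0:ℝ))⁻¹ * τ) = -τ by norm_num] at h2
      exact h2
    have hi := (Real.continuous_exp.tendsto _).comp hsum.neg
    have hev : ∀ᶠ n : ℕ × ℕ in atTop, B / (n.1 * n.2 : ℝ) < 1 ∧ (0:ℝ) < n.1 * n.2 :=
      (hd.eventually_lt_const one_pos).and (tendsto_area.eventually_gt_atTop 0)
    have hb : ∀ᶠ n : ℕ × ℕ in atTop, _ := hev.mono fun n hn =>
      prod_bounds (Rn n) (fun i => Phi (u n i)) _ hn.1 (fun i _ => Phi_le_one _)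
        (fun i hi => by rw [le_div_iff₀ hn.2, mul_comm]; exact hBB n i hi)
    exact tendsto_of_tendsto_of_tendsto_of_le_of_le' lo hi (hb.mono fun n hn => hn.2) (hb.mono fun n hn => hn.1)
  have herr : Tendsto (fun n : ℕ × ℕ => D * (Real.log (n.1 * n.2 : ℝ)) ^ (-ε)) atTop (nhds 0) := by
    have := (tendsto_rpow_neg_atTop hε).comp (Real.tendsto_log_atTop.comp tendsto_area)
    simpa using this.const_mul D
  have hdiff : Tendsto (fun n : ℕ × ℕ => (ℙ : Measure Ω).real (noExc X (u n) (Rn n)) - ∏ i ∈ Rn n, Phi (u n i))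
      atTop (nhds 0) := by
    apply squeeze_zero_norm' _ herr
    filter_upwards [tendsto_area.eventually_ge_atTop N1] with n hn
    exact hm n hn
  simpa using hdiff.add hprod

end

section

/-- real harmonic numbers -/
def Hm (n : ℕ) : ℝ := ∑ a ∈ Finset.Icc 1 n, (a : ℝ)⁻¹

lemma Hm_nonneg (n : ℕ) : 0 ≤ Hm n := by unfold Hm; positivity

lemma Hm_eq (n : ℕ) : Hm n = (harmonic n : ℝ) := by
  rw [harmonic_eq_sum_Icc]; unfold Hm; push_cast; rfl

lemma Hm_le (n : ℕ) : Hm n ≤ Lg n := by rw [Hm_eq]; exact harmonic_le_one_add_log n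

lemma log_le_Hm (n : ℕ) : Real.log n ≤ Hm n := by
  rw [Hm_eq]
  refine le_trans ?_ (log_add_one_le_harmonic n)
  rcases Nat.eq_zero_or_pos n with rfl | hn
  · simp
  · apply Real.log_le_log
    · exact_mod_cast hn
    · push_cast; linarith

lemma sqrt_step (n : ℕ) : √((n + 1 : ℕ) : ℝ) ^ 2 = √(n : ℝ) ^ 2 + 1 ∧ √(n:ℝ) < √((n + 1 : ℕ) : ℝ) := by
  constructor
  · rw [Real.sq_sqrt (by positivity), Real.sq_sqrt (by positivity)]; push_cast; ring
  · apply Real.sqrt_lt_sqrt (by positivity); push_cast; linarith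

lemma rat_sum1 (b : ℕ) (hb : 1 ≤ b) (n : ℕ) (hn : n ≤ b) :
    ∑ a ∈ Finset.Icc 1 n, (a : ℝ)⁻¹ * √(rat a b) ≤ 2 * √n / √b := by
  induction n with
  | zero => simp
  | succ n ih =>
    rw [Finset.sum_Icc_succ_top (by omega)]
    have ih' := ih (by omega)
    have hr : rat (n + 1) b = ((n + 1 : ℕ) : ℝ) / b := by
      unfold rat; rw [min_eq_left hn, max_eq_right hn]
    rw [hr, Real.sqrt_div (by positivity)]
    obtain ⟨h1, h2⟩ := sqrt_step n
    have hsb : 0 < √(b:ℝ) := by positivity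
    have ht : 0 ≤ √(n:ℝ) := by positivity
    have hnn : ((n + 1 : ℕ) : ℝ) = √((n + 1 : ℕ) : ℝ) ^ 2 := by rw [Real.sq_sqrt (by positivity)]
    have h3 : ((n + 1 : ℕ) : ℝ)⁻¹ * (√((n + 1 : ℕ) : ℝ) / √b) ≤
        2 * (√((n + 1 : ℕ) : ℝ) - √(n:ℝ)) / √b := by
      rw [← mul_div_assoc]
      apply div_le_div_of_nonneg_right _ hsb.le
      rw [hnn]
      rw [Real.sqrt_sq (by positivity)]
      generalize √((n + 1 : ℕ) : ℝ) = s at *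
      generalize √(n:ℝ) = t at *
      have hs : 0 < s := by linarith
      rw [pow_two, mul_inv, mul_assoc, inv_mul_cancel₀ hs.ne', mul_one, inv_le_iff_one_le_mul₀ hs]
      nlinarith [sq_nonneg (s - t)]
    calc _ ≤ 2 * √n / √b + 2 * (√((n + 1 : ℕ) : ℝ) - √(n:ℝ)) / √b := add_le_add ih' h3
      _ = _ := by ring

lemma rat_sum2 (b : ℕ) (hb : 1 ≤ b) (n : ℕ) (hn : b ≤ n) :
    ∑ a ∈ Finset.Icc 1 n, (a : ℝ)⁻¹ * √(rat a b) ≤ 4 - 2 * √b / √n := by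
  induction n, hn using Nat.le_induction with
  | base =>
    refine (rat_sum1 b hb b le_rfl).trans (le_of_eq ?_)
    have hsb : 0 < √(b:ℝ) := by positivity
    field_simp
    norm_num
  | succ n hn ih =>
    rw [Finset.sum_Icc_succ_top (by omega)]
    have hr : rat (n + 1) b = (b : ℝ) / ((n + 1 : ℕ) : ℝ) := by
      unfold rat; rw [min_eq_right (by omega), max_eq_left (by omega)]
    rw [hr, Real.sqrt_div (by positivity)]
    obtain ⟨h1, h2⟩ := sqrt_step n
    have hsb : 0 < √(b:ℝ) := by positivity
    have ht : 0 < √(n:ℝ) := by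
      apply Real.sqrt_pos.2; exact_mod_cast (by omega : 0 < n)
    have hnn : ((n + 1 : ℕ) : ℝ) = √((n + 1 : ℕ) : ℝ) ^ 2 := by rw [Real.sq_sqrt (by positivity)]
    have h3 : ((n + 1 : ℕ) : ℝ)⁻¹ * (√b / √((n + 1 : ℕ) : ℝ)) ≤
        2 * √b / √n - 2 * √b / √((n + 1 : ℕ) : ℝ) := by
      rw [hnn]
      rw [Real.sqrt_sq (by positivity)]
      generalize √((n + 1 : ℕ) : ℝ) = s at *
      generalize √(n:ℝ) = t at *
      generalize √(b:ℝ) = q at *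
      have hs : 0 < s := by linarith
      have e1 : (s ^ 2)⁻¹ * (q / s) = q * t / (s ^ 3 * t) := by field_simp
      have e2 : 2 * q / t - 2 * q / s = q * (2 * s ^ 2 * (s - t)) / (s ^ 3 * t) := by field_simp
      rw [e1, e2]
      apply div_le_div_of_nonneg_right _ (by positivity)
      apply mul_le_mul_of_nonneg_left _ hsb.le
      have e3 : (s - t) * (s + t) = 1 := by linarith [h1, (by ring : (s - t) * (s + t) = s ^ 2 - t ^ 2)]
      have e4 : t * (s + t) ≤ 2 * s ^ 2 := by nlinarith
      have e5 : t * (s + t) * (s - t) ≤ 2 * s ^ 2 * (s - t) :=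
        mul_le_mul_of_nonneg_right e4 (by linarith)
      have e6 : t * (s + t) * (s - t) = t := by rw [mul_assoc, mul_comm (s + t), e3, mul_one]
      linarith
    calc _ ≤ (4 - 2 * √b / √n) + (2 * √b / √n - 2 * √b / √((n + 1 : ℕ) : ℝ)) := add_le_add ih h3
      _ = _ := by ring

lemma rat_sum (b : ℕ) (hb : 1 ≤ b) (n : ℕ) :
    ∑ a ∈ Finset.Icc 1 n, (a : ℝ)⁻¹ * √(rat a b) ≤ 4 := by
  rcases le_total n b with h | h
  · refine (rat_sum1 b hb n h).trans ?_
    have h1 : √(n:ℝ) ≤ √(b:ℝ) := Real.sqrt_le_sqrt (by exact_mod_cast h)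
    have hsb : 0 < √(b:ℝ) := by positivity
    rw [div_le_iff₀ hsb]; linarith
  · refine (rat_sum2 b hb n h).trans ?_
    have : 0 ≤ 2 * √(b:ℝ) / √n := by positivity
    linarith

lemma rat_dsum (n : ℕ) :
    ∑ b ∈ Finset.Icc 1 n, ∑ a ∈ Finset.Icc 1 n, (a : ℝ)⁻¹ * (b : ℝ)⁻¹ * √(rat a b) ≤ 4 * Lg n := by
  calc _ = ∑ b ∈ Finset.Icc 1 n, (b : ℝ)⁻¹ * ∑ a ∈ Finset.Icc 1 n, (a : ℝ)⁻¹ * √(rat a b) := by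
        refine Finset.sum_congr rfl fun b _ => ?_
        rw [Finset.mul_sum]; refine Finset.sum_congr rfl fun a _ => ?_; ring
    _ ≤ ∑ b ∈ Finset.Icc 1 n, (b : ℝ)⁻¹ * 4 := by
        refine Finset.sum_le_sum fun b hb => ?_
        gcongr
        exact rat_sum b (Finset.mem_Icc.1 hb).1 n
    _ = 4 * Hm n := by unfold Hm; rw [← Finset.sum_mul, mul_comm]
    _ ≤ _ := by gcongr; exact Hm_le n

lemma Lg_one : Lg 1 = 1 := by unfold Lg; simp

lemma Lg_step (n : ℕ) (hn : 1 ≤ n) : ((n + 1 : ℕ) : ℝ)⁻¹ ≤ Lg (n + 1) - Lg n := by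
  unfold Lg
  have h0 : (0:ℝ) < n := by exact_mod_cast hn
  have h := Real.one_sub_inv_le_log_of_pos (x := ((n + 1 : ℕ) : ℝ) / n) (by positivity)
  rw [Real.log_div (by positivity) h0.ne'] at h
  have : 1 - (((n + 1 : ℕ) : ℝ) / n)⁻¹ = ((n + 1 : ℕ) : ℝ)⁻¹ := by
    push_cast; field_simp; ring
  linarith

lemma lg_sum (γ : ℝ) (h0 : 0 < γ) (h1 : γ ≤ 1 / 2) (n : ℕ) (hn : 1 ≤ n) :
    ∑ a ∈ Finset.Icc 1 n, (a : ℝ)⁻¹ * (Lg a) ^ (-γ) ≤ 2 * (Lg n) ^ (1 - γ) := by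
  induction n, hn using Nat.le_induction with
  | base => simp [Lg_one]
  | succ n hn ih =>
    rw [Finset.sum_Icc_succ_top (by omega)]
    have hs := Lg_step n hn
    have hx := Lg_ge n
    have hy := Lg_ge (n + 1)
    generalize Lg n = x at *
    generalize Lg (n + 1) = y at *
    have hx0 : 0 < x := by linarith
    have hy0 : 0 < y := by linarith
    have hb := rpow_one_add_le_one_add_mul_self (s := x / y - 1) (p := 1 - γ)
      (by have : 0 ≤ x / y := by positivity
          linarith) (by linarith) (by linarith)
    rw [show 1 + (x / y - 1) = x / y by ring, Real.div_rpow hx0.le hy0.le, div_le_iff₀ (by positivity)] at hb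
    have e : y ^ (1 - γ) = y * y ^ (-γ) := by
      rw [show 1 - γ = 1 + -γ by ring, Real.rpow_add hy0, Real.rpow_one]
    have hz : 0 < y ^ (-γ) := by positivity
    have e2 : (1 + (1 - γ) * (x / y - 1)) * y ^ (1 - γ) = y ^ (1 - γ) + (1 - γ) * (x - y) * y ^ (-γ) := by
      rw [e]; field_simp
    rw [e2] at hb
    have hxy : 0 ≤ y - x := le_trans (by positivity) hs
    have h3 : ((n + 1 : ℕ) : ℝ)⁻¹ * y ^ (-γ) ≤ (y - x) * y ^ (-γ) := by gcongr
    have h4 : (1 / 2) * ((y - x) * y ^ (-γ)) ≤ (1 - γ) * ((y - x) * y ^ (-γ)) := by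
      apply mul_le_mul_of_nonneg_right (by linarith) (by positivity)
    nlinarith

end

section

lemma Rn_sum (n : ℕ × ℕ) (f g : ℕ → ℝ) :
    ∑ k ∈ Rn n, f k.1 * g k.2 = (∑ a ∈ Finset.Icc 1 n.1, f a) * ∑ b ∈ Finset.Icc 1 n.2, g b := by
  rw [Rn, Finset.Icc_prod_def, Finset.sum_product, Finset.sum_mul_sum]

/-- weights -/
def wt (k : ℕ × ℕ) : ℝ := (k.1 * k.2 : ℝ)⁻¹

lemma wt_nonneg (k : ℕ × ℕ) : 0 ≤ wt k := by unfold wt; positivity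

lemma wt_eq (k : ℕ × ℕ) : wt k = (k.1 : ℝ)⁻¹ * (k.2 : ℝ)⁻¹ := by unfold wt; rw [mul_inv]

lemma wt_sum (n : ℕ × ℕ) : ∑ k ∈ Rn n, wt k = Hm n.1 * Hm n.2 := by
  simp only [wt_eq]
  exact Rn_sum n (fun a => (a:ℝ)⁻¹) (fun a => (a:ℝ)⁻¹)

lemma wsum_rat (n : ℕ × ℕ) :
    ∑ k ∈ Rn n, ∑ l ∈ Rn n, wt k * wt l * (√(rat k.1 l.1) * √(rat k.2 l.2)) ≤ 16 * (Lg n.1 * Lg n.2) := by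
  have e : ∀ k ∈ Rn n, ∑ l ∈ Rn n, wt k * wt l * (√(rat k.1 l.1) * √(rat k.2 l.2)) =
      (∑ c ∈ Finset.Icc 1 n.1, (c : ℝ)⁻¹ * (k.1:ℝ)⁻¹ * √(rat c k.1)) *
      (∑ d ∈ Finset.Icc 1 n.2, (d : ℝ)⁻¹ * (k.2:ℝ)⁻¹ * √(rat d k.2)) := by
    intro k _
    rw [← Rn_sum n (fun c => (c : ℝ)⁻¹ * (k.1:ℝ)⁻¹ * √(rat c k.1)) (fun d => (d : ℝ)⁻¹ * (k.2:ℝ)⁻¹ * √(rat d k.2))]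
    refine Finset.sum_congr rfl fun l _ => ?_
    rw [wt_eq, wt_eq, rat_comm k.1, rat_comm k.2]; ring
  rw [Finset.sum_congr rfl e,
    Rn_sum n (fun b => ∑ c ∈ Finset.Icc 1 n.1, (c : ℝ)⁻¹ * (b:ℝ)⁻¹ * √(rat c b))
      (fun b => ∑ c ∈ Finset.Icc 1 n.2, (c : ℝ)⁻¹ * (b:ℝ)⁻¹ * √(rat c b))]
  have h1 := rat_dsum n.1
  have h2 := rat_dsum n.2
  have g1 := Lg_ge n.1
  have g2 := Lg_ge n.2
  calc _ ≤ (4 * Lg n.1) * (4 * Lg n.2) := by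
        apply mul_le_mul h1 h2 _ (by positivity)
        positivity
    _ = _ := by ring

lemma wsum_lg (γ : ℝ) (h0 : 0 < γ) (h1 : γ ≤ 1 / 2) (n : ℕ × ℕ) (hn1 : 1 ≤ n.1) (hn2 : 1 ≤ n.2) :
    ∑ k ∈ Rn n, ∑ l ∈ Rn n, wt k * wt l * (Lg k.1 * Lg k.2) ^ (-γ) ≤ 4 * (Lg n.1 * Lg n.2) ^ (2 - γ) := by
  have g1 := Lg_ge n.1
  have g2 := Lg_ge n.2
  have e : ∑ k ∈ Rn n, ∑ l ∈ Rn n, wt k * wt l * (Lg k.1 * Lg k.2) ^ (-γ) =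
      (∑ k ∈ Rn n, wt k * (Lg k.1 * Lg k.2) ^ (-γ)) * ∑ l ∈ Rn n, wt l := by
    rw [Finset.sum_mul_sum]
    refine Finset.sum_congr rfl fun k _ => Finset.sum_congr rfl fun l _ => ?_
    ring
  have e2 : ∑ k ∈ Rn n, wt k * (Lg k.1 * Lg k.2) ^ (-γ) =
      (∑ a ∈ Finset.Icc 1 n.1, (a : ℝ)⁻¹ * (Lg a) ^ (-γ)) * (∑ a ∈ Finset.Icc 1 n.2, (a : ℝ)⁻¹ * (Lg a) ^ (-γ)) := by
    rw [← Rn_sum n (fun a => (a : ℝ)⁻¹ * (Lg a) ^ (-γ)) (fun a => (a : ℝ)⁻¹ * (Lg a) ^ (-γ))]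
    refine Finset.sum_congr rfl fun k _ => ?_
    have := Lg_ge k.1
    have := Lg_ge k.2
    rw [wt_eq, Real.mul_rpow (by linarith) (by linarith)]; ring
  have p : ∀ m : ℕ, 0 ≤ ∑ a ∈ Finset.Icc 1 m, (a : ℝ)⁻¹ * (Lg a) ^ (-γ) := fun m =>
    Finset.sum_nonneg fun a _ => by
      have := Lg_ge a
      positivity
  rw [e, e2, wt_sum]
  calc _ ≤ ((2 * (Lg n.1) ^ (1 - γ)) * (2 * (Lg n.2) ^ (1 - γ))) * (Lg n.1 * Lg n.2) := by
        apply mul_le_mul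
        · exact mul_le_mul (lg_sum γ h0 h1 _ hn1) (lg_sum γ h0 h1 _ hn2) (p _) (by positivity)
        · exact mul_le_mul (Hm_le _) (Hm_le _) (Hm_nonneg _) (by positivity)
        · exact mul_nonneg (Hm_nonneg _) (Hm_nonneg _)
        · positivity
    _ = _ := by
        rw [Real.mul_rpow (by linarith) (by linarith), show 2 - γ = (1 - γ) + 1 by ring,
          Real.rpow_add (by linarith), Real.rpow_add (by linarith), Real.rpow_one, Real.rpow_one]
        ring

variable {Ω : Type*} [MeasureSpace Ω] [IsProbabilityMeasure (ℙ : Measure Ω)]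
  {X : ℕ × ℕ → Ω → ℝ} {r : ℕ × ℕ → ℕ × ℕ → ℝ}

/-- the event of no exceedance -/
def Ev (X : ℕ × ℕ → Ω → ℝ) (u : ℕ × ℕ → ℕ × ℕ → ℝ) (k : ℕ × ℕ) : Set Ω := noExc X (u k) (Rn k)

/-- centred weighted sum -/
def Yc (X : ℕ × ℕ → Ω → ℝ) (u : ℕ × ℕ → ℕ × ℕ → ℝ) (n : ℕ × ℕ) (ω : Ω) : ℝ :=
  ∑ k ∈ Rn n, wt k * ((Ev X u k).indicator (fun _ => (1:ℝ)) ω - (ℙ : Measure Ω).real (Ev X u k))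

lemma ind_cov (A L : Set Ω) (hA : MeasurableSet A) (hL : MeasurableSet L) :
    Integrable (fun ω => (A.indicator (fun _ => (1:ℝ)) ω - (ℙ : Measure Ω).real A) *
      (L.indicator (fun _ => (1:ℝ)) ω - (ℙ : Measure Ω).real L)) ∧
    ∫ ω, (A.indicator (fun _ => (1:ℝ)) ω - (ℙ : Measure Ω).real A) *
      (L.indicator (fun _ => (1:ℝ)) ω - (ℙ : Measure Ω).real L) =
      (ℙ : Measure Ω).real (A ∩ L) - (ℙ : Measure Ω).real A * (ℙ : Measure Ω).real L := by
  have iA : ∀ S : Set Ω, MeasurableSet S → Integrable (S.indicator (fun _ => (1:ℝ))) (ℙ : Measure Ω) :=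
    fun S hS => (integrable_const (1:ℝ)).indicator hS
  have vA : ∀ S : Set Ω, MeasurableSet S → ∫ ω, S.indicator (fun _ => (1:ℝ)) ω = (ℙ : Measure Ω).real S :=
    fun S hS => by rw [integral_indicator_const _ hS]; simp
  set a := (ℙ : Measure Ω).real A
  set b := (ℙ : Measure Ω).real L
  have e : (fun ω => (A.indicator (fun _ => (1:ℝ)) ω - a) * (L.indicator (fun _ => (1:ℝ)) ω - b)) =
      fun ω => (A ∩ L).indicator (fun _ => (1:ℝ)) ω - b * A.indicator (fun _ => (1:ℝ)) ω
        - a * L.indicator (fun _ => (1:ℝ)) ω + a * b := by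
    funext ω
    by_cases h1 : ω ∈ A <;> by_cases h2 : ω ∈ L <;> simp [h1, h2] <;> ring
  have i1 := iA _ (hA.inter hL)
  have i2 := (iA _ hA).const_mul b
  have i3 := (iA _ hL).const_mul a
  have i12 : Integrable (fun ω => (A ∩ L).indicator (fun _ => (1:ℝ)) ω - b * A.indicator (fun _ => (1:ℝ)) ω) :=
    i1.sub i2
  have i123 : Integrable (fun ω => (A ∩ L).indicator (fun _ => (1:ℝ)) ω - b * A.indicator (fun _ => (1:ℝ)) ω
        - a * L.indicator (fun _ => (1:ℝ)) ω) := i12.sub i3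
  rw [e]
  constructor
  · exact i123.add (integrable_const _)
  · rw [integral_add i123 (integrable_const _), integral_sub i12 i3, integral_sub i1 i2,
      integral_const_mul, integral_const_mul, vA _ (hA.inter hL), vA _ hA, vA _ hL]
    simp
    ring

lemma Yc_sq (X : ℕ × ℕ → Ω → ℝ) (u : ℕ × ℕ → ℕ × ℕ → ℝ) (hm : ∀ k, MeasurableSet (Ev X u k)) (n : ℕ × ℕ) :
    Integrable (fun ω => Yc X u n ω ^ 2) ∧
    ∫ ω, Yc X u n ω ^ 2 = ∑ k ∈ Rn n, ∑ l ∈ Rn n, wt k * wt l *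
      ((ℙ : Measure Ω).real (Ev X u k ∩ Ev X u l) - (ℙ : Measure Ω).real (Ev X u k) * (ℙ : Measure Ω).real (Ev X u l)) := by
  have e : (fun ω => Yc X u n ω ^ 2) = fun ω => ∑ k ∈ Rn n, ∑ l ∈ Rn n, wt k * wt l *
      (((Ev X u k).indicator (fun _ => (1:ℝ)) ω - (ℙ : Measure Ω).real (Ev X u k)) *
      ((Ev X u l).indicator (fun _ => (1:ℝ)) ω - (ℙ : Measure Ω).real (Ev X u l))) := by
    funext ω
    rw [pow_two, Yc, Finset.sum_mul_sum]
    refine Finset.sum_congr rfl fun k _ => Finset.sum_congr rfl fun l _ => ?_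
    ring
  have hi : ∀ k l : ℕ × ℕ, Integrable (fun ω => wt k * wt l *
      (((Ev X u k).indicator (fun _ => (1:ℝ)) ω - (ℙ : Measure Ω).real (Ev X u k)) *
      ((Ev X u l).indicator (fun _ => (1:ℝ)) ω - (ℙ : Measure Ω).real (Ev X u l)))) := fun k l =>
    (ind_cov _ _ (hm k) (hm l)).1.const_mul _
  rw [e]
  constructor
  · exact integrable_finsetSum _ fun k _ => integrable_finsetSum _ fun l _ => hi k l
  · rw [integral_finsetSum _ fun k _ => integrable_finsetSum _ fun l _ => hi k l]
    refine Finset.sum_congr rfl fun k _ => ?_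
    rw [integral_finsetSum _ fun l _ => hi k l]
    refine Finset.sum_congr rfl fun l _ => ?_
    rw [integral_const_mul, (ind_cov _ _ (hm k) (hm l)).2]

lemma var_bound (h : IsStdGaussianField X r) (ρ : ℕ × ℕ → ℝ) (ε : ℝ) (hε : 0 < ε)
    (hcov : CovAssump r ρ ε) (u : ℕ × ℕ → ℕ × ℕ → ℝ) (hbdd : LambdaBounded u) :
    ∃ D γ : ℝ, 0 ≤ D ∧ 0 < γ ∧ γ ≤ 1 / 2 ∧ ∀ n : ℕ × ℕ, 1 ≤ n.1 → 1 ≤ n.2 →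
      Integrable (fun ω => Yc X u n ω ^ 2) ∧
      ∫ ω, Yc X u n ω ^ 2 ≤ D * (Lg n.1 * Lg n.2) ^ (2 - γ) := by
  obtain ⟨D, γ, hD, hγ0, hγ1, hc⟩ := cov_bound h ρ ε hε hcov u hbdd
  refine ⟨D * 24, γ, by positivity, hγ0, hγ1, fun n hn1 hn2 => ?_⟩
  obtain ⟨h1, h2⟩ := Yc_sq X u (fun k => meas_noExc h _ _) n
  refine ⟨h1, ?_⟩
  rw [h2]
  have g1 := Lg_ge n.1
  have g2 := Lg_ge n.2
  have hb : ∀ k ∈ Rn n, ∀ l ∈ Rn n, wt k * wt l *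
      ((ℙ : Measure Ω).real (Ev X u k ∩ Ev X u l) - (ℙ : Measure Ω).real (Ev X u k) * (ℙ : Measure Ω).real (Ev X u l)) ≤
      D * (wt k * wt l * (√(rat k.1 l.1) * √(rat k.2 l.2)) + wt k * wt l * (Lg k.1 * Lg k.2) ^ (-γ)
        + wt k * wt l * (Lg l.1 * Lg l.2) ^ (-γ)) := by
    intro k hk l hl
    simp only [Rn, Finset.mem_Icc, Prod.le_def] at hk hl
    have := (le_abs_self _).trans (hc k l hk.1.1 hk.1.2 hl.1.1 hl.1.2)
    have hw : 0 ≤ wt k * wt l := mul_nonneg (wt_nonneg _) (wt_nonneg _)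
    refine (mul_le_mul_of_nonneg_left this hw).trans (le_of_eq ?_)
    ring
  refine (Finset.sum_le_sum fun k hk => Finset.sum_le_sum fun l hl => hb k hk l hl).trans ?_
  simp only [← Finset.mul_sum, Finset.sum_add_distrib]
  rw [mul_assoc]
  apply mul_le_mul_of_nonneg_left _ hD
  have s1 := wsum_rat n
  have s2 := wsum_lg γ hγ0 hγ1 n hn1 hn2
  have s3 : ∑ k ∈ Rn n, ∑ l ∈ Rn n, wt k * wt l * (Lg l.1 * Lg l.2) ^ (-γ) ≤ 4 * (Lg n.1 * Lg n.2) ^ (2 - γ) := by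
    rw [Finset.sum_comm]
    refine le_trans (le_of_eq ?_) s2
    refine Finset.sum_congr rfl fun k _ => Finset.sum_congr rfl fun l _ => ?_
    ring
  have s4 : Lg n.1 * Lg n.2 ≤ (Lg n.1 * Lg n.2) ^ (2 - γ) := by
    apply Real.self_le_rpow_of_one_le
    · nlinarith
    · linarith
  linarith

end

section

/-- subsequence -/
def ssq (p j : ℕ) : ℕ := 2 ^ ((j + 1) ^ p)

lemma ssq_pos (p j : ℕ) : 1 ≤ ssq p j := Nat.one_le_two_pow

lemma Lg_ssq (p j : ℕ) : Lg (ssq p j) = 1 + ((j : ℝ) + 1) ^ p * Real.log 2 := by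
  unfold Lg ssq; push_cast; rw [Real.log_pow]; push_cast; ring

lemma Lg_ssq_rpow (p : ℕ) (γ : ℝ) (hγ0 : 0 < γ) (hγ1 : γ ≤ 1 / 2) (hp : 2 ≤ p * γ) (j : ℕ) :
    (Lg (ssq p j)) ^ (-γ) ≤ 2 * (((j : ℝ) + 1) ^ 2)⁻¹ := by
  have hj : (1:ℝ) ≤ (j : ℝ) + 1 := by have : (0:ℝ) ≤ j := by positivity
                                      linarith
  have hpos : (0:ℝ) < ((j : ℝ) + 1) ^ p / 2 := by positivity
  have h1 : ((j : ℝ) + 1) ^ p / 2 ≤ Lg (ssq p j) := by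
    rw [Lg_ssq]
    have := Real.log_two_gt_d9
    have h3 : (0:ℝ) < ((j : ℝ) + 1) ^ p := by positivity
    nlinarith
  calc (Lg (ssq p j)) ^ (-γ) ≤ (((j : ℝ) + 1) ^ p / 2) ^ (-γ) :=
        Real.rpow_le_rpow_of_nonpos hpos h1 (by linarith)
    _ = 2 ^ γ * ((j : ℝ) + 1) ^ (-(p * γ)) := by
        rw [Real.div_rpow (by positivity) (by norm_num), ← Real.rpow_natCast, ← Real.rpow_mul (by positivity),
          Real.rpow_neg (by norm_num : (0:ℝ) ≤ 2), div_inv_eq_mul, mul_comm]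
        congr 2; ring
    _ ≤ 2 * (((j : ℝ) + 1) ^ 2)⁻¹ := by
        apply mul_le_mul
        · calc (2:ℝ) ^ γ ≤ 2 ^ (1:ℝ) := Real.rpow_le_rpow_of_exponent_le (by norm_num) (by linarith)
            _ = 2 := Real.rpow_one 2
        · rw [Real.rpow_neg (by positivity)]
          apply inv_anti₀ (by positivity)
          rw [← Real.rpow_natCast]
          apply Real.rpow_le_rpow_of_exponent_le hj
          push_cast; exact hp
        · positivity
        · norm_num

lemma summable_aux : Summable (fun j : ℕ => 2 * (((j : ℝ) + 1) ^ 2)⁻¹) := by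
  apply Summable.mul_left
  have := (summable_nat_add_iff 1).2 (Real.summable_nat_pow_inv.2 (by norm_num : 1 < 2))
  simpa using this

lemma ae_tendsto_of_sum {Ω : Type*} [MeasurableSpace Ω] (μ : Measure Ω) (Z : ℕ × ℕ → Ω → ℝ)
    (c : ℕ × ℕ → ℝ) (hc : Summable c) (hi : ∀ j, Integrable (fun ω => Z j ω ^ 2) μ)
    (hZ : ∀ j, ∫ ω, Z j ω ^ 2 ∂μ ≤ c j) :
    ∀ᵐ ω ∂μ, Tendsto (fun j => Z j ω) atTop (nhds 0) := by
  have h1 : ∫⁻ ω, ∑' j, ENNReal.ofReal (Z j ω ^ 2) ∂μ ≠ ⊤ := by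
    rw [lintegral_tsum fun j => (hi j).1.aemeasurable.ennreal_ofReal]
    have : ∀ j, ∫⁻ ω, ENNReal.ofReal (Z j ω ^ 2) ∂μ ≤ ENNReal.ofReal (c j) := fun j => by
      rw [← ofReal_integral_eq_lintegral_ofReal (hi j) (Eventually.of_forall fun ω => sq_nonneg _)]
      exact ENNReal.ofReal_le_ofReal (hZ j)
    refine ne_top_of_le_ne_top ?_ (ENNReal.tsum_le_tsum this)
    exact hc.tsum_ofReal_ne_top
  have h2 := ae_lt_top' (AEMeasurable.tsum fun j => (hi j).1.aemeasurable.ennreal_ofReal) h1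
  filter_upwards [h2] with ω hω
  have h3 := ENNReal.tendsto_cofinite_zero_of_tsum_ne_top hω.ne
  have h4 : Tendsto (fun j => ENNReal.ofReal (Z j ω ^ 2)) atTop (nhds 0) := by
    refine h3.mono_left ?_
    exact atTop_le_cofinite
  have h5 : Tendsto (fun j => Z j ω ^ 2) atTop (nhds 0) := by
    have := (ENNReal.tendsto_toReal ENNReal.zero_ne_top).comp h4
    simpa [Function.comp_def, ENNReal.toReal_ofReal (sq_nonneg _)] using this
  have h6 := h5.sqrt
  rw [Real.sqrt_zero] at h6
  simp only [Real.sqrt_sq_eq_abs] at h6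
  exact (tendsto_zero_iff_abs_tendsto_zero _).2 h6

variable {Ω : Type*} [MeasureSpace Ω] [IsProbabilityMeasure (ℙ : Measure Ω)]
  {X : ℕ × ℕ → Ω → ℝ} {r : ℕ × ℕ → ℕ × ℕ → ℝ}

lemma ae_sub (h : IsStdGaussianField X r) (ρ : ℕ × ℕ → ℝ) (ε : ℝ) (hε : 0 < ε)
    (hcov : CovAssump r ρ ε) (u : ℕ × ℕ → ℕ × ℕ → ℝ) (hbdd : LambdaBounded u) :
    ∃ p : ℕ, 1 ≤ p ∧ ∀ᵐ ω, Tendsto (fun j : ℕ × ℕ => Yc X u (ssq p j.1, ssq p j.2) ω /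
      (Lg (ssq p j.1) * Lg (ssq p j.2))) atTop (nhds 0) := by
  obtain ⟨D, γ, hD, hγ0, hγ1, hv⟩ := var_bound h ρ ε hε hcov u hbdd
  obtain ⟨p, hp⟩ := exists_nat_ge (2 / γ)
  have hp2 : 2 ≤ p * γ := by rwa [div_le_iff₀ hγ0] at hp
  refine ⟨p, ?_, ?_⟩
  · by_contra hlt
    have : p = 0 := by omega
    rw [this] at hp2; norm_num at hp2
  apply ae_tendsto_of_sum ℙ _ (fun j : ℕ × ℕ => D * ((2 * (((j.1 : ℝ) + 1) ^ 2)⁻¹) * (2 * (((j.2 : ℝ) + 1) ^ 2)⁻¹)))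
  · apply Summable.mul_left
    exact summable_aux.mul_of_nonneg summable_aux (fun _ => by positivity) (fun _ => by positivity)
  · intro j
    simp only [div_pow]
    exact (hv (ssq p j.1, ssq p j.2) (ssq_pos _ _) (ssq_pos _ _)).1.div_const _
  · intro j
    simp only [div_pow]
    rw [integral_div]
    have g1 := Lg_ge (ssq p j.1)
    have g2 := Lg_ge (ssq p j.2)
    have hpos : 0 < Lg (ssq p j.1) * Lg (ssq p j.2) := by positivity
    have h2 := (hv (ssq p j.1, ssq p j.2) (ssq_pos _ _) (ssq_pos _ _)).2
    simp only at h2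
    rw [div_le_iff₀ (by positivity)]
    refine h2.trans ?_
    rw [mul_assoc]
    apply mul_le_mul_of_nonneg_left _ hD
    have e : (Lg (ssq p j.1) * Lg (ssq p j.2)) ^ (2 - γ) =
        ((Lg (ssq p j.1)) ^ (-γ) * (Lg (ssq p j.2)) ^ (-γ)) * (Lg (ssq p j.1) * Lg (ssq p j.2)) ^ 2 := by
      rw [← Real.mul_rpow (by linarith) (by linarith), show 2 - γ = -γ + 2 by ring, Real.rpow_add hpos, Real.rpow_two]
    rw [e]
    apply mul_le_mul_of_nonneg_right _ (by positivity)
    exact mul_le_mul (Lg_ssq_rpow p γ hγ0 hγ1 hp2 _) (Lg_ssq_rpow p γ hγ0 hγ1 hp2 _) (by positivity) (by positivity)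

end

section

lemma Lg_tendsto : Tendsto Lg atTop atTop :=
  tendsto_atTop_add_const_left _ _ (Real.tendsto_log_atTop.comp tendsto_natCast_atTop_atTop)

lemma Lg_mono {a b : ℕ} (ha : 1 ≤ a) (h : a ≤ b) : Lg a ≤ Lg b := by
  unfold Lg
  have : Real.log a ≤ Real.log b := Real.log_le_log (by exact_mod_cast ha) (by exact_mod_cast h)
  linarith

lemma log_div_Lg : Tendsto (fun n : ℕ => Real.log n / Lg n) atTop (nhds 1) := by
  have h1 : Tendsto (fun n : ℕ => 1 - (Lg n)⁻¹) atTop (nhds (1 - 0)) :=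
    tendsto_const_nhds.sub (tendsto_inv_atTop_zero.comp Lg_tendsto)
  rw [sub_zero] at h1
  refine h1.congr fun n => ?_
  have := Lg_ge n
  have h2 : Real.log n = Lg n - 1 := by unfold Lg; ring
  rw [h2, sub_div, div_self (by linarith), one_div]

lemma Hm_div_Lg : Tendsto (fun n : ℕ => Hm n / Lg n) atTop (nhds 1) := by
  refine tendsto_of_tendsto_of_tendsto_of_le_of_le log_div_Lg tendsto_const_nhds ?_ ?_
  · intro n
    have := Lg_ge n
    exact div_le_div_of_nonneg_right (log_le_Hm n) (by linarith)
  · intro n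
    have := Lg_ge n
    exact div_le_one_of_le₀ (Hm_le n) (by linarith)

lemma Hm_trunc (K n : ℕ) : ∑ a ∈ Finset.Icc 1 n, (a : ℝ)⁻¹ * (if a ≤ K then 1 else 0) ≤ Hm K := by
  simp only [mul_ite, mul_one, mul_zero]
  rw [← Finset.sum_filter]
  unfold Hm
  apply Finset.sum_le_sum_of_subset_of_nonneg
  · intro a; simp only [Finset.mem_filter, Finset.mem_Icc]; tauto
  · intros; positivity

lemma cesaro (d : ℕ × ℕ → ℝ) (C : ℝ) (hd0 : ∀ k, 0 ≤ d k) (hdC : ∀ k, d k ≤ C)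
    (hd : Tendsto d atTop (nhds 0)) :
    Tendsto (fun n : ℕ × ℕ => (∑ k ∈ Rn n, wt k * d k) / (Lg n.1 * Lg n.2)) atTop (nhds 0) := by
  have hC : 0 ≤ C := (hd0 0).trans (hdC 0)
  rw [Metric.tendsto_nhds]
  intro e he
  have h1 : ∀ᶠ k in atTop, d k ≤ e / 2 := (hd.eventually_lt_const (half_pos he)).mono fun k hk => hk.le
  obtain ⟨K0, hK0⟩ := eventually_atTop.1 h1
  set K := max K0.1 K0.2 with hK
  have hb : ∀ k, d k ≤ e / 2 + C * ((if k.1 ≤ K then 1 else 0) + (if k.2 ≤ K then 1 else 0)) := by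
    intro k
    by_cases a1 : k.1 ≤ K
    · have := hdC k
      rw [if_pos a1]
      split_ifs <;> linarith
    · by_cases a2 : k.2 ≤ K
      · have := hdC k
        rw [if_neg a1, if_pos a2]; linarith
      · rw [if_neg a1, if_neg a2]
        have := hK0 k ⟨by have := le_max_left K0.1 K0.2; omega,
          by have := le_max_right K0.1 K0.2; omega⟩
        linarith
  have hlim : Tendsto (fun n : ℕ × ℕ => e / 2 + C * Hm K * ((Lg n.2)⁻¹ + (Lg n.1)⁻¹)) atTop
      (nhds (e / 2 + C * Hm K * (0 + 0))) :=
    tendsto_const_nhds.add (tendsto_const_nhds.mul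
      ((tendsto_inv_atTop_zero.comp (Lg_tendsto.comp tendsto_c2)).add
        (tendsto_inv_atTop_zero.comp (Lg_tendsto.comp tendsto_c1))))
  have hlt : e / 2 + C * Hm K * (0 + 0) < e := by linarith
  filter_upwards [hlim.eventually_lt_const hlt] with n hn
  have g1 := Lg_ge n.1
  have g2 := Lg_ge n.2
  have hpos : 0 < Lg n.1 * Lg n.2 := by positivity
  have hs0 : 0 ≤ ∑ k ∈ Rn n, wt k * d k := Finset.sum_nonneg fun k _ => mul_nonneg (wt_nonneg k) (hd0 k)
  rw [Real.dist_eq, sub_zero, abs_of_nonneg (by positivity)]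
  refine lt_of_le_of_lt ?_ hn
  rw [div_le_iff₀ hpos]
  have s1 : ∑ k ∈ Rn n, wt k * (if k.1 ≤ K then (1:ℝ) else 0) ≤ Hm K * Lg n.2 := by
    have : ∑ k ∈ Rn n, wt k * (if k.1 ≤ K then (1:ℝ) else 0) =
        (∑ a ∈ Finset.Icc 1 n.1, (a : ℝ)⁻¹ * (if a ≤ K then 1 else 0)) * Hm n.2 := by
      unfold Hm
      rw [← Rn_sum n (fun a => (a : ℝ)⁻¹ * (if a ≤ K then 1 else 0)) (fun a => (a:ℝ)⁻¹)]
      refine Finset.sum_congr rfl fun k _ => ?_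
      rw [wt_eq]; ring
    rw [this]
    exact mul_le_mul (Hm_trunc K n.1) (Hm_le _) (Hm_nonneg _) (Hm_nonneg _)
  have s2 : ∑ k ∈ Rn n, wt k * (if k.2 ≤ K then (1:ℝ) else 0) ≤ Lg n.1 * Hm K := by
    have : ∑ k ∈ Rn n, wt k * (if k.2 ≤ K then (1:ℝ) else 0) =
        Hm n.1 * (∑ a ∈ Finset.Icc 1 n.2, (a : ℝ)⁻¹ * (if a ≤ K then 1 else 0)) := by
      unfold Hm
      rw [← Rn_sum n (fun a => (a:ℝ)⁻¹) (fun a => (a : ℝ)⁻¹ * (if a ≤ K then 1 else 0))]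
      refine Finset.sum_congr rfl fun k _ => ?_
      rw [wt_eq]; ring
    rw [this]
    refine mul_le_mul (Hm_le _) (Hm_trunc K n.2) (Finset.sum_nonneg fun a _ => ?_) (by linarith)
    split_ifs <;> positivity
  have s3 : ∑ k ∈ Rn n, wt k ≤ Lg n.1 * Lg n.2 := by
    rw [wt_sum]; exact mul_le_mul (Hm_le _) (Hm_le _) (Hm_nonneg _) (by linarith)
  calc ∑ k ∈ Rn n, wt k * d k ≤ ∑ k ∈ Rn n, (e / 2 * wt k + C * (wt k * (if k.1 ≤ K then (1:ℝ) else 0))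
        + C * (wt k * (if k.2 ≤ K then (1:ℝ) else 0))) := by
        refine Finset.sum_le_sum fun k _ => ?_
        refine (mul_le_mul_of_nonneg_left (hb k) (wt_nonneg k)).trans (le_of_eq ?_)
        ring
    _ = e / 2 * ∑ k ∈ Rn n, wt k + C * ∑ k ∈ Rn n, (wt k * (if k.1 ≤ K then (1:ℝ) else 0))
        + C * ∑ k ∈ Rn n, (wt k * (if k.2 ≤ K then (1:ℝ) else 0)) := by
        rw [Finset.sum_add_distrib, Finset.sum_add_distrib, Finset.mul_sum, Finset.mul_sum, Finset.mul_sum]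
    _ ≤ e / 2 * (Lg n.1 * Lg n.2) + C * (Hm K * Lg n.2) + C * (Lg n.1 * Hm K) := by gcongr
    _ = _ := by field_simp; ring

lemma ssq_gt (p : ℕ) (hp : 1 ≤ p) (j : ℕ) : j < ssq p j := by
  unfold ssq
  have h1 : j + 1 ≤ (j + 1) ^ p := Nat.le_self_pow (by omega) _
  have h2 : (j + 1) ^ p < 2 ^ ((j + 1) ^ p) := Nat.lt_two_pow_self
  omega

/-- index of the subsequence block -/
def Jx (p m : ℕ) : ℕ := Nat.findGreatest (fun j => ssq p j ≤ m) m

lemma Jx_le (p m : ℕ) (hm : ssq p 0 ≤ m) : ssq p (Jx p m) ≤ m :=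
  Nat.findGreatest_spec (P := fun j => ssq p j ≤ m) (Nat.zero_le m) hm

lemma Jx_gt (p : ℕ) (hp : 1 ≤ p) (m : ℕ) : m < ssq p (Jx p m + 1) := by
  by_contra hc
  push Not at hc
  have h1 : Jx p m + 1 ≤ m := (ssq_gt p hp _).le.trans hc
  have := Nat.le_findGreatest (P := fun j => ssq p j ≤ m) h1 hc
  unfold Jx at this
  omega

lemma Jx_tendsto (p : ℕ) (hp : 1 ≤ p) : Tendsto (Jx p) atTop atTop := by
  rw [tendsto_atTop]
  intro j
  filter_upwards [eventually_ge_atTop (ssq p j)] with m hm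
  exact Nat.le_findGreatest ((ssq_gt p hp j).le.trans hm) hm

lemma R_tendsto (p : ℕ) : Tendsto (fun j : ℕ => Lg (ssq p (j + 1)) / Lg (ssq p j)) atTop (nhds 1) := by
  have hu : Tendsto (fun j : ℕ => (1 + 1 / ((j : ℝ) + 1)) ^ p) atTop (nhds 1) := by
    have := ((tendsto_one_div_add_atTop_nhds_zero_nat (𝕜 := ℝ)).const_add 1).pow p
    simpa using this
  refine tendsto_of_tendsto_of_tendsto_of_le_of_le tendsto_const_nhds hu ?_ ?_
  · intro j
    have := Lg_ge (ssq p j)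
    simp only
    rw [one_le_div (by linarith)]
    apply Lg_mono (ssq_pos _ _)
    unfold ssq
    apply Nat.pow_le_pow_right (by norm_num)
    exact Nat.pow_le_pow_left (by omega) _
  · intro j
    have := Lg_ge (ssq p j)
    simp only
    rw [div_le_iff₀ (by linarith), Lg_ssq, Lg_ssq]
    have e : (1 + 1 / ((j : ℝ) + 1)) ^ p * ((j : ℝ) + 1) ^ p = (((j + 1 : ℕ) : ℝ) + 1) ^ p := by
      rw [← mul_pow]; congr 1; push_cast; field_simp
    have h1 : 1 ≤ (1 + 1 / ((j : ℝ) + 1)) ^ p := by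
      apply one_le_pow₀
      have : 0 ≤ 1 / ((j : ℝ) + 1) := by positivity
      linarith
    rw [mul_add, ← mul_assoc, e]
    linarith

lemma sandwich (S : ℕ × ℕ → ℝ) (hmono : ∀ m n, m ≤ n → S m ≤ S n) (hS0 : ∀ n, 0 ≤ S n)
    (p : ℕ) (hp : 1 ≤ p) (q : ℝ)
    (hT : Tendsto (fun j : ℕ × ℕ => S (ssq p j.1, ssq p j.2) / (Lg (ssq p j.1) * Lg (ssq p j.2))) atTop (nhds q)) :
    Tendsto (fun n : ℕ × ℕ => S n / (Lg n.1 * Lg n.2)) atTop (nhds q) := by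
  set T := fun j : ℕ × ℕ => S (ssq p j.1, ssq p j.2) / (Lg (ssq p j.1) * Lg (ssq p j.2)) with hTdef
  set R := fun j : ℕ => Lg (ssq p (j + 1)) / Lg (ssq p j) with hRdef
  have hJ1 : Tendsto (fun n : ℕ × ℕ => Jx p n.1) atTop atTop := (Jx_tendsto p hp).comp tendsto_c1
  have hJ2 : Tendsto (fun n : ℕ × ℕ => Jx p n.2) atTop atTop := (Jx_tendsto p hp).comp tendsto_c2
  have hJ : Tendsto (fun n : ℕ × ℕ => (Jx p n.1, Jx p n.2)) atTop atTop := by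
    nth_rewrite 2 [← prod_atTop_atTop_eq]
    exact hJ1.prodMk hJ2
  have hJs : Tendsto (fun n : ℕ × ℕ => (Jx p n.1 + 1, Jx p n.2 + 1)) atTop atTop := by
    nth_rewrite 2 [← prod_atTop_atTop_eq]
    exact ((tendsto_add_atTop_nat 1).comp hJ1).prodMk ((tendsto_add_atTop_nat 1).comp hJ2)
  have hR : Tendsto (fun n : ℕ × ℕ => R (Jx p n.1) * R (Jx p n.2)) atTop (nhds (1 * 1)) :=
    ((R_tendsto p).comp hJ1).mul ((R_tendsto p).comp hJ2)
  rw [one_mul] at hR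
  have up : Tendsto (fun n : ℕ × ℕ => T (Jx p n.1 + 1, Jx p n.2 + 1) * (R (Jx p n.1) * R (Jx p n.2))) atTop
      (nhds (q * 1)) := (hT.comp hJs).mul hR
  have lo : Tendsto (fun n : ℕ × ℕ => T (Jx p n.1, Jx p n.2) / (R (Jx p n.1) * R (Jx p n.2))) atTop
      (nhds (q / 1)) := (hT.comp hJ).div hR one_ne_zero
  rw [mul_one] at up
  rw [div_one] at lo
  have hev : ∀ᶠ n : ℕ × ℕ in atTop, ssq p 0 ≤ n.1 ∧ ssq p 0 ≤ n.2 :=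
    (tendsto_c1.eventually_ge_atTop _).and (tendsto_c2.eventually_ge_atTop _)
  refine tendsto_of_tendsto_of_tendsto_of_le_of_le' lo up ?_ ?_
  · filter_upwards [hev] with n hn
    have a1 := Jx_le p n.1 hn.1
    have a2 := Jx_le p n.2 hn.2
    have b1 := Jx_gt p hp n.1
    have b2 := Jx_gt p hp n.2
    have hn1 : 1 ≤ n.1 := (ssq_pos p _).trans a1
    have hn2 : 1 ≤ n.2 := (ssq_pos p _).trans a2
    have l1 := Lg_mono hn1 b1.le
    have l2 := Lg_mono hn2 b2.le
    have g1 := Lg_ge n.1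
    have g2 := Lg_ge n.2
    have g3 := Lg_ge (ssq p (Jx p n.1))
    have g4 := Lg_ge (ssq p (Jx p n.2))
    have g5 := Lg_ge (ssq p (Jx p n.1 + 1))
    have g6 := Lg_ge (ssq p (Jx p n.2 + 1))
    have e : T (Jx p n.1, Jx p n.2) / (R (Jx p n.1) * R (Jx p n.2)) = S (ssq p (Jx p n.1), ssq p (Jx p n.2)) /
        (Lg (ssq p (Jx p n.1 + 1)) * Lg (ssq p (Jx p n.2 + 1))) := by
      simp only [hTdef, hRdef]
      field_simp
    rw [e]
    exact div_le_div₀ (hS0 _) (hmono _ _ ⟨a1, a2⟩) (by positivity)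
      (mul_le_mul l1 l2 (by linarith) (by linarith))
  · filter_upwards [hev] with n hn
    have a1 := Jx_le p n.1 hn.1
    have a2 := Jx_le p n.2 hn.2
    have b1 := Jx_gt p hp n.1
    have b2 := Jx_gt p hp n.2
    have l1 := Lg_mono (ssq_pos p _) a1
    have l2 := Lg_mono (ssq_pos p _) a2
    have g1 := Lg_ge n.1
    have g2 := Lg_ge n.2
    have g3 := Lg_ge (ssq p (Jx p n.1))
    have g4 := Lg_ge (ssq p (Jx p n.2))
    have g5 := Lg_ge (ssq p (Jx p n.1 + 1))
    have g6 := Lg_ge (ssq p (Jx p n.2 + 1))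
    have e : T (Jx p n.1 + 1, Jx p n.2 + 1) * (R (Jx p n.1) * R (Jx p n.2)) =
        S (ssq p (Jx p n.1 + 1), ssq p (Jx p n.2 + 1)) /
        (Lg (ssq p (Jx p n.1)) * Lg (ssq p (Jx p n.2))) := by
      simp only [hTdef, hRdef]
      field_simp
    rw [e]
    exact div_le_div₀ (hS0 _) (hmono _ _ ⟨b1.le, b2.le⟩) (by positivity)
      (mul_le_mul l1 l2 (by linarith) (by linarith))

end

/-- **Theorem 3.1.** For a nonstationary standardized Gaussian random field whose
covariances satisfy assumption (2), with `n₁n₂(1 − Φ(λ_n))` bounded and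
`Σ_{i∈R_n}(1 − Φ(u_{n,i})) → τ ∈ [0,∞)`, the log-average of the indicators of no
exceedance converges almost surely to `e^{−τ}`. -/
theorem asclt_gaussian
    {Ω : Type*} [MeasureSpace Ω] [IsProbabilityMeasure (ℙ : Measure Ω)]
    (X : ℕ × ℕ → Ω → ℝ) (r : ℕ × ℕ → ℕ × ℕ → ℝ)
    (hgauss : IsStdGaussianField X r)
    (ρ : ℕ × ℕ → ℝ) (ε : ℝ) (hε : 0 < ε)
    (hcov : CovAssump r ρ ε)
    (u : ℕ × ℕ → ℕ × ℕ → ℝ)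
    (hbdd : LambdaBounded u)
    (τ : ℝ) (hτ : 0 ≤ τ)
    (hsum : Tendsto (fun n : ℕ × ℕ => ∑ i ∈ Rn n, (1 - Phi (u n i))) atTop (nhds τ)) :
    ∀ᵐ ω, Tendsto (fun n : ℕ × ℕ => ascltAvg X u n ω) atTop
      (nhds (Real.exp (-τ))) := by
  have hmean := mean_tendsto hgauss ρ ε hε hcov u hbdd τ hsum
  obtain ⟨p, hp, hae⟩ := ae_sub hgauss ρ ε hε hcov u hbdd
  set q := Real.exp (-τ) with hq
  set P := fun k : ℕ × ℕ => (ℙ : Measure Ω).real (Ev X u k) with hP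
  have hPq : Tendsto P atTop (nhds q) := hmean
  have hq0 : 0 ≤ q := Real.exp_nonneg _
  have hq1 : q ≤ 1 := Real.exp_le_one_iff.2 (by linarith)
  -- means
  have habs : Tendsto (fun k => |P k - q|) atTop (nhds 0) := by
    have := (hPq.sub_const q).abs
    simpa using this
  have hces := cesaro (fun k => |P k - q|) 1 (fun k => abs_nonneg _)
    (fun k => by
      have h1 : P k ≤ 1 := measureReal_le_one
      have h2 : 0 ≤ P k := measureReal_nonneg
      rw [abs_le]; constructor <;> linarith) habs
  have hces2 : Tendsto (fun n : ℕ × ℕ => (∑ k ∈ Rn n, wt k * (P k - q)) / (Lg n.1 * Lg n.2)) atTop (nhds 0) := by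
    refine squeeze_zero_norm (fun n => ?_) hces
    have g1 := Lg_ge n.1
    have g2 := Lg_ge n.2
    rw [Real.norm_eq_abs, abs_div, abs_of_nonneg (by positivity : 0 ≤ Lg n.1 * Lg n.2)]
    apply div_le_div_of_nonneg_right _ (by positivity)
    refine (Finset.abs_sum_le_sum_abs _ _).trans (le_of_eq ?_)
    refine Finset.sum_congr rfl fun k _ => ?_
    rw [abs_mul, abs_of_nonneg (wt_nonneg k)]
  have hH : Tendsto (fun n : ℕ × ℕ => q * ((Hm n.1 / Lg n.1) * (Hm n.2 / Lg n.2))) atTop (nhds (q * (1 * 1))) :=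
    tendsto_const_nhds.mul ((Hm_div_Lg.comp tendsto_c1).mul (Hm_div_Lg.comp tendsto_c2))
  have hM : Tendsto (fun n : ℕ × ℕ => (∑ k ∈ Rn n, wt k * P k) / (Lg n.1 * Lg n.2)) atTop (nhds q) := by
    have := hces2.add hH
    rw [zero_add, one_mul, mul_one] at this
    refine this.congr fun n => ?_
    have g1 := Lg_ge n.1
    have g2 := Lg_ge n.2
    rw [div_mul_div_comm, ← wt_sum, ← mul_div_assoc, ← add_div, Finset.mul_sum, ← Finset.sum_add_distrib]
    congr 1
    refine Finset.sum_congr rfl fun k _ => ?_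
    ring
  have hsub : Tendsto (fun j : ℕ × ℕ => (ssq p j.1, ssq p j.2)) atTop atTop := by
    have hs : Tendsto (ssq p) atTop atTop :=
      tendsto_atTop_mono (fun j => (ssq_gt p hp j).le) tendsto_id
    nth_rewrite 2 [← prod_atTop_atTop_eq]
    exact (hs.comp tendsto_c1).prodMk (hs.comp tendsto_c2)
  have hlog : Tendsto (fun n : ℕ × ℕ => (Real.log n.1 / Lg n.1) * (Real.log n.2 / Lg n.2)) atTop (nhds (1 * 1)) :=
    (log_div_Lg.comp tendsto_c1).mul (log_div_Lg.comp tendsto_c2)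
  filter_upwards [hae] with ω hω
  set S := fun n : ℕ × ℕ => ∑ k ∈ Rn n, wt k * (Ev X u k).indicator (fun _ => (1:ℝ)) ω with hS
  have hterm : ∀ k, 0 ≤ wt k * (Ev X u k).indicator (fun _ => (1:ℝ)) ω := fun k =>
    mul_nonneg (wt_nonneg k) (Set.indicator_nonneg (fun _ _ => zero_le_one) _)
  have hT : Tendsto (fun j : ℕ × ℕ => S (ssq p j.1, ssq p j.2) / (Lg (ssq p j.1) * Lg (ssq p j.2))) atTop (nhds q) := by
    have := hω.add (hM.comp hsub)
    rw [zero_add] at this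
    refine this.congr fun j => ?_
    simp only [Function.comp]
    rw [← add_div]
    congr 1
    simp only [hS, Yc]
    rw [← Finset.sum_add_distrib]
    refine Finset.sum_congr rfl fun k _ => ?_
    simp only [hP]
    ring
  have hfin := sandwich S (fun m n hmn => Finset.sum_le_sum_of_subset_of_nonneg
    (Finset.Icc_subset_Icc le_rfl hmn) (fun k _ _ => hterm k))
    (fun n => Finset.sum_nonneg fun k _ => hterm k) p hp q hT
  have hdiv := hfin.div hlog (by norm_num)
  rw [one_mul, div_one] at hdiv
  refine hdiv.congr fun n => ?_
  have g1 := Lg_ge n.1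
  have g2 := Lg_ge n.2
  have e : ascltAvg X u n ω = (Real.log n.1 * Real.log n.2)⁻¹ * S n := rfl
  simp only [Pi.div_apply]
  rw [e, div_mul_div_comm, div_div_div_cancel_right₀ (by positivity), div_eq_inv_mul]
end
end

section
/- Let X be a random field for which the boundedness condition holds. Then for all k, l ∈ R_n with k ≠ l and u_{l,i} ≥ u_{k,i} for all i, E|1{∩_{i∈R_l∖R_k}{X_i ≤ u_{l,i}}} − 1{∩_{i∈R_l}{X_i ≤ u_{l,i}}}| = O((l₁l₂ − #(R_l∖R_k))/(l₁l₂)), where # denotes cardinality and the implied constant is independent of k, l, n. -/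
open MeasureTheory ProbabilityTheory Filter Set
open scoped ProbabilityTheory

noncomputable section

variable {Ω : Type*} [MeasureSpace Ω]

/-- Boundedness condition: the family `n₁n₂ · max{P(X_i > u_{n,i}) : i ≤ n}` is bounded. -/
def BoundedCond (X : ℕ × ℕ → Ω → ℝ) (u : ℕ × ℕ → ℕ × ℕ → ℝ) : Prop :=
  ∃ B : ℝ, ∀ n : ℕ × ℕ, ∀ i ∈ Rn n, (n.1 * n.2 : ℝ) * pr {ω | X i ω > u n i} ≤ B

/-- **Lemma A.2.** Under the boundedness condition, for `k ≠ l` in `R_n` with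
`u_{l,i} ≥ u_{k,i}`, the `L¹`-distance between the indicator of no exceedance over
`R_l ∖ R_k` and over `R_l` (both at levels `u_l`) is
`O((l₁l₂ − #(R_l ∖ R_k))/(l₁l₂))` uniformly in `k, l, n`. -/
theorem lemmaA2_indicator_bound
    {Ω : Type*} [MeasureSpace Ω] [IsProbabilityMeasure (ℙ : Measure Ω)]
    (X : ℕ × ℕ → Ω → ℝ) (hX : ∀ i, Measurable (X i))
    (u : ℕ × ℕ → ℕ × ℕ → ℝ)
    (hbdd : BoundedCond X u) :
    ∃ C : ℝ, ∀ n k l : ℕ × ℕ, k ∈ Rn n → l ∈ Rn n → k ≠ l →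
      (∀ i : ℕ × ℕ, u k i ≤ u l i) →
      (∫ ω, |(noExc X (u l) ((Rn l) \ (Rn k))).indicator (fun _ => (1 : ℝ)) ω -
          (noExc X (u l) (Rn l)).indicator (fun _ => (1 : ℝ)) ω| ∂ℙ) ≤
        C * ((l.1 * l.2 - ((Rn l) \ (Rn k)).card : ℝ) / (l.1 * l.2)) := by
  obtain ⟨B, hB⟩ := hbdd
  refine ⟨B, ?_⟩
  intro n k l _ hl _ _
  have hl1 : 1 ≤ l.1 ∧ 1 ≤ l.2 := by
    have h := (Finset.mem_Icc.1 hl).1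
    exact ⟨h.1, h.2⟩
  have hpos : (0 : ℝ) < l.1 * l.2 := by
    have h1 : (0 : ℝ) < l.1 := by exact_mod_cast hl1.1
    have h2 : (0 : ℝ) < l.2 := by exact_mod_cast hl1.2
    positivity
  have hcardR : (Rn l).card = l.1 * l.2 := by
    obtain ⟨a, b⟩ := l
    unfold Rn
    rw [← Finset.Icc_product_Icc, Finset.card_product]
    simp
  have hcard : (l.1 * l.2 - ((Rn l) \ (Rn k)).card : ℝ) = ((Rn l ∩ Rn k).card : ℝ) := by
    have h := Finset.card_sdiff_add_card_inter (Rn l) (Rn k)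
    rw [hcardR] at h
    have h' : (((Rn l) \ (Rn k)).card : ℝ) + ((Rn l ∩ Rn k).card : ℝ) = l.1 * l.2 := by
      exact_mod_cast h
    linarith
  rw [hcard]
  have hms : ∀ i, MeasurableSet {ω | X i ω > u l i} := fun i =>
    measurableSet_lt measurable_const (hX i)
  have hint : ∀ i ∈ Rn l ∩ Rn k, Integrable
      (fun ω => ({ω | X i ω > u l i} : Set Ω).indicator (fun _ => (1 : ℝ)) ω) ℙ := fun i _ =>
    (integrable_const (1 : ℝ)).indicator (hms i)
  calc _ ≤ ∫ ω, ∑ i ∈ Rn l ∩ Rn k,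
        ({ω | X i ω > u l i} : Set Ω).indicator (fun _ => (1 : ℝ)) ω ∂ℙ := by
        refine integral_mono_of_nonneg (Eventually.of_forall fun ω => abs_nonneg _)
          (integrable_finsetSum _ hint) (Eventually.of_forall fun ω => ?_)
        have hnn : ∀ i ∈ Rn l ∩ Rn k,
            0 ≤ ({ω | X i ω > u l i} : Set Ω).indicator (fun _ => (1 : ℝ)) ω := fun i _ =>
          indicator_nonneg (fun _ _ => zero_le_one) ω
        have hs := Finset.sum_nonneg hnn
        by_cases h2 : ω ∈ noExc X (u l) (Rn l)
        · have h1 : ω ∈ noExc X (u l) (Rn l \ Rn k) := by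
            simp only [noExc, mem_iInter] at h2 ⊢
            exact fun i hi => h2 i (Finset.mem_sdiff.1 hi).1
          simpa [h1, h2] using hs
        · by_cases h1 : ω ∈ noExc X (u l) (Rn l \ Rn k)
          · have h3 : ∃ i ∈ Rn l, u l i < X i ω := by
              simpa [noExc] using h2
            obtain ⟨i, hi, hlt⟩ := h3
            have hik : i ∈ Rn k := by
              by_contra hik
              simp only [noExc, mem_iInter] at h1
              exact absurd (h1 i (Finset.mem_sdiff.2 ⟨hi, hik⟩)) (not_le.2 hlt)
            have h4 := Finset.single_le_sum hnn (Finset.mem_inter.2 ⟨hi, hik⟩)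
            have h5 : ({ω | X i ω > u l i} : Set Ω).indicator (fun _ => (1 : ℝ)) ω = 1 :=
              indicator_of_mem (show ω ∈ {ω | X i ω > u l i} from hlt) _
            rw [h5] at h4
            simpa only [indicator_of_mem h1, indicator_of_notMem h2, sub_zero, abs_one] using h4
          · simpa only [indicator_of_notMem h1, indicator_of_notMem h2, sub_zero, abs_zero] using hs
    _ = ∑ i ∈ Rn l ∩ Rn k, pr {ω | X i ω > u l i} := by
        rw [integral_finsetSum _ hint]
        refine Finset.sum_congr rfl fun i _ => ?_
        rw [integral_indicator_const _ (hms i)]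
        simp [pr, Measure.real]
    _ ≤ ∑ i ∈ Rn l ∩ Rn k, B / (l.1 * l.2) := by
        refine Finset.sum_le_sum fun i hi => ?_
        rw [le_div_iff₀ hpos, mul_comm]
        exact hB l i (Finset.mem_inter.1 hi).1
    _ = _ := by
        rw [Finset.sum_const, nsmul_eq_mul]
        ring
end
end
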